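/- arXiv:1902.07426 — 3 statements merged into one kernel-verified Lean document; each statement's English description precedes it below -/
import Mathlib

section
/- For every ε ∈ (0,1/2] there exist constants C_ε, c_ε > 0 and n_0 such that the following holds for every n ≥ n_0 and every integer r with 1 ≤ r < (log* n)/5. Set m = ⌈C_ε·n·r·4^r/log^{(4r)} n⌉. For every product probability measure μ = μ_1 × ... × μ_r on ({0,1}^n)^r there exists a probability distribution ν supported on subsets of [n] of size at most m, depending only on μ and not on the protocol, such that for every f : ({0,1}^n)^r → {0,1} there exists b ∈ {0,1} with Pr_{B∼ν}[ I_B^b(f) ≥ 1 − ε ] ≥ (c_ε/(log(1/ε) + r))^r / n. -/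
open MeasureTheory
open scoped ENNReal

/-- An `(n,r)`-strategy for a coalition `B`: in round `i`, given the bits broadcast by the
players outside `B` in the first `i+1` rounds, it chooses the bits of the players in `B`
(coordinates outside `B` of the output are irrelevant). -/
def Strategy (n r : ℕ) (B : Finset (Fin n)) : Type :=
  (i : Fin r) → (Fin (i.val + 1) → ({j : Fin n // j ∉ B} → Bool)) → (Fin n → Bool)

/-- The transcript of the protocol when the good players broadcast according to `α` and the
coalition `B` follows strategy `π` (with rushing: in round `i` the coalition sees the good
players' round-`i` bits). -/
def execP {n r : ℕ} (B : Finset (Fin n)) (π : Strategy n r B)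
    (α : Fin r → Fin n → Bool) : Fin r → Fin n → Bool :=
  fun i j =>
    if j ∈ B then
      π i (fun k => fun j' =>
        α ⟨k.val, by have hk := k.isLt; have hi := i.isLt; omega⟩ j'.val) j
    else α i j

/-- `I_{π,B}^b(f)`: the probability that the output is `b` when the coalition `B` follows `π`.
The good players' bits are sampled from the product measure `⨂_i ⨂_j μs i j`; since the
transcript and the strategy only depend on the coordinates outside `B`, this agrees with
sampling only the coordinates outside `B`. -/
noncomputable def IPi {n r : ℕ} (μs : Fin r → Fin n → Measure Bool)
    (f : (Fin r → Fin n → Bool) → Bool) (B : Finset (Fin n)) (π : Strategy n r B)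
    (b : Bool) : ℝ≥0∞ :=
  (Measure.pi fun i => Measure.pi fun j => μs i j) {α | f (execP B π α) = b}

/-- `I_B^b(f)`: the influence of coalition `B` towards `b`, i.e. the supremum over strategies
of the probability that the output is `b`. -/
noncomputable def IB {n r : ℕ} (μs : Fin r → Fin n → Measure Bool)
    (f : (Fin r → Fin n → Bool) → Bool) (B : Finset (Fin n)) (b : Bool) : ℝ :=
  (⨆ π : Strategy n r B, IPi μs f B π b).toReal

/-- The `j`-times iterated base-2 logarithm. -/
noncomputable def iterLog : ℕ → ℝ → ℝ
  | 0, x => x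
  | (j+1), x => Real.logb 2 (iterLog j x)

/-- `log* x`: the least `j` with `log^{(j)} x ≤ 1`. -/
noncomputable def logStar (x : ℝ) : ℕ := sInf {j : ℕ | iterLog j x ≤ 1}


section FinProb

noncomputable def ex {Λ : Type*} [Fintype Λ] (w : Λ → ℝ) (F : Λ → ℝ) : ℝ := ∑ a, w a * F a

def IsPW {Λ : Type*} [Fintype Λ] (w : Λ → ℝ) : Prop := (∀ a, 0 ≤ w a) ∧ ∑ a, w a = 1

open Classical in
noncomputable def ind (P : Prop) : ℝ := if P then 1 else 0

noncomputable def pr {Λ : Type*} [Fintype Λ] (w : Λ → ℝ) (P : Λ → Prop) : ℝ :=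
  ex w (fun a => ind (P a))

noncomputable def pw {ι Ω : Type*} [Fintype ι] (w : ι → Ω → ℝ) (x : ι → Ω) : ℝ := ∏ j, w j (x j)

theorem ind_nonneg (P : Prop) : 0 ≤ ind P := by unfold ind; split_ifs <;> norm_num
theorem ind_le_one (P : Prop) : ind P ≤ 1 := by unfold ind; split_ifs <;> norm_num
theorem ind_true {P : Prop} (h : P) : ind P = 1 := by unfold ind; simp [h]
theorem ind_false {P : Prop} (h : ¬ P) : ind P = 0 := by unfold ind; simp [h]
theorem ind_mono {P Q : Prop} (h : P → Q) : ind P ≤ ind Q := by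
  unfold ind; split_ifs <;> norm_num; tauto
theorem ind_and (P Q : Prop) : ind (P ∧ Q) = ind P * ind Q := by
  unfold ind; by_cases P <;> by_cases Q <;> simp_all

variable {Λ Λ' : Type*} [Fintype Λ] [Fintype Λ'] {w : Λ → ℝ} {w' : Λ' → ℝ}

theorem ex_mono (hw : IsPW w) {F G : Λ → ℝ} (h : ∀ a, F a ≤ G a) : ex w F ≤ ex w G :=
  Finset.sum_le_sum fun a _ => mul_le_mul_of_nonneg_left (h a) (hw.1 a)

theorem ex_const (hw : IsPW w) (c : ℝ) : ex w (fun _ => c) = c := by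
  unfold ex; rw [← Finset.sum_mul, hw.2, one_mul]

theorem ex_add (F G : Λ → ℝ) : ex w (fun a => F a + G a) = ex w F + ex w G := by
  unfold ex; rw [← Finset.sum_add_distrib]; simp [mul_add]

theorem ex_sub (F G : Λ → ℝ) : ex w (fun a => F a - G a) = ex w F - ex w G := by
  unfold ex; rw [← Finset.sum_sub_distrib]; simp [mul_sub]

theorem ex_mul_left (c : ℝ) (F : Λ → ℝ) : ex w (fun a => c * F a) = c * ex w F := by
  unfold ex; rw [Finset.mul_sum]; apply Finset.sum_congr rfl; intros; ring

theorem ex_sum {κ : Type*} (s : Finset κ) (F : κ → Λ → ℝ) :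
    ex w (fun a => ∑ k ∈ s, F k a) = ∑ k ∈ s, ex w (F k) := by
  unfold ex; rw [Finset.sum_comm]; simp [Finset.mul_sum]

theorem ex_nonneg (hw : IsPW w) {F : Λ → ℝ} (h : ∀ a, 0 ≤ F a) : 0 ≤ ex w F :=
  Finset.sum_nonneg fun a _ => mul_nonneg (hw.1 a) (h a)

theorem ex_comm (F : Λ → Λ' → ℝ) :
    ex w (fun a => ex w' (fun b => F a b)) = ex w' (fun b => ex w (fun a => F a b)) := by
  unfold ex; simp only [Finset.mul_sum]; rw [Finset.sum_comm]
  apply Finset.sum_congr rfl; intros; apply Finset.sum_congr rfl; intros; ring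

def prodW (w : Λ → ℝ) (w' : Λ' → ℝ) : Λ × Λ' → ℝ := fun p => w p.1 * w' p.2

theorem ex_prod (F : Λ × Λ' → ℝ) :
    ex (prodW w w') F = ex w (fun a => ex w' (fun b => F (a, b))) := by
  unfold ex prodW; rw [Fintype.sum_prod_type]
  apply Finset.sum_congr rfl; intros; rw [Finset.mul_sum]
  apply Finset.sum_congr rfl; intros; ring

theorem isPW_prodW (hw : IsPW w) (hw' : IsPW w') : IsPW (prodW w w') := by
  refine ⟨fun a => mul_nonneg (hw.1 _) (hw'.1 _), ?_⟩
  unfold prodW; rw [Fintype.sum_prod_type]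
  simp only [← Finset.mul_sum, hw'.2, mul_one, hw.2]

theorem isPW_pw {ι Ω : Type*} [Fintype ι] [DecidableEq ι] [Fintype Ω] {w : ι → Ω → ℝ} (hw : ∀ j, IsPW (w j)) :
    IsPW (pw w) := by
  refine ⟨fun a => Finset.prod_nonneg fun j _ => (hw j).1 _, ?_⟩
  unfold pw
  rw [← Fintype.prod_sum]
  exact Finset.prod_eq_one fun j _ => (hw j).2

theorem pr_nonneg (hw : IsPW w) (P : Λ → Prop) : 0 ≤ pr w P := ex_nonneg hw fun _ => ind_nonneg _
theorem pr_le_one (hw : IsPW w) (P : Λ → Prop) : pr w P ≤ 1 :=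
  (ex_mono hw fun _ => ind_le_one _).trans (ex_const hw 1).le
theorem pr_mono (hw : IsPW w) {P Q : Λ → Prop} (h : ∀ a, P a → Q a) : pr w P ≤ pr w Q :=
  ex_mono hw fun a => ind_mono (h a)

theorem pr_ge_of_ex (hw : IsPW w) {F : Λ → ℝ} (h1 : ∀ a, F a ≤ 1) {c : ℝ} (hc : 0 ≤ c) :
    ex w F - c ≤ pr w (fun a => c ≤ F a) := by
  have : ex w F ≤ ex w (fun a => ind (c ≤ F a) + c) := by
    apply ex_mono hw; intro a
    by_cases h : c ≤ F a
    · rw [ind_true h]; linarith [h1 a]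
    · rw [ind_false h]; linarith
  rw [ex_add, ex_const hw] at this
  unfold pr; linarith

theorem markov (hw : IsPW w) {F : Λ → ℝ} (h0 : ∀ a, 0 ≤ F a) {c : ℝ} (hc : 0 < c) :
    pr w (fun a => c < F a) ≤ ex w F / c := by
  rw [le_div_iff₀ hc, mul_comm]
  unfold pr; rw [← ex_mul_left]
  apply ex_mono hw; intro a
  by_cases h : c < F a
  · rw [ind_true h]; linarith
  · rw [ind_false h]; simp [h0 a]

theorem pr_not (hw : IsPW w) (P : Λ → Prop) : pr w (fun a => ¬ P a) = 1 - pr w P := by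
  have : ∀ a, ind (¬ P a) = 1 - ind (P a) := by
    intro a; by_cases h : P a
    · rw [ind_true h, ind_false (not_not.2 h)]; ring
    · rw [ind_false h, ind_true h]; ring
  unfold pr; simp only [this]; rw [ex_sub, ex_const hw]

theorem pr_and_ge (hw : IsPW w) (P Q : Λ → Prop) :
    pr w P - pr w (fun a => ¬ Q a) ≤ pr w (fun a => P a ∧ Q a) := by
  unfold pr; rw [← ex_sub]; apply ex_mono hw; intro a
  by_cases h : P a <;> by_cases h' : Q a <;> simp [ind, h, h']

/-- independent coordinates -/
theorem ex_pw_split {ι Ω : Type*} [Fintype ι] [DecidableEq ι] [Fintype Ω] (w : ι → Ω → ℝ)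
    (hw : ∀ j, IsPW (w j)) (j : ι) (F : (ι → Ω) → ℝ) :
    ex (pw w) (fun x => ∑ a, w j a * F (Function.update x j a)) = ex (pw w) F := by
  unfold ex pw
  rw [← (Equiv.funSplitAt j Ω).symm.sum_comp, ← (Equiv.funSplitAt j Ω).symm.sum_comp]
  rw [Fintype.sum_prod_type, Fintype.sum_prod_type, Finset.sum_comm]
  rw [Finset.sum_comm (s := Finset.univ (α := Ω))]
  apply Finset.sum_congr rfl; intro y _
  have hprod : ∀ a, ∏ i, w i ((Equiv.funSplitAt j Ω).symm (a, y) i)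
      = w j a * ∏ i : {i // i ≠ j}, w i (y i) := by
    intro a
    rw [Fintype.prod_eq_mul_prod_subtype_ne _ j]
    congr 1
    · simp [Equiv.funSplitAt, Equiv.piSplitAt]
    · apply Finset.prod_congr rfl; rintro ⟨i, hi⟩ _
      simp [Equiv.funSplitAt, Equiv.piSplitAt, hi]
  have hup : ∀ a b, Function.update ((Equiv.funSplitAt j Ω).symm (a, y)) j b
      = (Equiv.funSplitAt j Ω).symm (b, y) := by
    intro a b; ext i
    by_cases h : i = j
    · subst h; simp [Equiv.funSplitAt, Equiv.piSplitAt]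
    · simp [Equiv.funSplitAt, Equiv.piSplitAt, h]
  simp only [hprod, hup]
  simp only [← Finset.sum_mul]
  rw [(hw j).2, one_mul, Finset.mul_sum]
  apply Finset.sum_congr rfl; intros; ring

/-- coordinatewise pushforward -/
theorem ex_pw_map {ι Ω Ω' : Type*} [Fintype ι] [DecidableEq ι] [Fintype Ω] [Fintype Ω']
    (w : ι → Ω → ℝ) (w' : ι → Ω' → ℝ) (h : ι → Ω → Ω')
    (hw : ∀ j, ∀ u : Ω' → ℝ, ∑ a, w j a * u (h j a) = ∑ b, w' j b * u b)
    (F : (ι → Ω') → ℝ) :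
    ex (pw w) (fun x => F (fun j => h j (x j))) = ex (pw w') F := by
  classical
  have key : ∀ y : ι → Ω', ∑ x : ι → Ω, pw w x * (if (fun j => h j (x j)) = y then 1 else 0)
      = pw w' y := by
    intro y
    have : ∀ x : ι → Ω, pw w x * (if (fun j => h j (x j)) = y then (1:ℝ) else 0)
        = ∏ j, (w j (x j) * if h j (x j) = y j then 1 else 0) := by
      intro x
      rw [Finset.prod_mul_distrib]
      congr 1
      rw [Finset.prod_ite_zero]
      simp [funext_iff]
    simp only [this]
    rw [← Fintype.prod_sum (fun j a => (w j a * if h j a = y j then (1:ℝ) else 0))]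
    unfold pw
    apply Finset.prod_congr rfl; intro j _
    rw [hw j (fun b => if b = y j then 1 else 0)]; simp
  unfold ex
  simp only [← key, Finset.sum_mul]
  rw [Finset.sum_comm]
  apply Finset.sum_congr rfl; intro x _
  simp

theorem ex_pw_pair {ι Ω Ω' : Type*} [Fintype ι] [DecidableEq ι] [Fintype Ω] [Fintype Ω']
    (w : ι → Ω → ℝ) (w' : ι → Ω' → ℝ) (F : (ι → Ω) → (ι → Ω') → ℝ) :
    ex (pw (fun j => prodW (w j) (w' j))) (fun x => F (fun j => (x j).1) (fun j => (x j).2))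
      = ex (pw w) (fun x => ex (pw w') (fun y => F x y)) := by
  classical
  rw [← ex_prod (w := pw w) (w' := pw w') (F := fun p => F p.1 p.2)]
  unfold ex
  rw [← (Equiv.arrowProdEquivProdArrow ι (fun _ => Ω) (fun _ => Ω')).sum_comp]
  apply Finset.sum_congr rfl; intro x _
  simp [pw, prodW, Finset.prod_mul_distrib, Equiv.arrowProdEquivProdArrow]

/-- Cauchy-Schwarz -/
theorem ex_cs (hw : IsPW w) (F G : Λ → ℝ) :
    (ex w (fun a => F a * G a))^2 ≤ ex w (fun a => F a ^ 2) * ex w (fun a => G a ^ 2) := by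
  unfold ex
  have := Finset.sum_mul_sq_le_sq_mul_sq Finset.univ (fun a => √(w a) * F a) (fun a => √(w a) * G a)
  have e1 : ∑ a, w a * (F a * G a) = ∑ a, √(w a) * F a * (√(w a) * G a) := by
    apply Finset.sum_congr rfl; intro a _
    have := Real.mul_self_sqrt (hw.1 a); linear_combination (-F a * G a) * this
  have e2 : ∀ F : Λ → ℝ, ∑ a, w a * (F a ^ 2) = ∑ a, (√(w a) * F a) ^ 2 := by
    intro F; apply Finset.sum_congr rfl; intro a _
    rw [mul_pow, Real.sq_sqrt (hw.1 a)]
  simp only [e1, e2]; exact this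

theorem ex_mink (hw : IsPW w) (F G : Λ → ℝ) :
    (√(ex w (fun a => F a ^ 2)) - √(ex w (fun a => G a ^ 2)))^2 ≤ ex w (fun a => (F a - G a)^2) := by
  have hF : 0 ≤ ex w (fun a => F a ^ 2) := ex_nonneg hw fun a => sq_nonneg _
  have hG : 0 ≤ ex w (fun a => G a ^ 2) := ex_nonneg hw fun a => sq_nonneg _
  have h1 : ex w (fun a => (F a - G a)^2)
      = ex w (fun a => F a ^ 2) + ex w (fun a => G a ^ 2) - 2 * ex w (fun a => F a * G a) := by
    rw [← ex_add, ← ex_mul_left, ← ex_sub]; congr 1; ext a; ring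
  have h2 : ex w (fun a => F a * G a) ≤ √(ex w (fun a => F a ^ 2)) * √(ex w (fun a => G a ^ 2)) := by
    rw [← Real.sqrt_mul hF]
    exact Real.le_sqrt_of_sq_le (ex_cs hw F G)
  rw [h1, sub_sq, Real.sq_sqrt hF, Real.sq_sqrt hG]; linarith

theorem ex_abs (hw : IsPW w) (F : Λ → ℝ) : |ex w F| ≤ ex w (fun a => |F a|) := by
  unfold ex
  refine (Finset.abs_sum_le_sum_abs _ _).trans (Finset.sum_le_sum fun a _ => ?_)
  rw [abs_mul, abs_of_nonneg (hw.1 a)]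

theorem ex_sq_le (hw : IsPW w) (F : Λ → ℝ) : (ex w F)^2 ≤ ex w (fun a => F a ^ 2) := by
  have := ex_cs hw F (fun _ => 1)
  simp only [mul_one, one_pow, ex_const hw] at this
  exact this

end FinProb


section KKL

variable {n : ℕ} {Ω : Type*} [Fintype Ω]

def mx (S : Finset (Fin n)) (x y : Fin n → Ω) : Fin n → Ω := fun i => if i ∈ S then y i else x i

noncomputable def av (w : Fin n → Ω → ℝ) (j : Fin n) (F : (Fin n → Ω) → ℝ) (x : Fin n → Ω) : ℝ :=
  ex (w j) (fun a => F (Function.update x j a))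

noncomputable def cnd (w : Fin n → Ω → ℝ) (S : Finset (Fin n)) (F : (Fin n → Ω) → ℝ)
    (x : Fin n → Ω) : ℝ := ex (pw w) (fun y => F (mx S x y))

variable {w : Fin n → Ω → ℝ}

theorem ex_av (hw : ∀ j, IsPW (w j)) (j : Fin n) (F : (Fin n → Ω) → ℝ) :
    ex (pw w) (av w j F) = ex (pw w) F := ex_pw_split w hw j F

theorem mx_upd1 {S : Finset (Fin n)} {j : Fin n} (hj : j ∉ S) (x y : Fin n → Ω) (a : Ω) :
    mx S (Function.update x j a) y = Function.update (mx S x y) j a := by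
  ext i; unfold mx; by_cases h : i = j
  · subst h; simp [hj]
  · simp [h]

theorem mx_upd2 (S : Finset (Fin n)) (j : Fin n) (x y : Fin n → Ω) (a : Ω) :
    mx (insert j S) x (Function.update y j a) = Function.update (mx S x y) j a := by
  ext i; unfold mx; by_cases h : i = j
  · subst h; simp
  · simp [h]

theorem cnd_empty (hw : ∀ j, IsPW (w j)) (F : (Fin n → Ω) → ℝ) : cnd w ∅ F = F := by
  ext x; unfold cnd
  have : ∀ y, mx ∅ x y = x := by intro y; ext i; simp [mx]
  simp only [this]; rw [ex_const (isPW_pw hw)]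

theorem cnd_univ (F : (Fin n → Ω) → ℝ) (x) : cnd w Finset.univ F x = ex (pw w) F := by
  unfold cnd
  have : ∀ y, mx Finset.univ x y = y := by intro y; ext i; simp [mx]
  simp only [this]

theorem cnd_insert' (hw : ∀ j, IsPW (w j)) (S : Finset (Fin n)) (j : Fin n)
    (F : (Fin n → Ω) → ℝ) : cnd w (insert j S) F = cnd w S (av w j F) := by
  ext x; unfold cnd
  rw [← ex_pw_split w hw j (fun y => F (mx (insert j S) x y))]
  simp only [mx_upd2]; rfl

theorem cnd_insert (hw : ∀ j, IsPW (w j)) {S : Finset (Fin n)} {j : Fin n} (hj : j ∉ S)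
    (F : (Fin n → Ω) → ℝ) : cnd w (insert j S) F = av w j (cnd w S F) := by
  rw [cnd_insert' hw]; ext x; unfold cnd av; rw [ex_comm]; simp only [mx_upd1 hj]

theorem av_cnd (hw : ∀ j, IsPW (w j)) (S : Finset (Fin n)) (j : Fin n)
    (F : (Fin n → Ω) → ℝ) : av w j (cnd w S F) = cnd w S (av w j F) := by
  by_cases hj : j ∈ S
  · rw [← cnd_insert' hw, Finset.insert_eq_of_mem hj]
    ext x
    have : ∀ a, cnd w S F (Function.update x j a) = cnd w S F x := by
      intro a; unfold cnd; congr 1; ext y; congr 1; ext i; unfold mx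
      by_cases h : i = j
      · subst h; simp [hj]
      · simp [h]
    unfold av; simp only [this]; rw [ex_const (hw j)]
  · rw [← cnd_insert' hw, cnd_insert hw hj]

theorem ex_cnd (hw : ∀ j, IsPW (w j)) (S : Finset (Fin n)) (F : (Fin n → Ω) → ℝ) :
    ex (pw w) (cnd w S F) = ex (pw w) F := by
  induction S using Finset.induction_on with
  | empty => rw [cnd_empty hw]
  | insert j S hj ih => rw [cnd_insert hw hj, ex_av hw, ih]

theorem cnd_sub (S : Finset (Fin n)) (F G : (Fin n → Ω) → ℝ) (x) :
    cnd w S (fun x => F x - G x) x = cnd w S F x - cnd w S G x := by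
  unfold cnd; rw [ex_sub]

theorem av_sub (j : Fin n) (F G : (Fin n → Ω) → ℝ) (x) :
    av w j (fun x => F x - G x) x = av w j F x - av w j G x := by
  unfold av; rw [ex_sub]

/-- one coordinate log-Sobolev -/
theorem ent_le {Λ : Type*} [Fintype Λ] {w : Λ → ℝ} (hw : IsPW w) {g : Λ → ℝ} (hg : ∀ a, 0 ≤ g a)
    {c : ℝ} (hc : 0 < c) :
    ex w (fun a => g a * Real.log (g a)) - ex w g * Real.log (ex w g)
      ≤ ex w (fun a => (g a - c)^2 / c) := by
  have hm : 0 ≤ ex w g := ex_nonneg hw hg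
  have h1 : - (ex w g * Real.log (ex w g)) ≤ - (ex w g) * Real.log c - ex w g + c := by
    rcases hm.eq_or_lt with h | h
    · rw [← h]; simp; exact hc.le
    · have := Real.log_le_sub_one_of_pos (div_pos hc h)
      rw [Real.log_div hc.ne' h.ne'] at this
      have h2 := mul_le_mul_of_nonneg_left this hm
      have : ex w g * (c / ex w g - 1) = c - ex w g := by field_simp
      nlinarith
  have h2 : ex w (fun a => g a * Real.log (g a))
      ≤ ex w (fun a => (g a - c)^2 / c + ((Real.log c + 1) * g a - c)) := by
    apply ex_mono hw; intro a
    rcases (hg a).eq_or_lt with h | h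
    · rw [← h]; simp; field_simp; simp
    · have := Real.log_le_sub_one_of_pos (div_pos h hc)
      rw [Real.log_div h.ne' hc.ne'] at this
      have h2 := mul_le_mul_of_nonneg_left this (hg a)
      have : (g a - c)^2 / c = g a * (g a / c) - 2 * g a + c := by field_simp; ring
      rw [this]; nlinarith
  rw [ex_add, ex_sub, ex_mul_left, ex_const hw] at h2
  linarith

theorem logsob1 {Λ : Type*} [Fintype Λ] [Nonempty Λ] {w : Λ → ℝ} (hw : IsPW w) {p : ℝ} (hp : 0 < p)
    (hwp : ∀ a, p ≤ w a) {u : Λ → ℝ} (hu : ∀ a, 0 ≤ u a) :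
    ex w (fun a => (u a)^2 * Real.log ((u a)^2)) -
      ex w (fun a => (u a)^2) * Real.log (ex w (fun a => (u a)^2))
      ≤ 4 / p * ex w (fun a => ex w (fun b => (u a - u b)^2)) := by
  obtain ⟨a0, ha0⟩ := Finite.exists_max u
  have hnn : 0 ≤ ex w (fun a => ex w (fun b => (u a - u b)^2)) :=
    ex_nonneg hw fun a => ex_nonneg hw fun b => sq_nonneg _
  rcases (hu a0).eq_or_lt with h | h
  · have : ∀ a, u a = 0 := fun a => le_antisymm (by rw [h]; exact ha0 a) (hu a)
    simp [this, ex]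
  · refine (ent_le hw (g := fun a => u a ^2) (fun a => sq_nonneg _) (pow_pos h 2)).trans ?_
    have h1 : ex w (fun a => (u a ^ 2 - u a0 ^2)^2 / u a0 ^ 2)
        ≤ ex w (fun a => 4 * (u a0 - u a)^2) := by
      apply ex_mono hw; intro a
      rw [div_le_iff₀ (pow_pos h 2)]
      have e : (u a ^ 2 - u a0 ^2)^2 = (u a0 - u a)^2 * (u a + u a0)^2 := by ring
      rw [e]
      have : (u a + u a0)^2 ≤ (2 * u a0)^2 :=
        pow_le_pow_left₀ (by linarith [hu a]) (by linarith [ha0 a]) 2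
      nlinarith [mul_le_mul_of_nonneg_left this (sq_nonneg (u a0 - u a))]
    refine h1.trans ?_
    rw [ex_mul_left, div_mul_eq_mul_div, le_div_iff₀ hp]
    have h2 : w a0 * ex w (fun b => (u a0 - u b)^2)
        ≤ ex w (fun a => ex w (fun b => (u a - u b)^2)) := by
      apply Finset.single_le_sum (f := fun a => w a * ex w (fun b => (u a - u b)^2)) _
        (Finset.mem_univ a0)
      intro a _; exact mul_nonneg (hw.1 a) (ex_nonneg hw fun b => sq_nonneg _)
    have h3 := mul_le_mul_of_nonneg_right (hwp a0) (ex_nonneg hw fun b => sq_nonneg (u a0 - u b))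
    linarith

theorem var_id {Λ : Type*} [Fintype Λ] {w : Λ → ℝ} (hw : IsPW w) (u : Λ → ℝ) :
    ex w (fun a => ex w (fun b => (u a - u b)^2)) = 2 * ex w (fun a => (u a - ex w u)^2) := by
  have h1 : ∀ a, ex w (fun b => (u a - u b)^2)
      = (u a - ex w u)^2 + ex w (fun b => (u b - ex w u)^2) := by
    intro a
    have : ∀ b, (u a - u b)^2 = (u a - ex w u)^2 +
      ((u b - ex w u)^2 + (2 * (u a - ex w u)) * (ex w u - u b)) := by intro b; ring
    simp only [this]
    rw [ex_add, ex_add, ex_const hw, ex_mul_left, ex_sub, ex_const hw]; ring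
  simp only [h1]
  rw [ex_add, ex_const hw]; ring

theorem var_id2 {Λ : Type*} [Fintype Λ] {w : Λ → ℝ} (hw : IsPW w) (u : Λ → ℝ) :
    ex w (fun a => (u a - ex w u)^2) = ex w (fun a => (u a)^2) - (ex w u)^2 := by
  have : ∀ b, (u b - ex w u)^2 = (u b)^2 + ((-2 * ex w u) * u b + (ex w u)^2) := by intro b; ring
  simp only [this]
  rw [ex_add, ex_add, ex_const hw, ex_mul_left]; ring

noncomputable def dd (w : Fin n → Ω → ℝ) (j : Fin n) (F : (Fin n → Ω) → ℝ) (x : Fin n → Ω) : ℝ :=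
  F x - av w j F x

theorem av_upd (j : Fin n) (F : (Fin n → Ω) → ℝ) (x a) :
    av w j F (Function.update x j a) = av w j F x := by
  unfold av; simp

theorem ex_dd_sq (hw : ∀ j, IsPW (w j)) (j : Fin n) (F : (Fin n → Ω) → ℝ) :
    ex (pw w) (fun x => (dd w j F x)^2)
      = ex (pw w) (fun x => (F x)^2) - ex (pw w) (fun x => (av w j F x)^2) := by
  rw [← ex_av hw j (fun x => (dd w j F x)^2), ← ex_av hw j (fun x => (F x)^2), ← ex_sub]
  congr 1; ext x
  unfold dd
  rw [av]; simp only [av_upd]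
  exact var_id2 (hw j) (fun a => F (Function.update x j a))

theorem tens (hw : ∀ j, IsPW (w j)) [Nonempty Ω] {p : ℝ} (hp : 0 < p) (hwp : ∀ j a, p ≤ w j a)
    (F : (Fin n → Ω) → ℝ) (S : Finset (Fin n)) :
    ex (pw w) (fun x => (F x)^2 * Real.log ((F x)^2))
      - ex (pw w) (fun x => cnd w S (fun x => (F x)^2) x * Real.log (cnd w S (fun x => (F x)^2) x))
    ≤ 8 / p * ∑ j ∈ S, ex (pw w) (fun x => (dd w j F x)^2) := by
  have hpw := isPW_pw hw
  induction S using Finset.induction_on with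
  | empty => rw [cnd_empty hw]; simp
  | insert j S hj ih =>
    rw [Finset.sum_insert hj, mul_add]
    set G := cnd w S (fun x => (F x)^2) with hG
    have hG0 : ∀ x, 0 ≤ G x := fun x => ex_nonneg hpw fun y => sq_nonneg _
    rw [cnd_insert hw hj, ← hG]
    suffices h : ex (pw w) (fun x => G x * Real.log (G x))
        - ex (pw w) (fun x => av w j G x * Real.log (av w j G x))
        ≤ 8 / p * ex (pw w) (fun x => (dd w j F x)^2) by linarith
    rw [← ex_av hw j (fun x => G x * Real.log (G x)), ← ex_sub]
    set Q : (Fin n → Ω) → ℝ := fun z => ex (w j) (fun a => ex (w j) (fun b =>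
      (F (Function.update z j a) - F (Function.update z j b))^2)) with hQ
    have hpt : ∀ x, av w j (fun x => G x * Real.log (G x)) x - av w j G x * Real.log (av w j G x)
        ≤ 4 / p * cnd w S Q x := by
      intro x
      have := logsob1 (hw j) hp (hwp j) (u := fun a => √(G (Function.update x j a)))
        (fun a => Real.sqrt_nonneg _)
      simp only [Real.sq_sqrt (hG0 _)] at this
      refine this.trans ?_
      apply mul_le_mul_of_nonneg_left _ (by positivity)
      rw [hQ]; unfold cnd
      rw [ex_comm (w := pw w)]
      apply ex_mono (hw j); intro a
      rw [ex_comm (w := pw w)]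
      apply ex_mono (hw j); intro b
      rw [hG]; unfold cnd
      simp only [mx_upd1 hj]
      exact ex_mink hpw _ _
    refine (ex_mono hpw hpt).trans ?_
    rw [ex_mul_left, ex_cnd hw]
    have : ex (pw w) Q = 2 * ex (pw w) (fun x => (dd w j F x)^2) := by
      rw [← ex_av hw j (fun x => (dd w j F x)^2), ← ex_mul_left]
      congr 1; ext x
      rw [hQ]; unfold dd
      rw [av]; simp only [av_upd]
      exact var_id (hw j) (fun a => F (Function.update x j a))
    rw [this]; apply le_of_eq; ring

theorem logsob (hw : ∀ j, IsPW (w j)) [Nonempty Ω] {p : ℝ} (hp : 0 < p) (hwp : ∀ j a, p ≤ w j a)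
    (F : (Fin n → Ω) → ℝ) :
    ex (pw w) (fun x => (F x)^2 * Real.log ((F x)^2))
      - ex (pw w) (fun x => (F x)^2) * Real.log (ex (pw w) (fun x => (F x)^2))
    ≤ 8 / p * ∑ j, ex (pw w) (fun x => (dd w j F x)^2) := by
  have := tens hw hp hwp F Finset.univ
  simp only [cnd_univ] at this
  rwa [ex_const (isPW_pw hw)] at this

theorem ent_lower {Λ : Type*} [Fintype Λ] {w : Λ → ℝ} (hw : IsPW w) (F : Λ → ℝ)
    {N M : ℝ} (hN : ex w (fun x => (F x)^2) = N) (hM : ex w (fun x => |F x|) = M)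
    (hN0 : 0 < N) (hM0 : 0 < M) :
    N * Real.log (N / M^2) ≤ ex w (fun x => (F x)^2 * Real.log ((F x)^2)) - N * Real.log N := by
  set k := N / M with hk
  have hk0 : 0 < k := div_pos hN0 hM0
  have h1 : ex w (fun x => (2 * (Real.log k + 1)) * (F x)^2 - (2 * k) * |F x|)
      ≤ ex w (fun x => (F x)^2 * Real.log ((F x)^2)) := by
    apply ex_mono hw; intro x
    by_cases hx : F x = 0
    · simp [hx]
    · have hx' : 0 < |F x| := abs_pos.2 hx
      have := Real.log_le_sub_one_of_pos (div_pos hk0 hx')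
      rw [Real.log_div hk0.ne' hx'.ne', Real.log_abs] at this
      rw [Real.log_pow]
      have h2 := mul_le_mul_of_nonneg_left this (sq_nonneg (F x))
      have h3 : (F x)^2 * (k / |F x| - 1) = k * |F x| - (F x)^2 := by
        rw [← sq_abs]; field_simp
      rw [h3] at h2
      push_cast; nlinarith
  rw [ex_sub, ex_mul_left, ex_mul_left, hN, hM] at h1
  have e1 : k * M = N := by rw [hk]; field_simp
  have e2 : Real.log k = Real.log N - Real.log M := Real.log_div hN0.ne' hM0.ne'
  have e3 : Real.log (N / M^2) = Real.log N - 2 * Real.log M := by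
    rw [Real.log_div hN0.ne' (pow_pos hM0 2).ne', Real.log_pow]; norm_num
  rw [e3]; rw [e2] at h1
  nlinarith

def tl (n k : ℕ) : Finset (Fin n) := Finset.univ.filter (fun i => k ≤ i.val)

noncomputable def md (w : Fin n → Ω → ℝ) (k : ℕ) (H : (Fin n → Ω) → ℝ) (x : Fin n → Ω) : ℝ :=
  cnd w (tl n (k+1)) H x - cnd w (tl n k) H x

theorem tl_eq (k : Fin n) : tl n k = insert k (tl n (k+1)) := by
  ext i; simp only [tl, Finset.mem_filter, Finset.mem_univ, true_and, Finset.mem_insert, Fin.ext_iff]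
  omega

theorem tl_notin (k : Fin n) : k ∉ tl n (k+1) := by simp [tl]

theorem md_eq (hw : ∀ j, IsPW (w j)) (k : Fin n) (H : (Fin n → Ω) → ℝ) :
    md w k H = cnd w (tl n (k+1)) (dd w k H) := by
  ext x; unfold md dd; rw [cnd_sub, tl_eq, cnd_insert' hw]

theorem md_sq (hw : ∀ j, IsPW (w j)) (k : Fin n) (H : (Fin n → Ω) → ℝ) :
    ex (pw w) (fun x => (md w k H x)^2) = ex (pw w) (fun x => (cnd w (tl n (k+1)) H x)^2)
      - ex (pw w) (fun x => (cnd w (tl n k) H x)^2) := by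
  rw [tl_eq, cnd_insert hw (tl_notin k), ← ex_dd_sq hw]
  unfold md dd
  rw [tl_eq, cnd_insert hw (tl_notin k)]

theorem md_sum (hw : ∀ j, IsPW (w j)) (H : (Fin n → Ω) → ℝ) :
    ∑ k : Fin n, ex (pw w) (fun x => (md w k H x)^2)
      = ex (pw w) (fun x => (H x)^2) - (ex (pw w) H)^2 := by
  simp only [md_sq hw]
  rw [Fin.sum_univ_eq_sum_range (fun k => ex (pw w) (fun x => (cnd w (tl n (k+1)) H x)^2)
      - ex (pw w) (fun x => (cnd w (tl n k) H x)^2)) n,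
    Finset.sum_range_sub (fun k => ex (pw w) (fun x => (cnd w (tl n k) H x)^2))]
  have h0 : tl n 0 = Finset.univ := by simp [tl]
  have h1 : tl n n = ∅ := by
    ext i; simp [tl]
  rw [h0, h1, cnd_empty hw]; simp only [cnd_univ]; rw [ex_const (isPW_pw hw)]

theorem dd_md (hw : ∀ j, IsPW (w j)) (j : Fin n) (k : ℕ) (H : (Fin n → Ω) → ℝ) :
    dd w j (md w k H) = md w k (dd w j H) := by
  ext x
  have e : dd w j H = fun x => H x - av w j H x := rfl
  rw [e]
  unfold md
  rw [cnd_sub, cnd_sub, ← av_cnd hw, ← av_cnd hw]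
  unfold dd; rw [av_sub]; ring

theorem ex_abs_dd (hw : ∀ j, IsPW (w j)) (j : Fin n) {H : (Fin n → Ω) → ℝ}
    (hH : ∀ x, H x = 0 ∨ H x = 1) :
    ex (pw w) (fun x => |dd w j H x|) = 2 * ex (pw w) (fun x => (dd w j H x)^2) := by
  have hp0 : ∀ x, 0 ≤ av w j H x := fun x => ex_nonneg (hw j) fun a => by
    rcases hH (Function.update x j a) with h | h <;> rw [h]; norm_num
  have hp1 : ∀ x, av w j H x ≤ 1 := fun x => by
    refine (ex_mono (hw j) (G := fun _ => 1) fun a => ?_).trans (ex_const (hw j) 1).le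
    rcases hH (Function.update x j a) with h | h <;> rw [h]; norm_num
  have e : ∀ x, |dd w j H x| = (dd w j H x)^2 + (av w j H x - (av w j H x)^2) := by
    intro x; unfold dd
    rcases hH x with h | h <;> rw [h]
    · rw [abs_of_nonpos (by linarith [hp0 x])]; ring
    · rw [abs_of_nonneg (by linarith [hp1 x])]; ring
  have e2 : ex (pw w) (fun x => (H x)^2) = ex (pw w) (av w j H) := by
    rw [ex_av hw]; congr 1; ext x; rcases hH x with h | h <;> rw [h] <;> norm_num
  simp only [e]
  rw [ex_add, ex_sub, ex_dd_sq hw, e2]; ring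

theorem cnd_abs (hw : ∀ j, IsPW (w j)) (S : Finset (Fin n)) (F : (Fin n → Ω) → ℝ) :
    ex (pw w) (fun x => |cnd w S F x|) ≤ ex (pw w) (fun x => |F x|) := by
  rw [← ex_cnd hw S (fun x => |F x|)]
  exact ex_mono (isPW_pw hw) fun x => ex_abs (isPW_pw hw) _

theorem kkl0 (hw : ∀ j, IsPW (w j)) [Nonempty Ω] {p : ℝ} (hp : 0 < p) (hwp : ∀ j a, p ≤ w j a)
    {H : (Fin n → Ω) → ℝ} (hH : ∀ x, H x = 0 ∨ H x = 1) {t : ℝ} (ht : 0 < t) (ht2 : t < 1/2)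
    (hv : ∀ j, ex (pw w) (fun x => (dd w j H x)^2) ≤ t^2) :
    ex (pw w) (fun x => (H x)^2) - (ex (pw w) H)^2
      ≤ (2 * t + 8 / p / Real.log (1/(2*t))) * ∑ j, ex (pw w) (fun x => (dd w j H x)^2) := by
  have hpw := isPW_pw hw
  set v : Fin n → ℝ := fun j => ex (pw w) (fun x => (dd w j H x)^2) with hvdef
  have hv0 : ∀ j, 0 ≤ v j := fun j => ex_nonneg hpw fun _ => sq_nonneg _
  have hlog : 0 < Real.log (1/(2*t)) := Real.log_pos (by rw [lt_div_iff₀ (by linarith)]; linarith)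
  have hc0 : 0 ≤ 8 / p / Real.log (1/(2*t)) := div_nonneg (div_nonneg (by norm_num) hp.le) hlog.le
  have key : ∀ k : Fin n, ex (pw w) (fun x => (md w k H x)^2) ≤ 2 * t * v k +
      8 / p / Real.log (1/(2*t)) * ∑ j, ex (pw w) (fun x => (dd w j (md w k H) x)^2) := by
    intro k
    set N := ex (pw w) (fun x => (md w k H x)^2) with hN
    set M := ex (pw w) (fun x => |md w k H x|) with hM
    have hM0 : 0 ≤ M := ex_nonneg hpw fun _ => abs_nonneg _
    have hMv : M ≤ 2 * v k := by
      rw [hM, md_eq hw, ← ex_abs_dd hw k hH]; exact cnd_abs hw _ _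
    have hsum : 0 ≤ ∑ j, ex (pw w) (fun x => (dd w j (md w k H) x)^2) :=
      Finset.sum_nonneg fun j _ => ex_nonneg hpw fun _ => sq_nonneg _
    by_cases hc : N ≤ t * M
    · have : 0 ≤ 8 / p / Real.log (1/(2*t)) *
        ∑ j, ex (pw w) (fun x => (dd w j (md w k H) x)^2) := mul_nonneg hc0 hsum
      have := mul_le_mul_of_nonneg_left hMv ht.le
      linarith
    · push Not at hc
      have hN0 : 0 < N := lt_of_le_of_lt (mul_nonneg ht.le hM0) hc
      have hMpos : 0 < M := by
        rcases hM0.eq_or_lt with h | h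
        · exfalso
          have hz : ∀ x, pw w x * |md w k H x| = 0 := by
            intro x
            have := (Finset.sum_eq_zero_iff_of_nonneg
              (f := fun x => pw w x * |md w k H x|) (s := Finset.univ)
              (fun x _ => mul_nonneg (hpw.1 x) (abs_nonneg _))).1 h.symm
            exact this x (Finset.mem_univ _)
          have : N = 0 := by
            rw [hN]; unfold ex; apply Finset.sum_eq_zero; intro x _
            rcases mul_eq_zero.1 (hz x) with h | h
            · rw [h, zero_mul]
            · simp [abs_eq_zero.1 h]
          linarith
        · exact h
      have h1 := ent_lower hpw (md w k H) hN.symm hM.symm hN0 hMpos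
      have h2 := logsob hw hp hwp (md w k H)
      rw [← hN] at h2
      have h3 : Real.log (1/(2*t)) ≤ Real.log (N / M^2) := by
        clear_value N M
        apply Real.log_le_log (by positivity)
        rw [div_le_div_iff₀ (by positivity) (by positivity)]
        have h6 : M ≤ 2 * t^2 := by have := hv k; linarith
        have h7 := mul_le_mul_of_nonneg_left h6 hMpos.le
        have h8 := mul_lt_mul_of_pos_left hc ht
        nlinarith
      have h4 : N * Real.log (1/(2*t)) ≤
          8 / p * ∑ j, ex (pw w) (fun x => (dd w j (md w k H) x)^2) :=
        (mul_le_mul_of_nonneg_left h3 hN0.le).trans (h1.trans h2)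
      have h5 : N ≤ 8 / p / Real.log (1/(2*t)) *
        ∑ j, ex (pw w) (fun x => (dd w j (md w k H) x)^2) := by
        rw [div_mul_eq_mul_div, le_div_iff₀ hlog]; exact h4
      have : 0 ≤ 2 * t * v k := mul_nonneg (by linarith) (hv0 k)
      linarith
  rw [← md_sum hw]
  refine (Finset.sum_le_sum fun k _ => key k).trans ?_
  rw [Finset.sum_add_distrib, ← Finset.mul_sum, ← Finset.mul_sum, add_mul]
  have : ∑ k : Fin n, ∑ j, ex (pw w) (fun x => (dd w j (md w k H) x)^2) ≤ ∑ j, v j := by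
    rw [Finset.sum_comm]
    apply Finset.sum_le_sum; intro j _
    simp only [dd_md hw]
    rw [md_sum hw]
    have := sq_nonneg (ex (pw w) (dd w j H))
    simp only [hvdef]; linarith
  have := mul_le_mul_of_nonneg_left this hc0
  linarith

theorem kkl (hw : ∀ j, IsPW (w j)) [Nonempty Ω] {p : ℝ} (hp : 0 < p) (hp1 : p ≤ 1)
    (hwp : ∀ j a, p ≤ w j a)
    {H : (Fin n → Ω) → ℝ} (hH : ∀ x, H x = 0 ∨ H x = 1) {v0 K : ℝ} (hv0 : 0 < v0) (hK : 0 < K)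
    (hvar : v0 ≤ ex (pw w) H - (ex (pw w) H)^2)
    (hV : ∑ j, ex (pw w) (fun x => (dd w j H x)^2) ≤ K) :
    ∃ j, (1/4) * Real.exp (-(34*K/(p*v0))) < ex (pw w) (fun x => (dd w j H x)^2) := by
  by_contra hcon
  push Not at hcon
  set y := 17*K/(p*v0) with hy
  have hy0 : 0 < y := by positivity
  set t := (1/2) * Real.exp (-y) with ht
  have ht0 : 0 < t := by positivity
  have ht2 : t^2 = (1/4) * Real.exp (-(34*K/(p*v0))) := by
    rw [ht, mul_pow, ← Real.exp_nat_mul]; congr 1; norm_num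
    congr 1; rw [hy]; ring
  have hexp : Real.exp (-y) ≤ 1 / y := by
    rw [Real.exp_neg, ← one_div]
    exact one_div_le_one_div_of_le hy0 (by linarith [Real.add_one_le_exp y])
  have hlt : Real.exp (-y) < 1 := by rw [Real.exp_lt_one_iff]; linarith
  have h := kkl0 hw hp hwp hH ht0 (by linarith) (fun j => by rw [ht2]; exact hcon j)
  have e1 : ex (pw w) (fun x => (H x)^2) = ex (pw w) H := by
    congr 1; ext x; rcases hH x with h | h <;> rw [h] <;> norm_num
  have e2 : Real.log (1/(2*t)) = y := by
    have : 1/(2*t) = Real.exp y := by rw [ht, Real.exp_neg]; field_simp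
    rw [this, Real.log_exp]
  rw [e1, e2] at h
  have h1 : 2 * t + 8 / p / y ≤ 1/y + 8/p/y := by linarith
  have h2 : (1/y + 8/p/y) * K ≤ 9/17 * v0 := by
    have : (1/y + 8/p/y) * K = (p + 8) * v0 / 17 := by rw [hy]; field_simp
    rw [this]; nlinarith
  have h3 : (2 * t + 8 / p / y) * ∑ j, ex (pw w) (fun x => (dd w j H x)^2)
      ≤ (2 * t + 8 / p / y) * K := mul_le_mul_of_nonneg_left hV (by positivity)
  have h4 := mul_le_mul_of_nonneg_right h1 hK.le
  linarith

end KKL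


section Walk

variable {n : ℕ}

def avl (S : Finset (Fin n)) (x : Fin n → Bool) (g : (Fin n → Bool) → Prop) : Prop :=
  ∃ x' : Fin n → Bool, (∀ j, j ∉ S → x' j = x j) ∧ g x'

theorem avl_mono {S S' : Finset (Fin n)} (h : S ⊆ S') {x : Fin n → Bool}
    {g g' : (Fin n → Bool) → Prop} (hg : ∀ y, g y → g' y) (ha : avl S x g) : avl S' x g' := by
  obtain ⟨x', h1, h2⟩ := ha
  exact ⟨x', fun j hj => h1 j fun hj' => hj (h hj'), hg _ h2⟩

def ts (R : Fin n → Bool) : Finset (Fin n) := Finset.univ.filter (fun j => R j = true)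

noncomputable def berW (s : ℝ) (b : Bool) : ℝ := if b then s else 1 - s

theorem isPW_berW {s : ℝ} (h0 : 0 ≤ s) (h1 : s ≤ 1) : IsPW (berW s) := by
  refine ⟨fun a => by cases a <;> simp [berW] <;> linarith, by simp [berW]⟩

noncomputable def wW (wx : Fin n → Bool → ℝ) (s : ℝ) (j : Fin n) : Bool × Bool → ℝ :=
  prodW (berW s) (wx j)

noncomputable def hA (g : (Fin n → Bool) → Prop) (A : Finset (Fin n)) (ξ : Fin n → Bool × Bool) : ℝ :=
  ind (avl (A ∪ ts (fun j => (ξ j).1)) (fun j => (ξ j).2) g)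

noncomputable def phi (wx : Fin n → Bool → ℝ) (g : (Fin n → Bool) → Prop) (A : Finset (Fin n))
    (s : ℝ) : ℝ := ex (pw (wW wx s)) (hA g A)

variable {wx : Fin n → Bool → ℝ} {g : (Fin n → Bool) → Prop}

theorem hA_mono {A A' : Finset (Fin n)} (h : A ⊆ A') (ξ) : hA g A ξ ≤ hA g A' ξ :=
  ind_mono (avl_mono (Finset.union_subset_union_left h) fun _ h => h)

theorem hA_01 (A : Finset (Fin n)) (ξ) : hA g A ξ = 0 ∨ hA g A ξ = 1 := by
  unfold hA ind; split_ifs <;> simp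

theorem isPW_wW (hw : ∀ j, IsPW (wx j)) {s : ℝ} (h0 : 0 ≤ s) (h1 : s ≤ 1) (j) :
    IsPW (wW wx s j) := isPW_prodW (isPW_berW h0 h1) (hw j)

theorem phi_mono (hw : ∀ j, IsPW (wx j)) {s : ℝ} (h0 : 0 ≤ s) (h1 : s ≤ 1) {A A' : Finset (Fin n)}
    (h : A ⊆ A') : phi wx g A s ≤ phi wx g A' s :=
  ex_mono (isPW_pw (isPW_wW hw h0 h1)) fun ξ => hA_mono h ξ

theorem phi_le_one (hw : ∀ j, IsPW (wx j)) {s : ℝ} (h0 : 0 ≤ s) (h1 : s ≤ 1) (A : Finset (Fin n)) :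
    phi wx g A s ≤ 1 := pr_le_one (isPW_pw (isPW_wW hw h0 h1)) _

theorem phi_eq (wx : Fin n → Bool → ℝ) (g) (A : Finset (Fin n)) (s : ℝ) :
    phi wx g A s = ex (pw (fun _ : Fin n => berW s)) (fun R => pr (pw wx) (fun x => avl (A ∪ ts R) x g)) := by
  unfold pr
  rw [← ex_pw_pair (fun _ => berW s) wx (fun R x => ind (avl (A ∪ ts R) x g))]; rfl

theorem phi_ge (hw : ∀ j, IsPW (wx j)) {s : ℝ} (h0 : 0 ≤ s) (h1 : s ≤ 1) (A : Finset (Fin n)) :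
    pr (pw wx) g ≤ phi wx g A s := by
  rw [phi_eq]
  have hb := isPW_pw (fun _ : Fin n => isPW_berW h0 h1)
  rw [← ex_const hb (pr (pw wx) g)]
  apply ex_mono hb; intro R
  exact pr_mono (isPW_pw hw) fun x hx => ⟨x, fun _ _ => rfl, hx⟩

theorem infl_ge (hw : ∀ j, IsPW (wx j)) {s : ℝ} (h0 : 0 ≤ s) (h1 : s ≤ 1) (A : Finset (Fin n))
    (j : Fin n) : ex (pw (wW wx s)) (fun x => (dd (wW wx s) j (hA g A) x)^2)
      ≤ phi wx g (insert j A) s - phi wx g A s := by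
  have hW := isPW_wW hw h0 h1
  have hpw := isPW_pw hW
  rw [ex_dd_sq hW]
  have e1 : ex (pw (wW wx s)) (fun x => (hA g A x)^2) = ex (pw (wW wx s)) (av (wW wx s) j (hA g A)) := by
    rw [ex_av hW]; congr 1; ext x; rcases hA_01 (g := g) A x with h | h <;> rw [h] <;> norm_num
  have e2 : phi wx g A s = ex (pw (wW wx s)) (av (wW wx s) j (hA g A)) := by
    rw [ex_av hW]; rfl
  rw [e1, e2]; unfold phi
  rw [← ex_sub, ← ex_sub]
  apply ex_mono hpw; intro ξ
  have hindep : ∀ a, hA g (insert j A) (Function.update ξ j a) = hA g (insert j A) ξ := by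
    intro a; unfold hA; congr 1
    have : insert j A ∪ ts (fun i => (Function.update ξ j a i).1)
        = insert j A ∪ ts (fun i => (ξ i).1) := by
      ext i; by_cases h : i = j
      · subst h; simp
      · simp [ts, h]
    rw [this]
    unfold avl
    apply propext; constructor
    all_goals
      rintro ⟨x', h1, h2⟩
      refine ⟨x', fun i hi => ?_, h2⟩
      rw [h1 i hi]
      have : i ≠ j := by rintro rfl; simp at hi
      simp [this]
  have hle : av (wW wx s) j (hA g A) ξ ≤ hA g (insert j A) ξ := by
    rw [← ex_const (hW j) (hA g (insert j A) ξ)]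
    apply ex_mono (hW j); intro a
    rw [← hindep a]
    exact hA_mono (Finset.subset_insert _ _) _
  have hnn : 0 ≤ av (wW wx s) j (hA g A) ξ := ex_nonneg (hW j) fun a => ind_nonneg _
  rcases hA_01 (g := g) (insert j A) ξ with h | h <;> rw [h] at hle ⊢ <;>
    nlinarith [sq_nonneg (1 - av (wW wx s) j (hA g A) ξ)]

theorem phi_comp (g : (Fin n → Bool) → Prop) (A : Finset (Fin n)) (s σ : ℝ) :
    phi wx g A (1 - (1-s)*(1-σ)) = ex (pw (fun _ : Fin n => berW σ)) (fun R => phi wx g (A ∪ ts R) s) := by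
  unfold phi
  rw [← ex_pw_pair (fun _ => berW σ) (wW wx s) (fun R ξ => hA g (A ∪ ts R) ξ)]
  rw [← ex_pw_map (fun j => prodW (berW σ) (wW wx s j)) (wW wx (1 - (1-s)*(1-σ)))
    (fun _ p => (p.1 || p.2.1, p.2.2))]
  · congr 1; ext x
    unfold hA; congr 1
    have : A ∪ ts (fun j => ((x j).1 || (x j).2.1)) = A ∪ ts (fun j => (x j).1) ∪ ts (fun j => (x j).2.1) := by
      ext i; simp [ts, or_assoc]
    simp only [this]
  · intro j u
    simp only [Fintype.sum_prod_type, Fintype.sum_bool, prodW, wW, berW]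
    simp
    ring

theorem pw_single {σ : ℝ} (h0 : 0 ≤ σ) (hσ : σ * (2 * n) ≤ 1) (hn : 1 ≤ n) (j : Fin n) :
    σ / 2 ≤ pw (fun _ : Fin n => berW σ) (fun i => decide (i = j)) := by
  unfold pw
  rw [← Finset.mul_prod_erase Finset.univ _ (Finset.mem_univ j)]
  have : ∏ x ∈ Finset.univ.erase j, berW σ (decide (x = j)) = (1-σ)^(n-1) := by
    rw [Finset.prod_congr rfl (g := fun _ => 1 - σ)]
    · simp
    · intro i hi; simp [berW, Finset.ne_of_mem_erase hi]
  rw [this]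
  have hn' : (1:ℝ) ≤ n := by exact_mod_cast hn
  have hσ1 : σ ≤ 1/2 := by nlinarith
  have hb := one_add_mul_le_pow (a := -σ) (by linarith) (n-1)
  rw [Nat.cast_sub hn] at hb
  have : (1:ℝ)/2 ≤ (1-σ)^(n-1) := by
    rw [← sub_eq_add_neg] at hb
    push_cast at hb
    nlinarith
  have h3 := mul_le_mul_of_nonneg_left this h0
  simp [berW]; linarith

theorem phi_gain (hw : ∀ j, IsPW (wx j)) {s σ : ℝ} (h0 : 0 ≤ s) (h1 : s ≤ 1) (hσ0 : 0 ≤ σ)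
    (hσ : σ * (2 * n) ≤ 1) (hn : 1 ≤ n) (A : Finset (Fin n)) :
    phi wx g A s + σ / 2 * ∑ j, (phi wx g (insert j A) s - phi wx g A s)
      ≤ phi wx g A (1 - (1-s)*(1-σ)) := by
  have hn' : (1:ℝ) ≤ n := by exact_mod_cast hn
  have hσ1 : σ ≤ 1 := by nlinarith
  have hb := isPW_pw (fun _ : Fin n => isPW_berW hσ0 hσ1)
  rw [phi_comp]
  have e : ex (pw (fun _ : Fin n => berW σ)) (fun R => phi wx g (A ∪ ts R) s)
      = phi wx g A s + ex (pw (fun _ : Fin n => berW σ)) (fun R => phi wx g (A ∪ ts R) s - phi wx g A s) := by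
    rw [ex_sub, ex_const hb]; ring
  rw [e]
  apply add_le_add_right
  have hinj : Function.Injective (fun (j : Fin n) (i : Fin n) => decide (i = j)) := by
    intro j j' h
    have := congrFun h j
    simpa using this
  have hnn : ∀ R, 0 ≤ phi wx g (A ∪ ts R) s - phi wx g A s := fun R =>
    sub_nonneg.2 (phi_mono hw h0 h1 Finset.subset_union_left)
  have h2 : ∑ j : Fin n, pw (fun _ : Fin n => berW σ) (fun i => decide (i = j)) *
      (phi wx g (A ∪ ts (fun i => decide (i = j))) s - phi wx g A s)
      ≤ ex (pw (fun _ : Fin n => berW σ)) (fun R => phi wx g (A ∪ ts R) s - phi wx g A s) := by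
    unfold ex
    rw [← Finset.sum_image (s := Finset.univ) (g := fun (j : Fin n) (i : Fin n) => decide (i = j))
      (f := fun R => pw (fun _ : Fin n => berW σ) R * (phi wx g (A ∪ ts R) s - phi wx g A s))
      (fun _ _ _ _ h => hinj h)]
    apply Finset.sum_le_sum_of_subset_of_nonneg (Finset.subset_univ _)
    intro R _ _; exact mul_nonneg (hb.1 R) (hnn R)
  refine le_trans ?_ h2
  rw [Finset.mul_sum]
  apply Finset.sum_le_sum; intro j _
  have : A ∪ ts (fun i => decide (i = j)) = insert j A := by
    ext i; simp [ts, or_comm]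
  have h3 := hnn (fun i => decide (i = j))
  rw [this] at h3 ⊢
  exact mul_le_mul_of_nonneg_right (pw_single hσ0 hσ hn j) h3

noncomputable def lv (s0 : ℝ) (n : ℕ) (i : ℕ) : ℝ := 1 - (1 - s0) * (1 - 1/(2*n))^i

theorem lv_le {s0 : ℝ} (h0 : 0 ≤ s0) (h1 : s0 ≤ 1) (hn : 1 ≤ n) (i : ℕ) :
    lv s0 n i ≤ s0 + i / (2 * n) := by
  unfold lv
  have hn' : (1:ℝ) ≤ n := by exact_mod_cast hn
  have h2 : 1/(2*(n:ℝ)) ≤ 1 := by rw [div_le_one (by positivity)]; linarith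
  have := one_add_mul_le_pow (a := -(1/(2*(n:ℝ)))) (by linarith) i
  rw [← sub_eq_add_neg] at this
  have h3 : (0:ℝ) ≤ i / (2*n) := by positivity
  have h4 : (i:ℝ) * -(1/(2*n)) = - (i / (2*n)) := by ring
  rw [h4] at this
  nlinarith

theorem lv_ge {s0 : ℝ} (h1 : s0 ≤ 1) (hn : 1 ≤ n) (i : ℕ) : s0 ≤ lv s0 n i := by
  unfold lv
  have hn' : (1:ℝ) ≤ n := by exact_mod_cast hn
  have h2 : 1/(2*(n:ℝ)) ≤ 1 := by rw [div_le_one (by positivity)]; linarith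
  have h3 : (0:ℝ) ≤ 1/(2*n) := by positivity
  have : (1 - 1/(2*(n:ℝ)))^i ≤ 1 := pow_le_one₀ (by linarith) (by linarith)
  nlinarith

theorem lv_le_one {s0 : ℝ} (h1 : s0 ≤ 1) (hn : 1 ≤ n) (i : ℕ) : lv s0 n i ≤ 1 := by
  unfold lv
  have hn' : (1:ℝ) ≤ n := by exact_mod_cast hn
  have h2 : 1/(2*(n:ℝ)) ≤ 1 := by rw [div_le_one (by positivity)]; linarith
  have : 0 ≤ (1 - 1/(2*(n:ℝ)))^i := pow_nonneg (by linarith) _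
  nlinarith

theorem lv_succ (s0 : ℝ) (n i : ℕ) : lv s0 n (i+1) = 1 - (1 - lv s0 n i) * (1 - 1/(2*n)) := by
  unfold lv; rw [pow_succ]; ring

set_option maxHeartbeats 1000000 in
theorem walk (hw : ∀ j, IsPW (wx j)) (hn : 1 ≤ n) {η s0 K v0 εw p τ : ℝ} (hη : 0 < η)
    (hη1 : η ≤ 1)
    (hwη : ∀ j a, η ≤ wx j a) (hs0 : 0 < s0) (M : ℕ) (hsM : s0 + M / (2 * n) ≤ 1/2)
    (hK : 0 < K) (hMK : 4 * n < M * K) (hv0 : 0 < v0) (hp : v0 ≤ p * εw) (hεw : 0 ≤ εw)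
    (hτ : τ = (1/4) * Real.exp (-(34*K/(s0 * η *v0))))
    (hg : p ≤ pr (pw wx) g) :
    ∃ A : Finset (Fin n), A.card * τ ≤ 1 ∧ 1 - εw ≤ phi wx g A (lv s0 n M) := by
  have hn' : (1:ℝ) ≤ n := by exact_mod_cast hn
  have hτ0 : 0 < τ := by rw [hτ]; positivity
  set σ : ℝ := 1/(2*n) with hσ
  have hσ0 : 0 < σ := by positivity
  have hσn : σ * (2 * n) ≤ 1 := by rw [hσ]; field_simp; exact le_rfl
  have hs01 : s0 ≤ 1 := by
    have : (0:ℝ) ≤ M / (2*n) := by positivity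
    linarith
  have hlv0 : ∀ i, 0 ≤ lv s0 n i := fun i => hs0.le.trans (lv_ge hs01 hn i)
  have hlv1 : ∀ i, lv s0 n i ≤ 1 := fun i => lv_le_one hs01 hn i
  set γ := K / (4 * n) with hγ
  have key : ∀ i, i ≤ M → ∃ A : Finset (Fin n), A.card * τ ≤ 1 ∧
      (1 - εw ≤ phi wx g A (lv s0 n i) ∨ A.card * τ + i * γ ≤ phi wx g A (lv s0 n i)) := by
    intro i
    induction i with
    | zero =>
      intro _
      exact ⟨∅, by simp, Or.inr (by simp; exact ex_nonneg (isPW_pw (isPW_wW hw (hlv0 0) (hlv1 0))) fun _ => ind_nonneg _)⟩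
    | succ i ih =>
      intro hi
      obtain ⟨A0, hA0, hA0'⟩ := ih (by omega)
      have hgain := fun A => phi_gain (g := g) hw (hlv0 i) (hlv1 i) hσ0.le hσn hn A
      rw [← lv_succ] at hgain
      have hinfl0 : ∀ A, 0 ≤ ∑ j, (phi wx g (insert j A) (lv s0 n i) - phi wx g A (lv s0 n i)) :=
        fun A => Finset.sum_nonneg fun j _ => sub_nonneg.2
          (phi_mono hw (hlv0 i) (hlv1 i) (Finset.subset_insert _ _))
      have hmono : ∀ A, phi wx g A (lv s0 n i) ≤ phi wx g A (lv s0 n (i+1)) := by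
        intro A
        have h1 := hgain A
        have := mul_nonneg (by linarith : 0 ≤ σ/2) (hinfl0 A)
        linarith
      rcases hA0' with h | h
      · exact ⟨A0, hA0, Or.inl (h.trans (hmono A0))⟩
      · -- choose maximal
        obtain ⟨A, hAm, hmax⟩ := Finset.exists_max_image
          (Finset.univ.filter fun A : Finset (Fin n) => A.card * τ + i * γ ≤ phi wx g A (lv s0 n i))
          (fun A => A.card) ⟨A0, by simp [h]⟩
        simp only [Finset.mem_filter, Finset.mem_univ, true_and] at hAm hmax
        have hγ0 : 0 ≤ i * γ := by positivity
        have hAτ : A.card * τ ≤ 1 := by linarith [phi_le_one (g := g) hw (hlv0 i) (hlv1 i) A]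
        refine ⟨A, hAτ, ?_⟩
        by_cases hd : 1 - εw ≤ phi wx g A (lv s0 n i)
        · exact Or.inl (hd.trans (hmono A))
        · right
          push Not at hd
          have hφp : p ≤ phi wx g A (lv s0 n i) := hg.trans (phi_ge hw (hlv0 i) (hlv1 i) A)
          have hbig : K < ∑ j, (phi wx g (insert j A) (lv s0 n i) - phi wx g A (lv s0 n i)) := by
            by_contra hcon
            push Not at hcon
            have hsi : lv s0 n i ≤ 1/2 := by
              refine (lv_le hs0.le hs01 hn i).trans (le_trans ?_ hsM)
              have : (i:ℝ) ≤ M := by exact_mod_cast (by omega : i ≤ M)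
              gcongr
            have hat : ∀ j a, s0 * η ≤ wW wx (lv s0 n i) j a := by
              rintro j ⟨r, v⟩
              unfold wW prodW
              apply mul_le_mul _ (hwη j v) hη.le
              · cases r <;> simp [berW] <;> linarith [lv_ge hs01 hn i]
              · cases r <;> simp [berW] <;> linarith [lv_ge hs01 hn i]
            obtain ⟨j, hj⟩ := kkl (isPW_wW hw (hlv0 i) (hlv1 i)) (p := s0 * η) (by positivity)
              (mul_le_one₀ hs01 hη.le hη1) hat (H := hA g A) (hA_01 A) (v0 := v0) (K := K) hv0 hK (by
                change v0 ≤ phi wx g A (lv s0 n i) - (phi wx g A (lv s0 n i))^2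
                have h5 : p * εw ≤ phi wx g A (lv s0 n i) * (1 - phi wx g A (lv s0 n i)) :=
                  mul_le_mul hφp (by linarith) hεw
                    (ex_nonneg (isPW_pw (isPW_wW hw (hlv0 i) (hlv1 i))) fun _ => ind_nonneg _)
                linarith)
              ((Finset.sum_le_sum fun j _ => infl_ge hw (hlv0 i) (hlv1 i) A j).trans hcon)
            rw [← hτ] at hj
            have hj2 := hj.trans_le (infl_ge hw (hlv0 i) (hlv1 i) A j)
            have hjA : j ∉ A := by
              intro hjA; rw [Finset.insert_eq_of_mem hjA] at hj2; linarith
            have hc := Finset.card_insert_of_notMem hjA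
            have := hmax (insert j A) (by rw [hc]; push_cast; linarith)
            omega
          have h1 := hgain A
          have h2 := mul_le_mul_of_nonneg_left hbig.le (by linarith : 0 ≤ σ/2)
          have h3 : σ/2 * K = γ := by rw [hσ, hγ]; field_simp; norm_num
          push_cast; linarith
  obtain ⟨A, h1, h2⟩ := key M le_rfl
  refine ⟨A, h1, ?_⟩
  rcases h2 with h2 | h2
  · exact h2
  · exfalso
    have := phi_le_one (g := g) hw (hlv0 M) (hlv1 M) A
    have h3 : 1 < M * γ := by
      rw [hγ, ← mul_div_assoc, lt_div_iff₀ (by positivity)]; linarith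
    have : 0 ≤ A.card * τ := by positivity
    linarith

end Walk


section NRStep

variable {n : ℕ}

def Step (n : ℕ) (w : Fin n → Bool → ℝ) (size e ρ ρ₂ : ℝ) : Prop :=
  ∃ (Λ1 : Type) (_ : Fintype Λ1) (w1 : Λ1 → ℝ) (B1 : Λ1 → Finset (Fin n)), IsPW w1 ∧
    (∀ l, ((B1 l).card : ℝ) ≤ size) ∧
    ∀ (Λ' : Type) (_ : Fintype Λ') (ν' : Λ' → ℝ), IsPW ν' →
      ∀ Good : Λ' → Bool → (Fin n → Bool) → Prop,
      (∀ x, ∃ b, ρ ≤ pr ν' (fun l => Good l b x)) →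
      ∃ b, ρ₂ ≤ pr (prodW ν' w1) (fun q => 1 - e ≤ pr (pw w) (fun x => avl (B1 q.2) x (Good q.1 b)))

theorem pr_prod_and {Λ Λ' : Type*} [Fintype Λ] [Fintype Λ'] (w : Λ → ℝ) (w' : Λ' → ℝ)
    (P : Λ → Prop) (Q : Λ' → Prop) :
    pr (prodW w w') (fun q => P q.1 ∧ Q q.2) = pr w P * pr w' Q := by
  unfold pr; rw [ex_prod]; simp only [ind_and, ex_mul_left]
  rw [mul_comm, ← ex_mul_left]; congr 1; ext a; ring

theorem pr_prod {Λ Λ' : Type*} [Fintype Λ] [Fintype Λ'] (w : Λ → ℝ) (w' : Λ' → ℝ)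
    (P : Λ × Λ' → Prop) :
    pr (prodW w w') P = ex w (fun a => pr w' (fun b => P (a, b))) := by
  unfold pr; rw [ex_prod]

/-- if with probability ≥ p over the first coordinate the second succeeds w.p. ≥ q -/
theorem pr_prod_ge {Λ Λ' : Type*} [Fintype Λ] [Fintype Λ'] {w : Λ → ℝ} {w' : Λ' → ℝ}
    (hw : IsPW w) (hw' : IsPW w')
    (P : Λ → Prop) (Q : Λ × Λ' → Prop) {p q : ℝ} (hq : 0 ≤ q) (hP : p ≤ pr w P)
    (hQ : ∀ a, P a → q ≤ pr w' (fun b => Q (a, b))) : p * q ≤ pr (prodW w w') Q := by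
  rw [pr_prod]
  refine (mul_le_mul_of_nonneg_right hP hq).trans ?_
  unfold pr; rw [mul_comm, ← ex_mul_left]
  apply ex_mono hw; intro a
  by_cases h : P a
  · rw [ind_true h, mul_one]; exact hQ a h
  · rw [ind_false h, mul_zero]; exact pr_nonneg hw' _

theorem pr_or_bool {Λ : Type*} [Fintype Λ] {w : Λ → ℝ} (hw : IsPW w) (F : Bool → Λ → ℝ) {ρ : ℝ}
    (hF0 : ∀ b x, 0 ≤ F b x) (h : ∀ x, ∃ b, ρ ≤ F b x) : ∃ b, ρ / 2 ≤ ex w (F b) := by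
  have : ρ ≤ ex w (fun x => F true x + F false x) := by
    rw [← ex_const hw ρ]; apply ex_mono hw; intro x
    obtain ⟨b, hb⟩ := h x
    cases b
    · linarith [hF0 true x]
    · linarith [hF0 false x]
  rw [ex_add] at this
  by_contra hc; push Not at hc
  linarith [hc true, hc false]

theorem ex_coord {Ω : Type*} [Fintype Ω] {w : Fin n → Ω → ℝ} (hw : ∀ j, IsPW (w j)) (j : Fin n)
    (u : Ω → ℝ) : ex (pw w) (fun x => u (x j)) = ex (w j) u := by
  rw [← ex_pw_split w hw j]
  simp only [Function.update_self]
  rw [ex_const (isPW_pw hw)]; rfl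

theorem ex_card {w : Fin n → Bool → ℝ} (hw : ∀ j, IsPW (w j)) {s : ℝ} (hs : ∀ j, w j true ≤ s) :
    ex (pw w) (fun R => ((ts R).card : ℝ)) ≤ s * n := by
  have : ∀ R : Fin n → Bool, ((ts R).card : ℝ) = ∑ j, (if R j = true then (1:ℝ) else 0) := by
    intro R; unfold ts; rw [Finset.card_filter]; push_cast; rfl
  simp only [this]
  rw [ex_sum]
  calc _ ≤ ∑ j : Fin n, s := by
        apply Finset.sum_le_sum; intro j _
        rw [ex_coord hw j (fun b => if b = true then (1:ℝ) else 0)]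
        simp [ex]; exact hs j
    _ = s * n := by simp [mul_comm]

theorem card_mod_le (N c : ℕ) (hN : 0 < N) :
    (Finset.univ.filter (fun j : Fin n => j.val % N = c)).card ≤ n / N + 1 := by
  rw [← Finset.card_range (n / N + 1)]
  apply Finset.card_le_card_of_injOn (fun j => j.val / N)
  · intro j _
    simp only [Finset.coe_range, Set.mem_Iio]
    exact Nat.lt_succ_of_le (Nat.div_le_div_right j.isLt.le)
  · intro j hj j' hj' h
    simp only [Finset.coe_filter, Finset.mem_univ, true_and, Set.mem_setOf_eq] at hj hj'
    simp only at h
    apply Fin.ext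
    rw [← Nat.div_add_mod j.val N, ← Nat.div_add_mod j'.val N, h, hj, hj']

def blk (n : ℕ) {a N : ℕ} (l : Fin a → Fin N) : Finset (Fin n) :=
  Finset.univ.filter (fun j : Fin n => ∃ i, j.val % N = (l i).val)

theorem card_blk {a N : ℕ} (hN : 0 < N) (l : Fin a → Fin N) : (blk n l).card ≤ a * (n / N + 1) := by
  have : blk n l ⊆ Finset.univ.biUnion
      (fun i : Fin a => Finset.univ.filter (fun j : Fin n => j.val % N = (l i).val)) := by
    intro j hj; simpa [blk] using hj
  refine (Finset.card_le_card this).trans (Finset.card_biUnion_le.trans ?_)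
  refine (Finset.sum_le_sum fun i _ => card_mod_le N (l i).val hN).trans ?_
  simp

theorem exists_blk {a N : ℕ} (hN : 0 < N) (A : Finset (Fin n)) (hA : A.card ≤ a) :
    ∃ l : Fin a → Fin N, A ⊆ blk n l := by
  refine ⟨fun i => if h : i.val < A.card then ⟨(A.equivFin.symm ⟨i, h⟩).val.val % N, Nat.mod_lt _ hN⟩
    else ⟨0, hN⟩, ?_⟩
  intro j hj
  simp only [blk, Finset.mem_filter, Finset.mem_univ, true_and]
  refine ⟨⟨(A.equivFin ⟨j, hj⟩).val, (A.equivFin ⟨j, hj⟩).isLt.trans_le hA⟩, ?_⟩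
  simp

noncomputable def uniN (N : ℕ) : Fin N → ℝ := fun _ => 1 / N

theorem isPW_uniN {N : ℕ} (hN : 0 < N) : IsPW (uniN N) := by
  refine ⟨fun _ => by unfold uniN; positivity, ?_⟩
  unfold uniN; simp; field_simp

theorem pr_single {Λ : Type*} [Fintype Λ] {w : Λ → ℝ} (hw : IsPW w) {P : Λ → Prop} (a : Λ)
    (h : P a) : w a ≤ pr w P := by
  have := Finset.single_le_sum (f := fun a => w a * ind (P a)) (s := Finset.univ)
    (fun b _ => mul_nonneg (hw.1 b) (ind_nonneg _)) (Finset.mem_univ a)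
  simp only [ind_true h, mul_one] at this
  exact this

open Classical in
theorem nrStep {w : Fin n → Bool → ℝ} (hw : ∀ j, IsPW (w j)) (hn : 1 ≤ n) {η s0 K τ ρ e : ℝ}
    (hη : 0 < η) (hη1 : η ≤ 1) (hwη : ∀ j a, η ≤ w j a) (hs0 : 0 < s0) (M : ℕ)
    (hsM : s0 + M / (2 * n) ≤ 1/2) (hK : 0 < K) (hMK : 4 * n < M * K)
    (hρ : 0 < ρ) (he : 0 < e)
    (hτ : τ = (1/4) * Real.exp (-(34*K/(s0 * η * (ρ/4*(e/2))))))
    (a N : ℕ) (ha : 1 / τ ≤ a) (hN : 0 < N) :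
    Step n w (4 * (s0 + M/(2*n)) * n + a * (n/N + 1)) e ρ (ρ / 16 * (1/N)^a) := by
  have hn' : (1:ℝ) ≤ n := by exact_mod_cast hn
  have hN' : (0:ℝ) < N := by exact_mod_cast hN
  have hτ0 : 0 < τ := by rw [hτ]; positivity
  have hs01 : s0 ≤ 1 := by
    have : (0:ℝ) ≤ M / (2*n) := by positivity
    linarith
  set s := lv s0 n M with hs
  have hsge : s0 ≤ s := lv_ge hs01 hn M
  have hs1 : s ≤ 1 := lv_le_one hs01 hn M
  have hsle : s ≤ s0 + M/(2*n) := lv_le hs0.le hs01 hn M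
  have hspos : 0 < s := hs0.trans_le hsge
  have hber := isPW_pw (fun _ : Fin n => isPW_berW hspos.le hs1)
  have huni := isPW_pw (fun _ : Fin a => isPW_uniN hN)
  have hw1 := isPW_prodW hber huni
  refine ⟨(Fin n → Bool) × (Fin a → Fin N), inferInstance,
    prodW (pw (fun _ : Fin n => berW s)) (pw (fun _ : Fin a => uniN N)),
    fun q => (if ((ts q.1).card : ℝ) ≤ 4 * s * n then ts q.1 else ∅) ∪ blk n q.2, hw1, ?_, ?_⟩
  · rintro ⟨R, l⟩
    have h1 : (((if ((ts R).card : ℝ) ≤ 4 * s * n then ts R else ∅) : Finset (Fin n)).card : ℝ)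
        ≤ 4 * (s0 + M/(2*n)) * n := by
      split_ifs with h
      · refine h.trans ?_; gcongr
      · simp; positivity
    have h2 : ((blk n l).card : ℝ) ≤ a * (n/N + 1) := by
      have : ((blk n l).card : ℝ) ≤ ((a * (n / N + 1) : ℕ) : ℝ) := by exact_mod_cast card_blk hN l
      refine this.trans ?_
      push_cast
      gcongr
      exact Nat.cast_div_le
    refine le_trans ?_ (add_le_add h1 h2)
    exact_mod_cast Finset.card_union_le _ _
  · intro Λ' _ ν' hν' Good hGood
    obtain ⟨b, hb⟩ := pr_or_bool (isPW_pw hw) (fun b x => pr ν' (fun l => Good l b x))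
      (fun b x => pr_nonneg hν' _) hGood
    refine ⟨b, ?_⟩
    have hb2 : ρ/2 ≤ ex ν' (fun l => pr (pw w) (fun x => Good l b x)) := by
      unfold pr at hb ⊢; rw [ex_comm]; exact hb
    have hb3 := pr_ge_of_ex hν' (F := fun l => pr (pw w) (fun x => Good l b x))
      (fun l => pr_le_one (isPW_pw hw) _) (c := ρ/4) (by positivity)
    have e0 : ρ / 16 * (1/(N:ℝ))^a = ρ/4 * (1/4 * (1/N)^a) := by ring
    rw [e0]
    refine pr_prod_ge hν' hw1 (fun l => ρ/4 ≤ pr (pw w) (fun x => Good l b x)) _ (by positivity)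
      (by linarith) ?_
    intro l hl
    obtain ⟨A, hA1, hA2⟩ := walk hw hn hη hη1 hwη hs0 M hsM hK hMK (v0 := ρ/4*(e/2))
      (by positivity) (p := ρ/4) (εw := e/2) le_rfl (by positivity) hτ hl
    rw [phi_eq, ← hs] at hA2
    have hAa : A.card ≤ a := by
      have : (A.card : ℝ) ≤ 1 / τ := by rw [le_div_iff₀ hτ0]; exact hA1
      exact_mod_cast this.trans ha
    obtain ⟨l0, hl0⟩ := exists_blk hN A hAa
    set F : (Fin n → Bool) → ℝ := fun R => pr (pw w) (fun x => avl (A ∪ ts R) x (Good l b)) with hF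
    have hm1 := markov hber (F := fun R => 1 - F R)
      (fun R => sub_nonneg.2 (pr_le_one (isPW_pw hw) _)) he
    rw [ex_sub, ex_const hber] at hm1
    have hm1' : (1 - ex (pw fun _ => berW s) fun R => F R) / e ≤ 1/2 := by
      rw [div_le_iff₀ he]; linarith
    have hm2 := markov hber (F := fun R => ((ts R).card : ℝ)) (fun R => by positivity)
      (c := 4 * s * n) (by positivity)
    have hm2' : ex (pw fun _ : Fin n => berW s) (fun R => ((ts R).card : ℝ)) / (4 * s * n) ≤ 1/4 := by
      rw [div_le_iff₀ (by positivity)]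
      refine (ex_card (fun _ : Fin n => isPW_berW hspos.le hs1) (s := s) (fun j => by simp [berW])).trans ?_
      linarith
    have hR : 1/4 ≤ pr (pw (fun _ : Fin n => berW s))
        (fun R => 1 - e ≤ F R ∧ ((ts R).card : ℝ) ≤ 4 * s * n) := by
      have h1 := pr_and_ge hber (fun R => 1 - e ≤ F R) (fun R => ((ts R).card : ℝ) ≤ 4 * s * n)
      simp only [not_le] at h1
      have h2 := pr_not hber (fun R => 1 - e ≤ F R)
      have h3 : pr (pw (fun _ : Fin n => berW s)) (fun R => ¬ (1 - e ≤ F R))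
          ≤ pr (pw (fun _ : Fin n => berW s)) (fun R => e < 1 - F R) :=
        pr_mono hber fun R hR => by push Not at hR; linarith
      linarith
    have hl1 : (1/(N:ℝ))^a ≤ pr (pw (fun _ : Fin a => uniN N)) (fun l => A ⊆ blk n l) := by
      refine le_trans (le_of_eq ?_) (pr_single huni l0 hl0)
      simp [pw, uniN]
    refine (mul_le_mul hR hl1 (by positivity) (pr_nonneg hber _)).trans ?_
    rw [← pr_prod_and]
    apply pr_mono hw1
    rintro ⟨R, l'⟩ ⟨⟨h1, h2⟩, h3⟩
    refine h1.trans ?_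
    apply pr_mono (isPW_pw hw)
    intro x hx
    refine avl_mono ?_ (fun _ h => h) hx
    simp only at h2 h3 ⊢
    rw [if_pos h2, Finset.union_comm]
    exact Finset.union_subset_union_right h3

end NRStep


section RStep

variable {n : ℕ}

noncomputable def Pk (W : (Fin n → Bool) → ℝ) (G : Finset (Fin n) → ℝ) (S : Finset (Fin n)) : ℝ :=
  ex W (fun y => G (S ∪ ts y))

def uni {t : ℕ} (ys : Fin t → Fin n → Bool) : Finset (Fin n) :=
  Finset.univ.biUnion (fun i => ts (ys i))

def joinB {t : ℕ} (ys : Fin t → Fin n → Bool) : Fin n → Bool := fun j => decide (∃ i, ys i j = true)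

noncomputable def aS (W : (Fin n → Bool) → ℝ) (g : (Fin n → Bool) → Prop) (S : Finset (Fin n)) : ℝ :=
  pr W (fun x => avl S x g)

variable {W : (Fin n → Bool) → ℝ}

theorem ex_cons {Y : Type*} [Fintype Y] (w : Y → ℝ) (t : ℕ) (F : (Fin (t+1) → Y) → ℝ) :
    ex (pw (fun _ : Fin (t+1) => w)) F
      = ex w (fun y => ex (pw (fun _ : Fin t => w)) (fun ys => F (Fin.cons y ys))) := by
  unfold ex
  rw [← (Fin.consEquiv (fun _ : Fin (t+1) => Y)).sum_comp, Fintype.sum_prod_type]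
  apply Finset.sum_congr rfl; intro y _
  rw [Finset.mul_sum]
  apply Finset.sum_congr rfl; intro ys _
  simp [pw, Fin.prod_univ_succ, Fin.consEquiv, mul_assoc]

theorem uni_cons {t : ℕ} (y : Fin n → Bool) (ys : Fin t → Fin n → Bool) :
    uni (Fin.cons y ys : Fin (t+1) → Fin n → Bool) = ts y ∪ uni ys := by
  ext j; simp [uni, Fin.exists_fin_succ]

theorem ex_tuple (W : (Fin n → Bool) → ℝ) (t : ℕ) (G : Finset (Fin n) → ℝ) (S : Finset (Fin n)) :
    ex (pw (fun _ : Fin t => W)) (fun ys => G (S ∪ uni ys)) = (Pk W)^[t] G S := by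
  induction t generalizing S with
  | zero => simp [ex, pw, uni]
  | succ t ih =>
    rw [ex_cons, Function.iterate_succ_apply']
    unfold Pk
    congr 1; ext y
    have := ih (S ∪ ts y)
    unfold Pk at this
    rw [← this]
    congr 1; ext ys
    rw [uni_cons, Finset.union_assoc]

theorem pk_mono (hW : IsPW W) {G : Finset (Fin n) → ℝ} (hG : Monotone G) (t : ℕ) :
    Monotone ((Pk W)^[t] G) := by
  induction t with
  | zero => exact hG
  | succ t ih =>
    rw [Function.iterate_succ_apply']
    intro S S' h
    exact ex_mono hW fun y => ih (Finset.union_subset_union_left h)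

theorem pk_incr (hW : IsPW W) {G : Finset (Fin n) → ℝ} (hG : Monotone G) {t t' : ℕ} (h : t ≤ t')
    (S : Finset (Fin n)) : (Pk W)^[t] G S ≤ (Pk W)^[t'] G S := by
  induction t', h using Nat.le_induction with
  | base => exact le_rfl
  | succ k hk ih =>
    refine ih.trans ?_
    rw [Function.iterate_succ_apply']
    refine le_trans (le_of_eq (ex_const hW _).symm) ?_
    exact ex_mono hW fun y => pk_mono hW hG k Finset.subset_union_left

theorem aS_mono (hW : IsPW W) (g : (Fin n → Bool) → Prop) : Monotone (aS W g) := by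
  intro S S' h
  exact pr_mono hW fun x hx => avl_mono h (fun _ h => h) hx

theorem pr_all {Y : Type*} [Fintype Y] (w : Y → ℝ) (m : ℕ) (P : Y → Prop) :
    pr (pw (fun _ : Fin m => w)) (fun ys => ∀ i, P (ys i)) = (pr w P)^m := by
  classical
  unfold pr ex
  have : ∀ ys : Fin m → Y, pw (fun _ : Fin m => w) ys * ind (∀ i, P (ys i))
      = ∏ i, (w (ys i) * ind (P (ys i))) := by
    intro ys
    rw [Finset.prod_mul_distrib]; unfold pw; congr 1
    unfold ind
    rw [Finset.prod_ite_zero]; simp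
  simp only [this]
  rw [← Fintype.prod_sum (fun (_ : Fin m) (y : Y) => w y * ind (P y))]
  simp

theorem core (hW : IsPW W) (m : ℕ) (g : (Fin n → Bool) → Prop) (S : Finset (Fin n)) :
    pr (pw (fun _ : Fin m => W)) (fun ys => g (joinB ys))
      ≤ (aS W g S)^m + m * ((Pk W)^[m] (aS W g) S - aS W g S) := by
  classical
  have hpw := isPW_pw (fun _ : Fin m => hW)
  set O : Fin m → (Fin m → Fin n → Bool) → Finset (Fin n) := fun i ys =>
    (Finset.univ.filter (fun k => k ≠ i)).biUnion (fun k => ts (ys k)) with hO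
  have h1 : pr (pw (fun _ : Fin m => W)) (fun ys => g (joinB ys)) ≤
      ex (pw (fun _ : Fin m => W)) (fun ys => ind (∀ i, avl S (ys i) g) +
        ∑ i, (ind (avl (S ∪ O i ys) (ys i) g) - ind (avl S (ys i) g))) := by
    apply ex_mono hpw; intro ys
    have hnn : ∀ i, 0 ≤ ind (avl (S ∪ O i ys) (ys i) g) - ind (avl S (ys i) g) := fun i =>
      sub_nonneg.2 (ind_mono (avl_mono Finset.subset_union_left fun _ h => h))
    by_cases hg : g (joinB ys)
    · rw [ind_true hg]
      by_cases hall : ∀ i, avl S (ys i) g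
      · rw [ind_true hall]
        linarith [Finset.sum_nonneg fun i (_ : i ∈ Finset.univ) => hnn i]
      · rw [ind_false hall, zero_add]
        push Not at hall
        obtain ⟨i, hi⟩ := hall
        have h2 := Finset.single_le_sum (fun i _ => hnn i) (Finset.mem_univ i)
        refine le_trans ?_ h2
        rw [ind_false hi, ind_true]
        · norm_num
        · refine ⟨joinB ys, fun j hj => ?_, hg⟩
          simp only [hO, Finset.mem_union, Finset.mem_biUnion, Finset.mem_filter, Finset.mem_univ,
            true_and, ts, not_or, not_exists, not_and] at hj
          unfold joinB
          cases hc : ys i j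
          · simp only [decide_eq_false_iff_not, not_exists]
            intro k
            by_cases hk : k = i
            · rw [hk, hc]; simp
            · exact hj.2 k hk
          · simp only [decide_eq_true_eq]; exact ⟨i, hc⟩
    · rw [ind_false hg]
      have := ind_nonneg (∀ i, avl S (ys i) g)
      linarith [Finset.sum_nonneg fun i (_ : i ∈ Finset.univ) => hnn i]
  refine h1.trans ?_
  rw [ex_add, ex_sum]
  have h2 := pr_all W m (fun y => avl S y g)
  unfold pr at h2
  rw [h2]
  apply add_le_add le_rfl
  have h3 : ∀ i : Fin m, ex (pw (fun _ : Fin m => W))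
      (fun ys => ind (avl (S ∪ O i ys) (ys i) g) - ind (avl S (ys i) g))
      ≤ (Pk W)^[m] (aS W g) S - aS W g S := by
    intro i
    rw [ex_sub]
    have h4 : ex (pw (fun _ : Fin m => W)) (fun ys => ind (avl S (ys i) g)) = aS W g S :=
      ex_coord (fun _ => hW) i (fun y => ind (avl S y g))
    rw [h4, ← ex_tuple]
    apply sub_le_sub_right
    rw [← ex_pw_split (fun _ : Fin m => W) (fun _ => hW) i]
    apply ex_mono hpw; intro ys
    have h5 : ∀ a, O i (Function.update ys i a) = O i ys := by
      intro a; simp only [hO]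
      apply Finset.biUnion_congr rfl
      intro k hk
      simp only [Finset.mem_filter, Finset.mem_univ, true_and] at hk
      simp [hk]
    simp only [h5, Function.update_self]
    apply aS_mono hW g (a := S ∪ O i ys)
    apply Finset.union_subset_union_right
    intro j hj
    simp only [hO, uni, Finset.mem_biUnion, Finset.mem_filter, Finset.mem_univ, true_and] at hj ⊢
    obtain ⟨k, _, hk⟩ := hj; exact ⟨k, hk⟩
  refine (Finset.sum_le_sum fun i _ => h3 i).trans (le_of_eq ?_)
  rw [Finset.sum_const, Finset.card_univ, Fintype.card_fin, nsmul_eq_mul]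

open Classical in
theorem rStep {w : Fin n → Bool → ℝ} (hw : ∀ j, IsPW (w j)) (hn : 1 ≤ n) {η ρ e Δ : ℝ}
    (hη : ∀ j, w j true ≤ η) (he1 : e ≤ 1) (hΔ : 0 < Δ) (m T1 : ℕ) (hT1 : 0 < T1)
    (h1 : 2 * m / (T1:ℝ) ≤ ρ / 2) (h2 : (1 - e)^m ≤ ρ / 8) (h3 : (T1 * m) * η ≤ Δ * (ρ / 16)) :
    Step n w (Δ * n) e ρ (ρ / 16) := by
  have hn' : (1:ℝ) ≤ n := by exact_mod_cast hn
  have hT1' : (0:ℝ) < T1 := by exact_mod_cast hT1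
  have hW := isPW_pw hw
  set W := pw w with hWdef
  set T := T1 * m with hT
  have hw1 := isPW_pw (fun _ : Fin T => hW)
  refine ⟨Fin T → Fin n → Bool, inferInstance, pw (fun _ => W),
    fun ys => if ((uni ys).card : ℝ) ≤ Δ * n then uni ys else ∅, hw1, ?_, ?_⟩
  · intro ys; simp only []; split_ifs with h
    · exact h
    · simp; positivity
  · intro Λ' _ ν' hν' Good hGood
    set a : Λ' → Bool → Finset (Fin n) → ℝ := fun l b => aS W (Good l b) with ha
    have ha0 : ∀ l b S, 0 ≤ a l b S := fun l b S => pr_nonneg hW _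
    have ha1 : ∀ l b S, a l b S ≤ 1 := fun l b S => pr_le_one hW _
    have hit1 : ∀ t l b, (Pk W)^[t] (a l b) ∅ ≤ 1 := by
      intro t l b
      rw [← ex_tuple]
      exact (ex_mono (isPW_pw fun _ => hW) fun ys => ha1 l b _).trans (ex_const (isPW_pw fun _ => hW) 1).le
    have hit0 : ∀ t l b, 0 ≤ (Pk W)^[t] (a l b) ∅ := by
      intro t l b
      rw [← ex_tuple]
      exact ex_nonneg (isPW_pw fun _ => hW) fun ys => ha0 l b _
    set Mt : ℕ → ℝ := fun t => ex ν' (fun l => (Pk W)^[t] (a l true) ∅ + (Pk W)^[t] (a l false) ∅)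
      with hMt
    have hM2 : ∀ t, Mt t ≤ 2 := fun t =>
      (ex_mono hν' (G := fun _ => 2) fun l => by linarith [hit1 t l true, hit1 t l false]).trans
        (ex_const hν' 2).le
    have hM0 : ∀ t, 0 ≤ Mt t := fun t =>
      ex_nonneg hν' fun l => by linarith [hit0 t l true, hit0 t l false]
    obtain ⟨k, hk, hkM⟩ : ∃ k < T1, Mt ((k+1)*m) - Mt (k*m) ≤ 2 / T1 := by
      have hs : ∑ k ∈ Finset.range T1, (Mt ((k+1)*m) - Mt (k*m)) ≤ ∑ k ∈ Finset.range T1, 2/(T1:ℝ) := by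
        rw [Finset.sum_range_sub (fun k => Mt (k*m))]
        simp only [Finset.sum_const, Finset.card_range, nsmul_eq_mul]
        rw [mul_div_cancel₀ _ hT1'.ne']
        linarith [hM2 (T1*m), hM0 (0*m)]
      obtain ⟨k, hk, h⟩ := Finset.exists_le_of_sum_le ⟨0, by simpa using hT1⟩ hs
      exact ⟨k, Finset.mem_range.1 hk, h⟩
    have hsucc : (k+1)*m = k*m + m := by ring
    -- main inequality
    set t := k*m with ht
    have hwt := isPW_pw (fun _ : Fin t => hW)
    have hwm := isPW_pw (fun _ : Fin m => hW)
    have hmain : ρ ≤ ex (pw (fun _ : Fin t => W)) (fun ys => ex ν' (fun l =>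
        (a l true (uni ys))^m + (a l false (uni ys))^m)) + m * (Mt (t+m) - Mt t) := by
      have e1 : ∀ s, ∀ l b, (Pk W)^[t] ((Pk W)^[s] (a l b)) ∅
          = ex (pw (fun _ : Fin t => W)) (fun ys => (Pk W)^[s] (a l b) (uni ys)) := by
        intro s l b
        rw [← ex_tuple]; simp
      have e2 : Mt (t+m) = ex (pw (fun _ : Fin t => W)) (fun ys => ex ν' (fun l =>
          (Pk W)^[m] (a l true) (uni ys) + (Pk W)^[m] (a l false) (uni ys))) := by
        rw [ex_comm, hMt]; simp only
        congr 1; ext l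
        rw [ex_add, ← e1, ← e1, Function.iterate_add_apply, Function.iterate_add_apply]
      have e3 : Mt t = ex (pw (fun _ : Fin t => W)) (fun ys => ex ν' (fun l =>
          a l true (uni ys) + a l false (uni ys))) := by
        rw [ex_comm, hMt]; simp only
        congr 1; ext l
        have h4 := e1 0 l true
        have h5 := e1 0 l false
        simp only [Function.iterate_zero, id_eq] at h4 h5
        rw [ex_add, ← h4, ← h5]
      rw [e2, e3, ← ex_sub, ← ex_mul_left, ← ex_add, ← ex_const hwt ρ]
      apply ex_mono hwt; intro ys
      rw [← ex_sub, ← ex_mul_left, ← ex_add]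
      have h4 : ρ ≤ ex ν' (fun l => pr (pw (fun _ : Fin m => W)) (fun zs => Good l true (joinB zs))
          + pr (pw (fun _ : Fin m => W)) (fun zs => Good l false (joinB zs))) := by
        rw [ex_add]; unfold pr; rw [ex_comm (w := ν'), ex_comm (w := ν'), ← ex_add, ← ex_const hwm ρ]
        apply ex_mono hwm; intro zs
        obtain ⟨b, hb⟩ := hGood (joinB zs)
        have h6 := fun b => pr_nonneg hν' (fun l => Good l b (joinB zs))
        unfold pr at hb h6
        cases b
        · linarith [h6 true]
        · linarith [h6 false]
      refine h4.trans (ex_mono hν' fun l => ?_)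
      have h5 := core hW m (Good l true) (uni ys)
      have h6 := core hW m (Good l false) (uni ys)
      simp only [ha]
      linarith
    have hmk : (m:ℝ) * (Mt (t+m) - Mt t) ≤ ρ/2 := by
      rw [hsucc] at hkM
      have := mul_le_mul_of_nonneg_left hkM (Nat.cast_nonneg (α := ℝ) m)
      have e4 : (m:ℝ) * (2 / T1) = 2 * m / T1 := by ring
      linarith
    have hpt : ∀ l b S, (a l b S)^m ≤ ind (1 - e ≤ a l b S) + ρ/8 := by
      intro l b S
      by_cases h : 1 - e ≤ a l b S
      · rw [ind_true h]
        have h7 : (a l b S)^m ≤ 1 := pow_le_one₀ (ha0 l b S) (ha1 l b S)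
        have h8 : 0 ≤ (1-e)^m := pow_nonneg (by linarith) m
        linarith
      · rw [ind_false h]; push Not at h
        have := pow_le_pow_left₀ (ha0 l b S) h.le m
        linarith
    set I : Λ' → Bool → Finset (Fin n) → ℝ := fun l b S => ind (1 - e ≤ a l b S) with hI
    have hImono : ∀ l b, Monotone (I l b) := fun l b S S' h =>
      ind_mono fun h' => h'.trans (aS_mono hW (Good l b) h)
    have hIt : ρ/4 ≤ ex ν' (fun l => (Pk W)^[t] (I l true) ∅ + (Pk W)^[t] (I l false) ∅) := by
      have h9 : ex (pw (fun _ : Fin t => W)) (fun ys => ex ν' (fun l =>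
        (a l true (uni ys))^m + (a l false (uni ys))^m)) ≤
        ex (pw (fun _ : Fin t => W)) (fun ys => ex ν' (fun l =>
        (I l true (uni ys) + I l false (uni ys)) + ρ/4)) := by
        apply ex_mono hwt; intro ys; apply ex_mono hν'; intro l
        have := hpt l true (uni ys)
        have := hpt l false (uni ys)
        simp only [hI]; linarith
      have h10 : ex (pw (fun _ : Fin t => W)) (fun ys => ex ν' (fun l =>
        (I l true (uni ys) + I l false (uni ys)) + ρ/4)) =
        ex ν' (fun l => (Pk W)^[t] (I l true) ∅ + (Pk W)^[t] (I l false) ∅) + ρ/4 := by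
        rw [ex_comm]
        rw [← ex_const hν' (ρ/4), ← ex_add]
        congr 1; ext l
        rw [ex_const hν', ex_add, ex_add, ex_const hwt, ← ex_tuple, ← ex_tuple]; simp
      linarith
    have htT : t ≤ T := by rw [ht, hT]; exact Nat.mul_le_mul_right m hk.le
    have hIT : ρ/4 ≤ ex ν' (fun l => (Pk W)^[T] (I l true) ∅) + ex ν' (fun l => (Pk W)^[T] (I l false) ∅) := by
      rw [← ex_add]
      refine hIt.trans (ex_mono hν' fun l => ?_)
      have := pk_incr hW (hImono l true) htT ∅
      have := pk_incr hW (hImono l false) htT ∅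
      linarith
    obtain ⟨b, hb⟩ : ∃ b, ρ/8 ≤ ex ν' (fun l => (Pk W)^[T] (I l b) ∅) := by
      by_contra hc; push Not at hc
      linarith [hc true, hc false]
    refine ⟨b, ?_⟩
    -- truncation
    have hcard : pr (pw (fun _ : Fin T => W)) (fun ys => Δ * n < ((uni ys).card : ℝ)) ≤ ρ/16 := by
      refine (markov hw1 (fun ys => by positivity) (by positivity)).trans ?_
      have h11 : ∀ ys : Fin T → Fin n → Bool, ((uni ys).card : ℝ) ≤ ∑ i, ((ts (ys i)).card : ℝ) := by
        intro ys
        exact_mod_cast Finset.card_biUnion_le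
      have h12 : ex (pw (fun _ : Fin T => W)) (fun ys => ((uni ys).card : ℝ)) ≤ T * (η * n) := by
        refine (ex_mono hw1 h11).trans ?_
        rw [ex_sum]
        refine (Finset.sum_le_sum (g := fun _ => η * n) fun i _ => ?_).trans (by simp)
        rw [ex_coord (fun _ => hW) i (fun y => ((ts y).card : ℝ))]
        exact ex_card hw hη
      rw [div_le_iff₀ (by positivity)]
      refine h12.trans ?_
      have : (T:ℝ) = T1 * m := by rw [hT]; push_cast; ring
      rw [this]
      nlinarith
    have hfin : ρ/8 ≤ pr (prodW ν' (pw (fun _ : Fin T => W))) (fun q => 1 - e ≤ a q.1 b (uni q.2)) := by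
      rw [pr_prod]
      refine hb.trans (le_of_eq ?_)
      congr 1; ext l
      rw [← ex_tuple]; simp [pr, hI]
    have hpp := isPW_prodW hν' hw1
    have hand := pr_and_ge hpp (fun q => 1 - e ≤ a q.1 b (uni q.2))
      (fun q => ((uni q.2).card : ℝ) ≤ Δ * n)
    have hc2 : pr (prodW ν' (pw (fun _ : Fin T => W))) (fun q => ¬ ((uni q.2).card : ℝ) ≤ Δ * n)
        ≤ ρ/16 := by
      rw [pr_prod, ← ex_const hν' (ρ/16)]
      apply ex_mono hν'; intro l
      simp only [not_le]; exact hcard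
    refine (by linarith : ρ/16 ≤ _).trans (hand.trans (pr_mono hpp ?_))
    · rintro ⟨l, ys⟩ ⟨h13, h14⟩
      simp only at h13 h14 ⊢
      rw [if_pos h14]; exact h13

end RStep


section Compose

variable {n : ℕ}

def mixz (rare : Fin n → Bool) (base : Fin n → Bool) (z y : Fin n → Bool) : Fin n → Bool :=
  fun j => if rare j then xor (y j) (base j) else z j

theorem step_compose {w wz wy : Fin n → Bool → ℝ} {rare base : Fin n → Bool}
    (hw : ∀ j, IsPW (w j)) (hwz : ∀ j, IsPW (wz j)) (hwy : ∀ j, IsPW (wy j))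
    (hmap : ∀ j, ∀ u : Bool → ℝ, ∑ q : Bool × Bool, prodW (wz j) (wy j) q *
      u (if rare j then xor q.2 (base j) else q.1) = ∑ c, w j c * u c)
    {s1 s2 e1 e2 ρ ρ1 ρ2 : ℝ} (he1 : 0 ≤ e1) (he11 : e1 ≤ 1) (he2 : 0 ≤ e2)
    (hy : Step n wy s1 e1 ρ ρ1) (hz : Step n wz s2 e2 ρ1 ρ2) :
    Step n w (s1 + s2) (e1 + e2) ρ ρ2 := by
  obtain ⟨Ly, _, vy, By, hvy, hsy, hy⟩ := hy
  obtain ⟨Lz, _, vz, Bz, hvz, hsz, hz⟩ := hz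
  refine ⟨Ly × Lz, inferInstance, prodW vy vz, fun q => By q.1 ∪ Bz q.2, isPW_prodW hvy hvz, ?_, ?_⟩
  · rintro ⟨a, b⟩
    refine le_trans ?_ (add_le_add (hsy a) (hsz b))
    exact_mod_cast Finset.card_union_le _ _
  · intro Λ' _ ν' hν' Good hGood
    have hpy := isPW_pw hwy
    have hpz := isPW_pw hwz
    have hex : ∀ F : (Fin n → Bool) → ℝ, ex (pw w) F
        = ex (prodW (pw wz) (pw wy)) (fun q => F (mixz rare base q.1 q.2)) := by
      intro F
      rw [ex_prod, ← ex_pw_pair wz wy (fun z y => F (mixz rare base z y))]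
      rw [← ex_pw_map (fun j => prodW (wz j) (wy j)) w
        (fun j q => if rare j then xor q.2 (base j) else q.1) hmap]
      rfl
    obtain ⟨b, hb⟩ := hz (Λ' × Ly) inferInstance (prodW ν' vy) (isPW_prodW hν' hvy)
      (fun q b z => 1 - e1 ≤ pr (pw wy) (fun y => avl (By q.2) y (fun y' => Good q.1 b (mixz rare base z y'))))
      (fun z => hy Λ' inferInstance ν' hν' (fun l b y => Good l b (mixz rare base z y))
        (fun y => hGood (mixz rare base z y)))
    refine ⟨b, ?_⟩
    rw [pr_prod]
    simp only [pr_prod (w := vy)]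
    unfold pr at hb ⊢
    rw [ex_prod, ex_prod] at hb
    refine hb.trans ?_
    apply ex_mono hν'; intro l
    apply ex_mono hvy; intro ly
    apply ex_mono hvz; intro lz
    apply ind_mono
    intro h
    simp only at h ⊢
    rw [hex]
    have h2 := pr_prod_ge hpz hpy
      (fun z => avl (Bz lz) z (fun z => 1 - e1 ≤ pr (pw wy) (fun y => avl (By ly) y
        (fun y' => Good l b (mixz rare base z y')))))
      (fun q => avl (By ly ∪ Bz lz) (mixz rare base q.1 q.2) (Good l b)) (p := 1 - e2) (q := 1 - e1)
      (by linarith) h ?_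
    · have : 1 - (e1 + e2) ≤ (1 - e2) * (1 - e1) := by nlinarith
      exact this.trans h2
    · rintro z ⟨z', hz', hg⟩
      refine hg.trans (pr_mono hpy ?_)
      rintro y ⟨y', hy', hgy⟩
      refine ⟨_, fun j hj => ?_, hgy⟩
      simp only [Finset.mem_union, not_or] at hj
      simp [mixz, hz' j hj.2, hy' j hj.1]

theorem step_split (w : Fin n → Bool → ℝ) (hw : ∀ j, IsPW (w j)) {η : ℝ} (hη : 0 ≤ η) (hη2 : η ≤ 1/2) :
    ∃ (rare base : Fin n → Bool) (wz wy : Fin n → Bool → ℝ), (∀ j, IsPW (wz j)) ∧ (∀ j, IsPW (wy j)) ∧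
      (∀ j, ∀ u : Bool → ℝ, ∑ q : Bool × Bool, prodW (wz j) (wy j) q *
      u (if rare j then xor q.2 (base j) else q.1) = ∑ c, w j c * u c) ∧
      (∀ j a, η ≤ wz j a) ∧ (∀ j, wy j true ≤ η) := by
  classical
  have hsum : ∀ j, w j true + w j false = 1 := fun j => by
    have := (hw j).2; simpa using this
  refine ⟨fun j => decide (w j true < η ∨ w j false < η), fun j => decide (w j false < η),
    fun j => if w j true < η ∨ w j false < η then berW (1/2) else w j,
    fun j => if w j true < η ∨ w j false < η then
      (if w j false < η then berW (w j false) else berW (w j true)) else berW 0, ?_, ?_, ?_, ?_, ?_⟩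
  · intro j; simp only; split_ifs
    · exact isPW_berW (by norm_num) (by norm_num)
    · exact hw j
  · intro j; simp only
    have := hsum j
    have := (hw j).1 true
    have := (hw j).1 false
    split_ifs
    · exact isPW_berW (by assumption) (by linarith)
    · exact isPW_berW (by assumption) (by linarith)
    · exact isPW_berW (by norm_num) (by norm_num)
  · intro j u
    have h1 := hsum j
    have h2 : w j true = 1 - w j false := by linarith
    simp only [Fintype.sum_prod_type, Fintype.sum_bool, prodW]
    by_cases hr : w j true < η ∨ w j false < η
    · by_cases hf : w j false < η
      · simp [hf, berW]; rw [h2]; ring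
      · have ht : w j true < η := hr.resolve_right hf
        have h3 : w j false = 1 - w j true := by linarith
        simp only [ht, hf, or_false, if_true, if_false, berW, decide_true, decide_false]
        simp
        rw [h3]; ring
    · simp [hr, berW]
  · intro j a; simp only; split_ifs with h
    · cases a <;> simp [berW] <;> linarith
    · push Not at h; cases a; exacts [h.2, h.1]
  · intro j; simp only; split_ifs with h h'
    · simp [berW]; linarith
    · simp [berW]; rcases h with h | h
      · linarith
      · exact absurd h h'
    · simp [berW]; exact hη

def bigA (X : ℕ) : ℕ := 2 ^ (2^34 * X^11)

def bigG (X : ℕ) : ℕ := 256 * X * (bigA X * X) ^ (bigA X)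

theorem bigA_pos (X : ℕ) : 0 < bigA X := by unfold bigA; positivity

theorem bigG_ge {X : ℕ} (hX : 1 ≤ X) : 256 * (bigA X * X) ≤ bigG X := by
  unfold bigG
  have h1 : bigA X * X ≤ (bigA X * X) ^ (bigA X) :=
    Nat.le_self_pow (bigA_pos X).ne' _
  calc 256 * (bigA X * X) ≤ 256 * (bigA X * X) ^ (bigA X) := Nat.mul_le_mul_left _ h1
    _ ≤ 256 * X * (bigA X * X) ^ (bigA X) := Nat.mul_le_mul_right _ (by omega)

theorem bigG_ge' {X : ℕ} (hX : 1 ≤ X) : 256 * X ≤ bigG X := by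
  refine le_trans ?_ (bigG_ge hX)
  have := bigA_pos X
  nlinarith

theorem round_step (w : Fin n → Bool → ℝ) (hw : ∀ j, IsPW (w j)) {X : ℕ} (hX : 1 ≤ X)
    (hn : bigG X ≤ n) : Step n w (4 * n / X) (2 / X) (1 / X) (1 / bigG X) := by
  have hX' : (1:ℝ) ≤ X := by exact_mod_cast hX
  have hX0 : (0:ℝ) < X := by linarith
  have h8 : 256 * X ≤ n := (bigG_ge' hX).trans hn
  have haX : 256 * (bigA X * X) ≤ n := (bigG_ge hX).trans hn
  have hn1 : 1 ≤ n := by omega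
  have h8' : (256:ℝ) * X ≤ n := by exact_mod_cast h8
  have haX' : (256:ℝ) * (bigA X * X) ≤ n := by exact_mod_cast haX
  have hn0 : (0:ℝ) < n := by linarith
  have ha0 : (0:ℝ) < bigA X := by exact_mod_cast bigA_pos X
  set η : ℝ := 1 / (4096 * X^7) with hη
  have hη0 : 0 < η := by positivity
  have hη2 : η ≤ 1/2 := by
    rw [hη]; apply one_div_le_one_div_of_le (by norm_num)
    have : (1:ℝ) ≤ X^7 := one_le_pow₀ hX'
    linarith
  obtain ⟨rare, base, wz, wy, hwz, hwy, hmap, hzη, hyη⟩ := step_split w hw hη0.le hη2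
  have hR : Step n wy (1 / X * n) (1/X) (1/X) (1/X/16) := by
    apply rStep hwy hn1 hyη (by rw [div_le_one hX0]; exact hX') (by positivity) (8 * X^2) (32 * X^3)
      (by positivity)
    · push_cast; apply le_of_eq; field_simp; norm_num
    · have h1 : (1 - 1/(X:ℝ)) ≤ Real.exp (-(1/X)) := by
        have := Real.add_one_le_exp (-(1/(X:ℝ))); linarith
      have h0 : 0 ≤ 1 - 1/(X:ℝ) := by rw [sub_nonneg, div_le_one hX0]; exact hX'
      refine (pow_le_pow_left₀ h0 h1 _).trans ?_
      rw [← Real.exp_nat_mul]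
      have e1 : ((8 * X^2 : ℕ) : ℝ) * -(1/(X:ℝ)) = -(8 * X) := by push_cast; field_simp
      rw [e1, Real.exp_neg, div_div, ← one_div]
      apply one_div_le_one_div_of_le (by positivity)
      have := Real.add_one_le_exp (8 * (X:ℝ)); linarith
    · rw [hη]; push_cast; apply le_of_eq; field_simp; norm_num
  have hexp : 1 / ((1/4) * Real.exp (-(34*(32 * X)/(1/(8*X) * η * (1/X/16/4*(1/X/2)))))) ≤ bigA X := by
    have e1 : 34*(32 * X)/(1/(8*X) * η * (1/X/16/4*(1/X/2))) = (34 * 2^27 * X^11 : ℕ) * (1:ℝ) := by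
      rw [hη]; push_cast; field_simp; norm_num
    rw [e1, Real.exp_neg, Real.exp_nat_mul]
    have e2 : Real.exp 1 ≤ 4 := by have := Real.exp_one_lt_d9; linarith
    have e3 : 1 / (1/4 * (Real.exp 1 ^ (34 * 2^27 * X^11))⁻¹) = 4 * Real.exp 1 ^ (34 * 2^27 * X^11) := by
      field_simp
    rw [e3]
    have e4 : Real.exp 1 ^ (34 * 2^27 * X^11) ≤ 4 ^ (34 * 2^27 * X^11) :=
      pow_le_pow_left₀ (Real.exp_pos 1).le e2 _
    have e5 : (4:ℝ) * 4 ^ (34 * 2^27 * X^11) ≤ bigA X := by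
      unfold bigA; push_cast
      rw [← pow_succ', show (4:ℝ) = 2^2 by norm_num, ← pow_mul]
      apply pow_le_pow_right₀ (by norm_num)
      have : 1 ≤ X^11 := Nat.one_le_pow _ _ hX
      omega
    linarith
  set M : ℕ := n / (8 * X) + 1 with hM
  have hM1 : (n:ℝ) / (8 * X) < M := by
    rw [hM]; push_cast
    have := Nat.lt_floor_add_one ((n:ℝ) / ((8 * X : ℕ) : ℝ))
    rw [Nat.floor_div_eq_div] at this
    push_cast at this; exact this
  have hM2 : (M:ℝ) ≤ n / (8 * X) + 1 := by
    rw [hM]; push_cast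
    have : ((n / (8 * X) : ℕ) : ℝ) ≤ n / ((8 * X : ℕ) : ℝ) := Nat.cast_div_le
    push_cast at this
    linarith
  have hsM : 1/(8*(X:ℝ)) + M / (2 * n) ≤ 1 / (4 * X) := by
    have h1 : (M:ℝ) / (2 * n) ≤ (n / (8 * X) + 1) / (2 * n) := by gcongr
    have h2 : ((n:ℝ) / (8 * X) + 1) / (2 * n) = 1 / (16 * X) + 1 / (2 * n) := by field_simp; ring
    have h3 : 1 / (2 * (n:ℝ)) ≤ 1 / (16 * X) := by
      apply one_div_le_one_div_of_le (by positivity); linarith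
    have h4 : 1/(8*(X:ℝ)) + (1 / (16 * X) + 1 / (16 * X)) = 1 / (4 * X) := by field_simp; norm_num
    linarith
  have hZ : Step n wz (4 * (1/(8*X) + M/(2*n)) * n + bigA X * (n/((bigA X * X : ℕ):ℝ) + 1)) (1/X) (1/X/16)
      (1/X/16 / 16 * (1/((bigA X * X : ℕ):ℝ))^(bigA X)) := by
    refine nrStep hwz hn1 hη0 (by linarith) hzη (by positivity) M (hsM.trans ?_)
      (K := 32 * X) (by positivity) ?_ (by positivity) (by positivity) rfl (bigA X) (bigA X * X) hexp
      (Nat.mul_pos (bigA_pos X) (by omega))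
    · apply one_div_le_one_div_of_le (by norm_num); linarith
    · have := mul_lt_mul_of_pos_right hM1 (by positivity : (0:ℝ) < 32 * X)
      have e1 : (n:ℝ) / (8 * X) * (32 * X) = 4 * n := by field_simp; norm_num
      linarith
  have hfin := step_compose hw hwz hwy hmap (by positivity) (by rw [div_le_one hX0]; exact hX')
    (by positivity) hR hZ
  have he : 1/(X:ℝ) + 1/X = 2/X := by ring
  have hρ : 1/(X:ℝ)/16 / 16 * (1/((bigA X * X : ℕ):ℝ))^(bigA X) = 1 / bigG X := by
    unfold bigG
    rw [one_div_pow]; push_cast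
    rw [div_div, div_div, div_mul_div_comm]
    congr 1
    · norm_num
    · ring
  rw [he, hρ] at hfin
  obtain ⟨L, i1, w1, B1, h1, h2, h3⟩ := hfin
  refine ⟨L, i1, w1, B1, h1, fun l => (h2 l).trans ?_, h3⟩
  have k1 : 4 * (1/(8*(X:ℝ)) + M/(2*n)) * n ≤ n / X := by
    have := mul_le_mul_of_nonneg_right hsM (by positivity : (0:ℝ) ≤ 4 * n)
    have e1 : 1 / (4 * (X:ℝ)) * (4 * n) = n / X := by field_simp
    linarith
  have k2 : bigA X * (n/((bigA X * X : ℕ):ℝ) + 1) ≤ 2 * (n / X) := by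
    push_cast
    have e1 : (bigA X : ℝ) * (n/(bigA X * X) + 1) = n / X + bigA X := by field_simp
    have e2 : (bigA X : ℝ) ≤ n / X := by rw [le_div_iff₀ hX0]; nlinarith
    linarith
  have e1 : 1/(X:ℝ) * n = n / X := by ring
  have e2 : 4 * (n:ℝ) / X = 4 * (n / X) := by ring
  linarith

end Compose


section Multi

variable {n : ℕ}

def Wn (n : ℕ) (e : ℕ → ℝ) (B : Finset (Fin n)) (b : Bool) :
    (r : ℕ) → (Fin r → Fin n → Bool → ℝ) → ((Fin r → Fin n → Bool) → Bool) → Prop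
  | 0, _, f => f (fun i => i.elim0) = b
  | (r+1), ws, f => 1 - e r ≤ pr (pw (ws 0)) (fun x => avl B x (fun y =>
      Wn n e B b r (fun i => ws i.succ) (fun t => f (Fin.cons y t))))

theorem Wn_mono {e : ℕ → ℝ} {B B' : Finset (Fin n)} (hB : B ⊆ B') {b : Bool} (r : ℕ)
    (ws : Fin r → Fin n → Bool → ℝ) (hws : ∀ i j, IsPW (ws i j)) (f : (Fin r → Fin n → Bool) → Bool)
    (h : Wn n e B b r ws f) : Wn n e B' b r ws f := by
  induction r with
  | zero => exact h
  | succ r ih =>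
    unfold Wn at h ⊢
    refine h.trans (pr_mono (isPW_pw (hws 0)) ?_)
    intro x hx
    exact avl_mono hB (fun y hy => ih _ (fun i j => hws _ _) _ hy) hx

theorem multi (X : ℕ) (hX : 1 ≤ X) (r : ℕ) (ws : Fin r → Fin n → Bool → ℝ)
    (hws : ∀ i j, IsPW (ws i j)) (hn : bigG^[r] X ≤ n) :
    ∃ (Λ : Type) (_ : Fintype Λ) (w : Λ → ℝ) (B : Λ → Finset (Fin n)), IsPW w ∧
      (∀ l, ((B l).card : ℝ) ≤ ∑ i ∈ Finset.range r, 4 * n / ((bigG^[i] X : ℕ) : ℝ)) ∧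
      ∀ f : (Fin r → Fin n → Bool) → Bool, ∃ b, 1 / ((bigG^[r] X : ℕ) : ℝ) ≤ pr w (fun l =>
        Wn n (fun i => 2 / ((bigG^[i] X : ℕ) : ℝ)) (B l) b r ws f) := by
  have hpos : ∀ k, 1 ≤ bigG^[k] X := by
    intro k
    induction k with
    | zero => exact hX
    | succ k ih => rw [Function.iterate_succ_apply']; have := bigG_ge' ih; omega
  induction r with
  | zero =>
    refine ⟨Unit, inferInstance, fun _ => 1, fun _ => ∅, ⟨fun _ => by norm_num, by simp⟩, by simp, ?_⟩
    intro f
    refine ⟨f (fun i => i.elim0), ?_⟩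
    have : (1:ℝ) ≤ X := by exact_mod_cast hX
    simp only [pr, ex, Wn]
    rw [ind_true trivial]
    simp
    exact inv_le_one_of_one_le₀ this
  | succ r ih =>
    have hr1 := hpos r
    rw [Function.iterate_succ_apply'] at hn
    have hle : bigG^[r] X ≤ n := by have := bigG_ge' hr1; omega
    obtain ⟨L, _, v, B, hv, hs, hf⟩ := ih (fun i => ws i.succ) (fun i j => hws _ _) hle
    obtain ⟨L1, _, v1, B1, hv1, hs1, hst⟩ := round_step (ws 0) (hws 0) hr1 hn
    refine ⟨L × L1, inferInstance, prodW v v1, fun q => B q.1 ∪ B1 q.2, isPW_prodW hv hv1, ?_, ?_⟩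
    · rintro ⟨a, b⟩
      rw [Finset.sum_range_succ]
      refine le_trans ?_ (add_le_add (hs a) (hs1 b))
      exact_mod_cast Finset.card_union_le _ _
    · intro f
      obtain ⟨b, hb⟩ := hst L inferInstance v hv
        (fun l b y => Wn n (fun i => 2 / ((bigG^[i] X : ℕ) : ℝ)) (B l) b r (fun i => ws i.succ)
          (fun t => f (Fin.cons y t))) (fun y => hf (fun t => f (Fin.cons y t)))
      refine ⟨b, ?_⟩
      rw [Function.iterate_succ_apply']
      refine hb.trans (pr_mono (isPW_prodW hv hv1) ?_)
      rintro ⟨l, l1⟩ h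
      unfold Wn
      refine h.trans (pr_mono (isPW_pw (hws 0)) ?_)
      intro x hx
      refine avl_mono Finset.subset_union_right (fun y hy => ?_) hx
      exact Wn_mono Finset.subset_union_left _ _ (fun i j => hws _ _) _ hy

theorem ex_consd {Y : Type*} [Fintype Y] (t : ℕ) (w : Fin (t+1) → Y → ℝ) (F : (Fin (t+1) → Y) → ℝ) :
    ex (pw w) F
      = ex (w 0) (fun y => ex (pw (fun i : Fin t => w i.succ)) (fun ys => F (Fin.cons y ys))) := by
  unfold ex
  rw [← (Fin.consEquiv (fun _ : Fin (t+1) => Y)).sum_comp, Fintype.sum_prod_type]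
  apply Finset.sum_congr rfl; intro y _
  rw [Finset.mul_sum]
  apply Finset.sum_congr rfl; intro ys _
  simp [pw, Fin.prod_univ_succ, Fin.consEquiv, mul_assoc]

def consS {r : ℕ} {B : Finset (Fin n)} (σ : ({j : Fin n // j ∉ B} → Bool) → (Fin n → Bool))
    (ρ : ({j : Fin n // j ∉ B} → Bool) → Strategy n r B) : Strategy n (r+1) B :=
  fun i => Fin.cases (motive := fun i : Fin (r+1) =>
      (Fin (i.val + 1) → ({j : Fin n // j ∉ B} → Bool)) → (Fin n → Bool))
    (fun h => σ (h 0)) (fun i' h => ρ (h 0) i' (fun k => h k.succ)) i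

theorem exec_cons {r : ℕ} {B : Finset (Fin n)} (σ : ({j : Fin n // j ∉ B} → Bool) → (Fin n → Bool))
    (ρ : ({j : Fin n // j ∉ B} → Bool) → Strategy n r B) (x : Fin n → Bool) (α : Fin r → Fin n → Bool) :
    execP B (consS σ ρ) (Fin.cons x α) =
      Fin.cons (fun j => if j ∈ B then σ (fun j' => x j'.val) j else x j)
        (execP B (ρ (fun j' => x j'.val)) α) := by
  ext i j
  refine Fin.cases ?_ (fun i' => ?_) i
  · rfl
  · rfl

theorem strat {e : ℕ → ℝ} (he : ∀ i, 0 ≤ e i) (B : Finset (Fin n)) (b : Bool) (r : ℕ)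
    (ws : Fin r → Fin n → Bool → ℝ) (hws : ∀ i j, IsPW (ws i j)) (f : (Fin r → Fin n → Bool) → Bool)
    (hp : ∑ i ∈ Finset.range r, e i ≤ 1)
    (h : Wn n e B b r ws f) : ∃ π : Strategy n r B, 1 - ∑ i ∈ Finset.range r, e i ≤
      pr (pw (fun i => pw (ws i))) (fun α => f (execP B π α) = b) := by
  induction r with
  | zero =>
    refine ⟨fun i => i.elim0, ?_⟩
    unfold Wn at h
    simp only [pr, ex, pw]
    simp
    rw [ind_true]
    rw [← h]; congr 1; ext i; exact i.elim0
  | succ r ih =>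
    classical
    unfold Wn at h
    rw [Finset.sum_range_succ] at hp ⊢
    have hs0 : 0 ≤ ∑ i ∈ Finset.range r, e i := Finset.sum_nonneg fun i _ => he i
    have her := he r
    let good : (Fin n → Bool) → Prop := fun y =>
      Wn n e B b r (fun i => ws i.succ) (fun t => f (Fin.cons y t))
    let σ : ({j : Fin n // j ∉ B} → Bool) → (Fin n → Bool) := fun h =>
      if hh : ∃ y, (∀ j : {j : Fin n // j ∉ B}, y j.val = h j) ∧ good y then hh.choose else fun _ => false
    have hσ : ∀ h, (∃ y, (∀ j : {j : Fin n // j ∉ B}, y j.val = h j) ∧ good y) →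
        (∀ j : {j : Fin n // j ∉ B}, σ h j.val = h j) ∧ good (σ h) := by
      intro h hh
      have : σ h = hh.choose := dif_pos hh
      rw [this]; exact hh.choose_spec
    have hρ : ∀ y, ∃ π : Strategy n r B, good y → 1 - ∑ i ∈ Finset.range r, e i ≤
      pr (pw (fun i : Fin r => pw (ws i.succ))) (fun α => f (Fin.cons y (execP B π α)) = b) := by
      intro y
      by_cases hy : good y
      · obtain ⟨π, hπ⟩ := ih (fun i => ws i.succ) (fun i j => hws _ _) (fun t => f (Fin.cons y t))
          (by linarith) hy
        exact ⟨π, fun _ => hπ⟩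
      · exact ⟨fun _ _ _ => false, fun h => absurd h hy⟩
    choose ρ hρ using hρ
    refine ⟨consS σ (fun h => ρ (σ h)), ?_⟩
    have hP0 := isPW_pw (hws 0)
    have hP1 : IsPW (pw (fun i : Fin r => pw (ws i.succ))) := isPW_pw fun i => isPW_pw (hws i.succ)
    have := pr_prod_ge hP0 hP1
      (fun x => avl B x good)
      (fun q => f (execP B (consS σ (fun h => ρ (σ h))) (Fin.cons q.1 q.2)) = b) (p := 1 - e r)
      (q := 1 - ∑ i ∈ Finset.range r, e i) (by linarith) h ?_
    · unfold pr at this ⊢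
      rw [ex_prod] at this
      rw [ex_consd]
      refine le_trans ?_ this
      nlinarith
    · rintro x ⟨y, hy, hg⟩
      have h1 := hσ (fun j => x j.val) ⟨y, fun j => hy j.val j.2, hg⟩
      have h2 := hρ _ h1.2
      refine h2.trans (pr_mono hP1 ?_)
      intro α hα
      simp only [exec_cons]
      rw [← hα]
      congr 2
      ext j
      split_ifs with hj
      · rfl
      · exact (h1.1 ⟨j, hj⟩).symm

end Multi

section Final

theorem IPi_toReal {n r : ℕ} (μs : Fin r → Fin n → Measure Bool)
    (hμ : ∀ i j, IsProbabilityMeasure (μs i j))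
    (f : (Fin r → Fin n → Bool) → Bool) (B : Finset (Fin n)) (π : Strategy n r B) (b : Bool) :
    (IPi μs f B π b).toReal = pr (pw (fun i => pw (fun j v => (μs i j {v}).toReal)))
      (fun α => f (execP B π α) = b) := by
  classical
  unfold IPi
  set ν := (Measure.pi fun i => Measure.pi fun j => μs i j) with hν
  have h1 : ∀ α : Fin r → Fin n → Bool, (ν {α}).toReal =
      pw (fun i => pw (fun j v => (μs i j {v}).toReal)) α := by
    intro α
    rw [hν, Measure.pi_singleton]
    simp only [Measure.pi_singleton, ENNReal.toReal_prod, pw]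
  have h2 : {α | f (execP B π α) = b} =
      ((Finset.univ.filter fun α => f (execP B π α) = b : Finset (Fin r → Fin n → Bool)) : Set _) := by
    ext; simp
  rw [h2]
  have h3 := sum_measureReal_singleton (μ := ν)
    (Finset.univ.filter fun α => f (execP B π α) = b : Finset (Fin r → Fin n → Bool))
  simp only [Measure.real] at h3
  rw [← h3, Finset.sum_filter]
  unfold pr ex
  apply Finset.sum_congr rfl
  intro α _
  rw [h1]
  beta_reduce
  by_cases h : f (execP B π α) = b
  · rw [ind_true h]; simp [h]
  · rw [ind_false h]; simp [h]

theorem IB_ge {n r : ℕ} (μs : Fin r → Fin n → Measure Bool)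
    (hμ : ∀ i j, IsProbabilityMeasure (μs i j))
    (f : (Fin r → Fin n → Bool) → Bool) (B : Finset (Fin n)) (π : Strategy n r B) (b : Bool) :
    pr (pw (fun i => pw (fun j v => (μs i j {v}).toReal))) (fun α => f (execP B π α) = b)
      ≤ IB μs f B b := by
  rw [← IPi_toReal μs hμ]
  unfold IB
  apply ENNReal.toReal_mono
  · refine ne_top_of_le_ne_top ENNReal.one_ne_top (iSup_le fun π => ?_)
    exact prob_le_one
  · exact le_iSup (fun π => IPi μs f B π b) π

theorem isPW_meas (μ : Measure Bool) [IsProbabilityMeasure μ] : IsPW (fun v => (μ {v}).toReal) := by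
  refine ⟨fun _ => ENNReal.toReal_nonneg, ?_⟩
  have h3 := sum_measureReal_singleton (μ := μ) (Finset.univ : Finset Bool)
  simp only [Measure.real] at h3
  rw [h3, Finset.coe_univ, measure_univ]; rfl

theorem growth {X : ℕ} (hX : 8 ≤ X) : bigG X ≤ 2 ^ (2 ^ (2 ^ (2 ^ X))) := by
  have hp1 : 1 ≤ X ^ 10 := Nat.one_le_pow _ _ (by omega)
  obtain ⟨p, hp⟩ : ∃ p, p = 2^34 * X^11 := ⟨_, rfl⟩
  have hpX : 2^34 * X ≤ p := by rw [hp, pow_succ X 10]; nlinarith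
  have hA : bigA X = 2 ^ p := by rw [hp]; rfl
  have h36 : 36 + 11 * X ≤ 2 ^ X := by
    clear hp1 hp hpX hA
    induction X, hX using Nat.le_induction with
    | base => norm_num
    | succ k hk ih => rw [pow_succ]; omega
  have hXX : X < 2 ^ X := Nat.lt_two_pow_self
  have hpp : p < 2 ^ p := Nat.lt_two_pow_self
  have h4p : 2 + 2 * p ≤ 2 ^ (2 ^ X) := by
    calc 2 + 2 * p ≤ 4 * p := by omega
      _ = 2^36 * X^11 := by rw [hp]; ring
      _ ≤ 2^36 * (2^X)^11 := Nat.mul_le_mul_left _ (Nat.pow_le_pow_left hXX.le _)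
      _ = 2 ^ (36 + 11 * X) := by rw [pow_add, ← pow_mul, mul_comm X 11]
      _ ≤ _ := Nat.pow_le_pow_right (by norm_num) h36
  have hexp : 8 + X + (p + X) * 2 ^ p ≤ 2 ^ (2 ^ (2 ^ X)) := by
    calc 8 + X + (p + X) * 2 ^ p ≤ 4 * (p * 2^p) := by
          obtain ⟨q, hq⟩ : ∃ q, q = 2 ^ p := ⟨_, rfl⟩
          rw [← hq] at hpp ⊢
          have h1 : 8 + X ≤ p := by omega
          have h2 : X * q ≤ p * q := Nat.mul_le_mul_right _ (by omega)
          have h3 : p * 1 ≤ p * q := Nat.mul_le_mul_left _ (by omega)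
          rw [add_mul]; omega
      _ ≤ 4 * (2^p * 2^p) := by gcongr
      _ = 2 ^ (2 + 2 * p) := by rw [pow_add, two_mul, pow_add]; norm_num
      _ ≤ _ := Nat.pow_le_pow_right (by norm_num) h4p
  refine le_trans ?_ (Nat.pow_le_pow_right (by norm_num) hexp)
  unfold bigG
  rw [hA, pow_add 2 (8 + X), pow_add 2 8, pow_mul 2 (p+X), pow_add 2 p]
  gcongr
  norm_num

noncomputable def e2 (y : ℝ) : ℝ := 2 ^ y

theorem e2_mono : Monotone e2 := fun a b h => Real.rpow_le_rpow_of_exponent_le (by norm_num) h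

theorem e2_nat (k : ℕ) : e2 k = ((2 ^ k : ℕ) : ℝ) := by
  unfold e2; rw [Real.rpow_natCast]; push_cast; rfl

theorem growth_iter {X : ℕ} (hX : 8 ≤ X) (r : ℕ) :
    8 ≤ bigG^[r] X ∧ ((bigG^[r] X : ℕ) : ℝ) ≤ e2^[4 * r] X := by
  induction r with
  | zero => simp [hX]
  | succ r ih =>
    rw [Function.iterate_succ_apply']
    refine ⟨by have := bigG_ge' (X := bigG^[r] X) (by omega); omega, ?_⟩
    have h1 : ((bigG (bigG^[r] X) : ℕ) : ℝ) ≤ e2^[4] ((bigG^[r] X : ℕ) : ℝ) := by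
      have := growth ih.1
      simp only [Function.iterate_succ, Function.iterate_zero, Function.comp, id]
      rw [e2_nat, e2_nat, e2_nat, e2_nat]
      exact Nat.cast_le.2 this
    refine h1.trans ?_
    rw [show 4 * (r+1) = 4 + 4 * r by ring, Function.iterate_add_apply]
    exact e2_mono.iterate 4 ih.2

theorem iterLog_inv (x : ℝ) (k : ℕ) (h : ∀ j < k, 1 < iterLog j x) : e2^[k] (iterLog k x) = x := by
  induction k with
  | zero => rfl
  | succ k ih =>
    rw [Function.iterate_succ_apply]
    have : e2 (iterLog (k+1) x) = iterLog k x := by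
      show (2:ℝ) ^ (Real.logb 2 (iterLog k x)) = iterLog k x
      exact Real.rpow_logb (b := 2) (by norm_num) (by norm_num) (by linarith [h k (by omega)])
    rw [this]
    exact ih fun j hj => h j (by omega)

theorem sum_bound {X : ℕ} (hX : 8 ≤ X) (r : ℕ) :
    ∑ i ∈ Finset.range r, 1 / ((bigG^[i] X : ℕ) : ℝ) ≤ 2 / X := by
  have hX0 : (0:ℝ) < X := by exact_mod_cast (by omega : 0 < X)
  have h2 : ∀ i, 2 ^ i * X ≤ bigG^[i] X := by
    intro i
    induction i with
    | zero => simp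
    | succ i ih =>
      rw [Function.iterate_succ_apply']
      have := bigG_ge' (X := bigG^[i] X) (by have := (growth_iter hX i).1; omega)
      rw [pow_succ]; nlinarith
  have h3 : ∑ i ∈ Finset.range r, 1 / ((bigG^[i] X : ℕ) : ℝ) ≤
      ∑ i ∈ Finset.range r, (1/2:ℝ)^i * (1/X) := by
    apply Finset.sum_le_sum
    intro i _
    have : ((2 ^ i * X : ℕ) : ℝ) ≤ ((bigG^[i] X : ℕ) : ℝ) := by exact_mod_cast h2 i
    refine (one_div_le_one_div_of_le (by push_cast; positivity) this).trans (le_of_eq ?_)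
    push_cast; rw [one_div_pow, div_mul_div_comm]; norm_num
  refine h3.trans ?_
  rw [← Finset.sum_mul]
  have h4 : ∑ i ∈ Finset.range r, (1/2:ℝ)^i ≤ 2 := by
    exact sum_geometric_two_le r
  have := mul_le_mul_of_nonneg_right h4 (by positivity : (0:ℝ) ≤ 1 / X)
  refine this.trans (le_of_eq (by ring))

theorem pmf_of {Λ : Type} [Fintype Λ] {α : Type} (w : Λ → ℝ) (hw : IsPW w) (B : Λ → α) :
    ∃ ν : PMF α, (∀ a ∈ ν.support, ∃ l, B l = a) ∧
      ∀ S : Set α, (ν.toOuterMeasure S).toReal = pr w (fun l => B l ∈ S) := by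
  classical
  have hs : ∑ l, ENNReal.ofReal (w l) = 1 := by
    rw [← ENNReal.ofReal_sum_of_nonneg (fun i _ => hw.1 i), hw.2]; simp
  refine ⟨(PMF.ofFintype _ hs).map B, ?_, ?_⟩
  · intro a ha
    rw [PMF.mem_support_map_iff] at ha
    obtain ⟨l, _, hl⟩ := ha
    exact ⟨l, hl⟩
  · intro S
    rw [PMF.toOuterMeasure_map_apply, PMF.toOuterMeasure_ofFintype_apply, tsum_fintype, ENNReal.toReal_sum]
    · unfold pr ex
      apply Finset.sum_congr rfl
      intro l _
      beta_reduce
      by_cases h : B l ∈ S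
      · rw [ind_true h, Set.indicator_of_mem (by exact h), ENNReal.toReal_ofReal (hw.1 l), mul_one]
      · rw [ind_false h, Set.indicator_of_notMem (by exact h)]; simp
    · intro l _
      by_cases h : B l ∈ S
      · rw [Set.indicator_of_mem (by exact h)]; exact ENNReal.ofReal_ne_top
      · rw [Set.indicator_of_notMem (by exact h)]; simp

end Final
/-- detailed multi-round theorem: for `m = ⌈C_ε·n·r·4^r/log^{(4r)} n⌉` there is a
distribution `ν` on coalitions of size at most `m`, depending only on `μ` and not on the
protocol, such that for every protocol `f` there is `b ∈ {0,1}` with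
`Pr_{B∼ν}[I_B^b(f) ≥ 1 − ε] ≥ (c_ε/(log(1/ε)+r))^r / n`. -/
theorem multi_round_random_coalition :
    ∀ ε : ℝ, 0 < ε → ε ≤ 1/2 →
    ∃ C c : ℝ, C > 0 ∧ c > 0 ∧
    ∃ n₀ : ℕ, ∀ n : ℕ, n₀ ≤ n →
    ∀ r : ℕ, 1 ≤ r → (r : ℝ) < (logStar n : ℝ) / 5 →
    ∀ μs : Fin r → Fin n → Measure Bool, (∀ i j, IsProbabilityMeasure (μs i j)) →
    ∃ ν : PMF (Finset (Fin n)),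
      (∀ B ∈ ν.support, B.card ≤ ⌈C * n * r * 4 ^ r / iterLog (4 * r) n⌉₊) ∧
      ∀ f : (Fin r → Fin n → Bool) → Bool,
      ∃ b : Bool,
        (ν.toOuterMeasure {B | IB μs f B b ≥ 1 - ε}).toReal
          ≥ (c / (Real.logb 2 (1/ε) + r)) ^ r / n := by
  intro ε hε hε2
  refine ⟨9 + 8 / ε, 1, by positivity, one_pos, 1, ?_⟩
  intro n hn r hr hlog μs hμ
  have hn1 : (1:ℝ) ≤ n := by exact_mod_cast hn
  have hr1 : (1:ℝ) ≤ r := by exact_mod_cast hr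
  have h16 : 16 ≤ 8 / ε := by rw [le_div_iff₀ hε]; linarith
  have hLgt : ∀ j ≤ 4 * r, 1 < iterLog j n := by
    intro j hj
    have h5 : j < logStar n := by
      have : (5 * r : ℝ) < logStar n := by linarith
      have : 5 * r < logStar n := by exact_mod_cast this
      omega
    have := Nat.notMem_of_lt_sInf h5
    simpa using this
  have hinv := iterLog_inv n (4 * r) (fun j hj => hLgt j hj.le)
  have hL1 := hLgt (4 * r) le_rfl
  set L := iterLog (4 * r) n with hL
  have hL0 : 0 < L := by linarith
  have hprob : (1 / (Real.logb 2 (1/ε) + r)) ^ r / n ≤ 1 / (n:ℝ) := by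
    have h0 : 0 ≤ Real.logb 2 (1/ε) := Real.logb_nonneg (by norm_num) (by
      rw [le_div_iff₀ hε]; linarith)
    have h1 : 1 / (Real.logb 2 (1/ε) + r) ≤ 1 := by rw [div_le_one (by linarith)]; linarith
    have : (1 / (Real.logb 2 (1/ε) + r)) ^ r ≤ 1 := pow_le_one₀ (by positivity) h1
    gcongr
  have hm : (9 + 8 / ε) * n / L ≤ (9 + 8 / ε) * n * r * 4 ^ r / L := by
    have h4 : (1:ℝ) ≤ 4 ^ r := one_le_pow₀ (by norm_num)
    have h5 : (1:ℝ) ≤ r * 4 ^ r := by nlinarith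
    have h6 : 0 ≤ (9 + 8 / ε) * n := by positivity
    rw [mul_assoc ((9 + 8 / ε) * n)]
    apply div_le_div_of_nonneg_right _ hL0.le
    nlinarith
  have hws : ∀ i j, IsPW (fun v => (μs i j {v}).toReal) := fun i j => by
    have := hμ i j; exact isPW_meas _
  have hPW : IsPW (pw (fun i => pw (fun j v => (μs i j {v}).toReal))) :=
    isPW_pw fun i => isPW_pw (hws i)
  by_cases hcase : L < 9 + 8 / ε
  · obtain ⟨ν, h1, h2⟩ := pmf_of (fun _ : Unit => (1:ℝ)) ⟨fun _ => by norm_num, by simp⟩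
      (fun _ => (Finset.univ : Finset (Fin n)))
    refine ⟨ν, ?_, fun f => ⟨f (fun _ _ => false), ?_⟩⟩
    · intro B _
      have h3 : (n:ℝ) ≤ (9 + 8 / ε) * n / L := by
        rw [le_div_iff₀ hL0]; nlinarith
      have h4 : B.card ≤ n := by simpa using Finset.card_le_univ B
      refine h4.trans ?_
      exact_mod_cast (h3.trans hm).trans (Nat.le_ceil _)
    · rw [h2]
      refine hprob.trans ?_
      have h5 : IB μs f Finset.univ (f (fun _ _ => false)) ≥ 1 - ε := by
        refine le_trans ?_ (IB_ge μs hμ f Finset.univ (fun _ _ _ => false) _)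
        have : ∀ α, execP Finset.univ (fun _ _ _ => false : Strategy n r Finset.univ) α
            = fun _ _ => false := by
          intro α; ext i j; simp [execP]
        simp only [this, pr]
        rw [ind_true trivial, ex_const hPW]
        linarith
      have h6 : pr (fun _ : Unit => (1:ℝ)) (fun _ => (Finset.univ : Finset (Fin n)) ∈
          {B | IB μs f B (f (fun _ _ => false)) ≥ 1 - ε}) = 1 := by
        have h7 : ind ((Finset.univ : Finset (Fin n)) ∈
          {B | IB μs f B (f (fun _ _ => false)) ≥ 1 - ε}) = 1 := ind_true h5
        unfold pr
        beta_reduce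
        rw [h7]
        exact ex_const ⟨fun _ => by norm_num, by simp⟩ 1
      rw [h6, div_le_one (by linarith)]; exact hn1
  · push Not at hcase
    obtain ⟨X, hXdef⟩ : ∃ X, X = ⌊L⌋₊ := ⟨_, rfl⟩
    have hX1 : (X:ℝ) ≤ L := by rw [hXdef]; exact Nat.floor_le hL0.le
    have hX2 : L < X + 1 := by rw [hXdef]; exact Nat.lt_floor_add_one L
    have hX8 : 8 ≤ X := by
      have : (8:ℝ) < X := by linarith
      exact_mod_cast this.le
    have hX0 : (0:ℝ) < X := by linarith
    have hXL : L ≤ 2 * X := by linarith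
    have hGn : bigG^[r] X ≤ n := by
      have h1 := (growth_iter hX8 r).2
      have h2 := (e2_mono.iterate (4 * r)) hX1
      rw [hinv] at h2
      exact_mod_cast h1.trans h2
    obtain ⟨Λ, _, w, B, hw, hsz, hf⟩ := multi X (by omega) r (fun i j v => (μs i j {v}).toReal) hws hGn
    obtain ⟨ν, h1, h2⟩ := pmf_of w hw B
    have hsb := sum_bound hX8 r
    have hsum : ∀ c : ℝ, 0 ≤ c → ∑ i ∈ Finset.range r, c / ((bigG^[i] X : ℕ) : ℝ) ≤ 4 * c / L := by
      intro c hc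
      have e1 : ∑ i ∈ Finset.range r, c / ((bigG^[i] X : ℕ) : ℝ)
          = c * ∑ i ∈ Finset.range r, 1 / ((bigG^[i] X : ℕ) : ℝ) := by
        rw [Finset.mul_sum]; apply Finset.sum_congr rfl; intros; ring
      rw [e1]
      have e2 : 2 / (X:ℝ) ≤ 4 / L := by
        rw [div_le_div_iff₀ hX0 hL0]; linarith
      calc _ ≤ c * (4 / L) := mul_le_mul_of_nonneg_left (hsb.trans e2) hc
        _ = _ := by ring
    have herr : ∑ i ∈ Finset.range r, 2 / ((bigG^[i] X : ℕ) : ℝ) ≤ ε := by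
      refine (hsum 2 (by norm_num)).trans ?_
      rw [div_le_iff₀ hL0]
      have : ε * (9 + 8 / ε) ≤ ε * L := mul_le_mul_of_nonneg_left hcase hε.le
      have e1 : ε * (9 + 8 / ε) = 9 * ε + 8 := by field_simp
      linarith
    refine ⟨ν, ?_, fun f => ?_⟩
    · intro B' hB'
      obtain ⟨l, rfl⟩ := h1 B' hB'
      have h3 : ((B l).card : ℝ) ≤ (9 + 8 / ε) * n / L := by
        refine (hsz l).trans ((hsum (4 * n) (by positivity)).trans ?_)
        apply div_le_div_of_nonneg_right _ hL0.le
        nlinarith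
      exact_mod_cast (h3.trans hm).trans (Nat.le_ceil _)
    · obtain ⟨b, hb⟩ := hf f
      refine ⟨b, ?_⟩
      rw [h2]
      refine hprob.trans (le_trans ?_ (hb.trans (pr_mono hw ?_)))
      · apply one_div_le_one_div_of_le
        · have := (growth_iter hX8 r).1
          exact_mod_cast (by omega : 0 < bigG^[r] X)
        · exact_mod_cast hGn
      · intro l hl
        obtain ⟨π, hπ⟩ := strat (fun i => by positivity) (B l) b r _ hws f (by linarith) hl
        have := hπ.trans (IB_ge μs hμ f (B l) π b)
        show IB μs f (B l) b ≥ 1 - ε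
        linarith
end

section
/- There is a universal constant C > 0 such that the following holds. Let μ be an arbitrary probability measure on {0,1}^n, let R be a set, let f : {0,1}^n → R, let b ∈ R, let t ≥ 1 be an integer, let ε ∈ (0,1/2] and δ ∈ (0,1/2], and let k be an integer with k ≥ C·(t/δ)·log(2t/ε). Suppose that at least one of the following holds: (Case I) there exists s ≤ t such that Pr_{u∼μ^(s)}[ Pr_{v∼μ^(t)}[ f(u ∨ v) = b ] ≥ 1 − ε/2 ] ≥ δ; (Case II) for every s ≤ t, Pr_{u∼μ^(s)}[ Pr_{v∼μ^(t)}[ f(u ∨ v) = b ] ≥ δ ] ≥ 1 − ε/2. Then Pr_{S∼μ^(k)}[ for all ℓ ≤ t, I_S^{b,ℓ}(f) ≥ 1 − ε ] ≥ 1 − ε. -/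
open MeasureTheory

/-- Influence of coalition `S` towards value `b`. -/
noncomputable def infl {ι : Type*} {α : Type*} (μ : Measure (ι → Bool))
    (f : (ι → Bool) → α) (S : Finset ι) (b : α) : ℝ :=
  (μ {x | ∃ y, (∀ j ∉ S, y j = x j) ∧ f y = b}).toReal

/-- The boosted measure `μ^(t)`: the distribution of `x¹ ∨ ⋯ ∨ xᵗ` for i.i.d. `xⁱ ∼ μ`. -/
noncomputable def boost {n : ℕ} (μ : Measure (Fin n → Bool)) (t : ℕ) :
    Measure (Fin n → Bool) :=
  (Measure.pi fun _ : Fin t => μ).map (fun xs i => Finset.univ.sup fun j => xs j i)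

/-- The support of `x ∈ {0,1}^n` viewed as a subset of `[n]`. -/
def supp {n : ℕ} (x : Fin n → Bool) : Finset (Fin n) :=
  Finset.univ.filter fun i => x i = true

/-- Coordinatewise OR. -/
def orv {n : ℕ} (x y : Fin n → Bool) : Fin n → Bool := fun i => x i || y i

/-- The boosted influence `I_S^{b,t}(f)` of coalition `S` towards `b`,
measured with respect to `μ^(t)`. -/
noncomputable def inflB {n : ℕ} {α : Type*} (μ : Measure (Fin n → Bool))
    (f : (Fin n → Bool) → α) (S : Finset (Fin n)) (b : α) (t : ℕ) : ℝ :=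
  infl (boost μ t) f S b

section aux
variable {n : ℕ}

lemma orv_assoc' (x y z : Fin n → Bool) : orv (orv x y) z = orv x (orv y z) := by
  funext i; simp [orv, Bool.or_assoc]

instance boost_prob (μ : Measure (Fin n → Bool)) [IsProbabilityMeasure μ] (t : ℕ) :
    IsProbabilityMeasure (boost μ t) := by
  unfold boost
  exact Measure.isProbabilityMeasure_map (Measurable.of_discrete).aemeasurable

lemma boost_int (μ : Measure (Fin n → Bool)) [IsProbabilityMeasure μ] (t : ℕ)
    (g : (Fin n → Bool) → ℝ) : Integrable g (boost μ t) := Integrable.of_finite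

lemma E_zero (μ : Measure (Fin n → Bool)) [IsProbabilityMeasure μ]
    (g : (Fin n → Bool) → ℝ) : ∫ x, g x ∂boost μ 0 = g (fun _ => false) := by
  unfold boost
  rw [integral_map (Measurable.of_discrete).aemeasurable
    (Measurable.of_discrete).aestronglyMeasurable]
  simp

lemma E_succ (μ : Measure (Fin n → Bool)) [IsProbabilityMeasure μ] (t : ℕ)
    (g : (Fin n → Bool) → ℝ) :
    ∫ x, g x ∂boost μ (t+1) = ∫ x, ∫ y, g (orv x y) ∂boost μ t ∂μ := by
  unfold boost
  rw [integral_map (Measurable.of_discrete).aemeasurable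
    (Measurable.of_discrete).aestronglyMeasurable]
  have h := measurePreserving_piFinSuccAbove (n := t) (fun _ => μ) 0
  have h2 := h.symm.integral_comp (MeasurableEquiv.measurableEmbedding _)
    (fun xs : Fin (t+1) → Fin n → Bool => g (fun i => Finset.univ.sup fun j => xs j i))
  rw [← h2, integral_prod _ Integrable.of_finite]
  refine integral_congr_ae (Filter.Eventually.of_forall fun x => ?_)
  simp only
  rw [integral_map (Measurable.of_discrete).aemeasurable
    (Measurable.of_discrete).aestronglyMeasurable]
  refine integral_congr_ae (Filter.Eventually.of_forall fun y => ?_)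
  simp only
  congr 1
  funext i
  simp only [MeasurableEquiv.piFinSuccAbove, Fin.univ_succ]
  simp [orv, Finset.sup_map, Function.comp_def]

lemma E_add (μ : Measure (Fin n → Bool)) [IsProbabilityMeasure μ] (a c : ℕ) :
    ∀ (g : (Fin n → Bool) → ℝ),
    ∫ x, g x ∂boost μ (a+c) = ∫ x, ∫ y, g (orv x y) ∂boost μ c ∂boost μ a := by
  induction a with
  | zero =>
    intro g
    rw [E_zero, Nat.zero_add]
    have : ∀ y : Fin n → Bool, orv (fun _ => false) y = y := fun y => by funext i; simp [orv]
    simp only [this]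
  | succ a ih =>
    intro g
    rw [show a + 1 + c = (a + c) + 1 by omega, E_succ, E_succ]
    simp only [ih, orv_assoc']

lemma P_eq (μ : Measure (Fin n → Bool)) (t : ℕ) (A : Set (Fin n → Bool)) :
    (boost μ t).real A = ∫ x, A.indicator 1 x ∂boost μ t :=
  (integral_indicator_one (MeasurableSet.of_discrete)).symm

lemma P_add (μ : Measure (Fin n → Bool)) [IsProbabilityMeasure μ] (a c : ℕ)
    (A : Set (Fin n → Bool)) :
    (boost μ (a+c)).real A = ∫ u, (boost μ c).real {v | orv u v ∈ A} ∂boost μ a := by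
  rw [P_eq, E_add]
  simp only [P_eq]
  rfl

lemma P_swap (μ : Measure (Fin n → Bool)) [IsProbabilityMeasure μ] (a c : ℕ)
    (Q : (Fin n → Bool) → (Fin n → Bool) → Prop) :
    ∫ u, (boost μ c).real {v | Q u v} ∂boost μ a = ∫ v, (boost μ a).real {u | Q u v} ∂boost μ c := by
  simp only [P_eq]
  rw [integral_integral_swap Integrable.of_finite]
  rfl

lemma q_block (μ : Measure (Fin n → Bool)) [IsProbabilityMeasure μ] (r j : ℕ)
    (A : Set (Fin n → Bool)) (m : ℕ) :
    (boost μ (r*m+j)).real {x | ∀ a ∈ A, ¬ a ≤ x} ≤ (1 - (boost μ r).real A)^m := by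
  induction m with
  | zero => simpa using measureReal_le_one
  | succ m ih =>
    rw [show r*(m+1)+j = r + (r*m+j) by ring, P_add]
    set B := {x | ∀ a ∈ A, ¬ a ≤ x} with hB
    have h1 : ∀ u, (boost μ (r*m+j)).real {v | orv u v ∈ B} ≤
        Aᶜ.indicator 1 u * (boost μ (r*m+j)).real B := by
      intro u
      by_cases hu : u ∈ A
      · have : {v | orv u v ∈ B} = ∅ := by
          ext v
          simp only [hB, Set.mem_setOf_eq, Set.mem_empty_iff_false, iff_false]
          intro h
          exact h u hu (fun i => by simp only [orv]; cases u i <;> simp)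
        simp [this, hu]
      · simp only [Set.indicator_of_mem (show u ∈ Aᶜ from hu), Pi.one_apply, one_mul]
        refine measureReal_mono ?_
        intro v hv a ha hav
        exact hv a ha (fun i => (hav i).trans (by simp only [orv]; cases v i <;> simp))
    calc _ ≤ ∫ u, Aᶜ.indicator 1 u * (boost μ (r*m+j)).real B ∂boost μ r :=
          integral_mono (boost_int _ _ _) (boost_int _ _ _) h1
      _ = (1 - (boost μ r).real A) * (boost μ (r*m+j)).real B := by
          rw [integral_mul_const, ← P_eq, probReal_compl_eq_one_sub MeasurableSet.of_discrete]
      _ ≤ _ := by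
          rw [pow_succ']
          exact mul_le_mul_of_nonneg_left ih (by linarith [measureReal_le_one (μ := boost μ r) (s := A)])

lemma q_block' (μ : Measure (Fin n → Bool)) [IsProbabilityMeasure μ] (r m k : ℕ) (h : r * m ≤ k)
    (A : Set (Fin n → Bool)) :
    (boost μ k).real {x | ∀ a ∈ A, ¬ a ≤ x} ≤ (1 - (boost μ r).real A)^m := by
  obtain ⟨j, rfl⟩ := Nat.exists_eq_add_of_le h
  exact q_block μ r j A m

lemma supp_agree {u a x : Fin n → Bool} (h : a ≤ x) : ∀ j ∉ supp x, orv a u j = u j := by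
  intro j hj
  have hj' : x j = false := by simpa [supp] using hj
  have := h j
  rw [hj'] at this
  simp [orv, Bool.eq_false_of_le_false this]

lemma infl_ge_s9 (μ : Measure (Fin n → Bool)) [IsProbabilityMeasure μ] {R : Type}
    (f : (Fin n → Bool) → R) (b : R) (l : ℕ) (x : Fin n → Bool) :
    inflB μ f (supp x) b l = (boost μ l).real {u | ∃ y, (∀ j ∉ supp x, y j = u j) ∧ f y = b} := rfl

lemma orv_comm' (x y : Fin n → Bool) : orv x y = orv y x := by
  funext i; simp [orv, Bool.or_comm]

lemma num_lemma (t k : ℕ) (ht : 1 ≤ t) (ε δ : ℝ) (h0 : 0 < ε) (h1 : ε ≤ 1/2) (d0 : 0 < δ)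
    (d1 : δ ≤ 1/2) (hk : (k : ℝ) ≥ 16 * ((t : ℝ)/δ) * Real.logb 2 (2*t/ε))
    (p : ℝ) (hp : δ/2 ≤ p) (hp1 : p ≤ 1) :
    (1 - p)^(k/(2*t)) ≤ (ε/(2*t))^2 := by
  have ht' : (1:ℝ) ≤ t := by exact_mod_cast ht
  set L := Real.log (2*t/ε) with hL
  have hx : (4:ℝ) ≤ 2*t/ε := by rw [le_div_iff₀ h0]; nlinarith
  have hL1 : 1 ≤ L := by
    rw [hL, Real.le_log_iff_exp_le (by linarith)]
    linarith [Real.exp_one_lt_d9]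
  have hlb : L ≤ Real.logb 2 (2*t/ε) := by
    rw [Real.logb, le_div_iff₀ (Real.log_pos (by norm_num))]
    nlinarith [Real.log_two_lt_d9]
  set m := k/(2*t) with hm
  have hmk : (k:ℝ) < 2*t*(m+1) := by
    have := Nat.lt_mul_div_succ k (show 0 < 2*t by omega)
    rw [← hm] at this
    exact_mod_cast this
  have hk2 : 16 * ((t : ℝ)/δ) * L ≤ k := le_trans (by gcongr) hk
  have hkd : 16 * t * L ≤ k * δ := by
    have : 16 * ((t : ℝ)/δ) * L = 16 * t * L / δ := by ring
    rw [this, div_le_iff₀ d0] at hk2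
    exact hk2
  have h3 : 8 * L ≤ (m+1) * δ := by
    have : 16 * t * L ≤ 2*t*(m+1)*δ := hkd.trans (by gcongr)
    have h5 : (2*(t:ℝ)) * (8*L) ≤ (2*t) * ((m+1)*δ) := by nlinarith
    exact le_of_mul_le_mul_left h5 (by linarith)
  have h4 : 2 * L ≤ m * p := by
    have : (m:ℝ) * (δ/2) ≤ m * p := by gcongr
    nlinarith
  calc (1-p)^m ≤ (Real.exp (-p))^m := by
        refine pow_le_pow_left₀ (by linarith) ?_ m
        linarith [Real.add_one_le_exp (-p)]
    _ = Real.exp (-(m*p)) := by rw [← Real.exp_nat_mul]; ring_nf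
    _ ≤ Real.exp (-(2*L)) := by gcongr
    _ = (Real.exp (-L))^2 := by rw [← Real.exp_nat_mul]; push_cast; ring_nf
    _ = _ := by rw [Real.exp_neg, hL, Real.exp_log (by linarith), inv_div]

lemma caseI (μ : Measure (Fin n → Bool)) [IsProbabilityMeasure μ] {R : Type}
    (f : (Fin n → Bool) → R) (b : R) (t s l k m : ℕ) (hst : s ≤ t) (hl : l ≤ t)
    (ε δ η : ℝ) (h0 : 0 < ε) (hmk : 2*t*m ≤ k)
    (hη : ∀ p : ℝ, δ/2 ≤ p → p ≤ 1 → (1-p)^m ≤ η)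
    (h : (boost μ s).real {u | (boost μ t).real {v | f (orv u v) = b} ≥ 1 - ε/2} ≥ δ) :
    (boost μ k).real {x | ¬ (inflB μ f (supp x) b l ≥ 1 - ε)} ≤ η := by
  set A := {z | (boost μ l).real {x | f (orv z x) = b} ≥ 1 - ε} with hA
  set G := {u | (boost μ t).real {v | f (orv u v) = b} ≥ 1 - ε/2} with hG
  have h1 : δ/2 ≤ (boost μ (s + (t-l))).real A := by
    rw [P_add]
    have h2 : ∀ u, G.indicator 1 u * (1/2 : ℝ) ≤ (boost μ (t-l)).real {w | orv u w ∈ A} := by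
      intro u
      by_cases hu : u ∈ G
      · simp only [Set.indicator_of_mem hu, Pi.one_apply, one_mul]
        have h3 : 1 - ε/2 ≤ (boost μ t).real {v | f (orv u v) = b} := hu
        rw [show t = (t-l) + l by omega, P_add] at h3
        set D := {w | orv u w ∈ A} with hD
        have h4 : ∀ w, (boost μ l).real {v | orv w v ∈ {v | f (orv u v) = b}} ≤
            1 - Dᶜ.indicator 1 w * ε := by
          intro w
          by_cases hw : w ∈ D
          · simpa [hw] using measureReal_le_one
          · simp only [Set.indicator_of_mem (show w ∈ Dᶜ from hw), Pi.one_apply, one_mul]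
            have : ¬ ((boost μ l).real {x | f (orv (orv u w) x) = b} ≥ 1 - ε) := hw
            simp only [orv_assoc'] at this
            exact (not_le.mp this).le
        have h5 := integral_mono (boost_int μ (t-l) _) (boost_int μ (t-l) _) h4
        rw [integral_sub (boost_int _ _ _) (boost_int _ _ _), integral_mul_const, ← P_eq,
          probReal_compl_eq_one_sub MeasurableSet.of_discrete] at h5
        simp only [integral_const, probReal_univ, one_smul] at h5
        have h6 := h3.trans h5
        nlinarith
      · simp [hu]
    have h7 := integral_mono (boost_int μ s _) (boost_int μ s _) h2
    rw [integral_mul_const, ← P_eq] at h7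
    linarith
  refine le_trans ?_ ((q_block' μ (s+(t-l)) m k (le_trans (by gcongr; omega) hmk) A).trans
    (hη _ h1 measureReal_le_one))
  refine measureReal_mono ?_
  intro x hx a ha hax
  apply hx
  rw [infl_ge_s9]
  refine le_trans (show 1 - ε ≤ _ from ha) (measureReal_mono ?_)
  intro u hu
  exact ⟨orv a u, supp_agree hax, hu⟩

lemma caseII (μ : Measure (Fin n → Bool)) [IsProbabilityMeasure μ] {R : Type}
    (f : (Fin n → Bool) → R) (b : R) (t l k m : ℕ)
    (ε δ η : ℝ) (h0 : 0 < ε) (d0 : 0 < δ) (hmk : 2*t*m ≤ k)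
    (hη : ∀ p : ℝ, δ/2 ≤ p → p ≤ 1 → (1-p)^m ≤ η) (hη0 : 0 ≤ η)
    (h : (boost μ l).real {u | (boost μ t).real {v | f (orv u v) = b} ≥ δ} ≥ 1 - ε/2) :
    (boost μ k).real {x | ¬ (inflB μ f (supp x) b l ≥ 1 - ε)} * (ε/2) ≤ η := by
  set G := {u | (boost μ t).real {v | f (orv u v) = b} ≥ δ} with hG
  set B := {x | ¬ (inflB μ f (supp x) b l ≥ 1 - ε)} with hB
  have h1 : ∀ x, B.indicator 1 x * (ε/2) ≤
      (boost μ l).real {u | u ∈ G ∧ ∀ a ∈ {a | f (orv u a) = b}, ¬ a ≤ x} := by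
    intro x
    by_cases hx : x ∈ B
    · simp only [Set.indicator_of_mem hx, Pi.one_apply, one_mul]
      have h2 : inflB μ f (supp x) b l < 1 - ε := not_le.mp hx
      rw [infl_ge_s9] at h2
      have h3 : G ⊆ {u | u ∈ G ∧ ∀ a ∈ {a | f (orv u a) = b}, ¬ a ≤ x} ∪
          {u | ∃ y, (∀ j ∉ supp x, y j = u j) ∧ f y = b} := by
        intro u hu
        by_cases hh : ∀ a ∈ {a | f (orv u a) = b}, ¬ a ≤ x
        · exact Or.inl ⟨hu, hh⟩
        · push Not at hh
          obtain ⟨a, ha, hax⟩ := hh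
          refine Or.inr ⟨orv a u, supp_agree hax, ?_⟩
          rw [orv_comm']; exact ha
      have h4 := (measureReal_mono (μ := boost μ l) h3).trans (measureReal_union_le _ _)
      linarith
    · simp [hx]
  have h2 := integral_mono (boost_int μ k _) (boost_int μ k _) h1
  rw [integral_mul_const, ← P_eq, P_swap μ k l
    (fun x u => u ∈ G ∧ ∀ a ∈ {a | f (orv u a) = b}, ¬ a ≤ x)] at h2
  refine h2.trans ?_
  have h3 : ∀ u, (boost μ k).real {x | u ∈ G ∧ ∀ a ∈ {a | f (orv u a) = b}, ¬ a ≤ x} ≤ η := by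
    intro u
    by_cases hu : u ∈ G
    · have hu' : δ ≤ (boost μ t).real {v | f (orv u v) = b} := hu
      simp only [hu, true_and]
      exact (q_block' μ t m k (by nlinarith) _).trans (hη _ (by linarith) measureReal_le_one)
    · simpa [hu] using hη0
  have h4 := integral_mono (boost_int μ l _) (boost_int μ l _) h3
  simpa using h4

end aux

/-- Lemma: Case I / Case II for general ranges: if Case I or Case II holds for
`b`, then with probability `≥ 1 - ε` a random coalition `S ∼ μ^(k)` satisfies
`I_S^{b,ℓ}(f) ≥ 1 - ε` simultaneously for all `1 ≤ ℓ ≤ t`. -/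
theorem case_I_II_lemma :
    ∃ C : ℝ, C > 0 ∧
      ∀ n : ℕ, ∀ μ : Measure (Fin n → Bool), IsProbabilityMeasure μ →
      ∀ (R : Type) (f : (Fin n → Bool) → R) (b : R),
      ∀ t : ℕ, 1 ≤ t →
      ∀ ε δ : ℝ, 0 < ε → ε ≤ 1/2 → 0 < δ → δ ≤ 1/2 →
      ∀ k : ℕ, (k : ℝ) ≥ C * ((t : ℝ)/δ) * Real.logb 2 (2*t/ε) →
      -- Case I
      ((∃ s : ℕ, 1 ≤ s ∧ s ≤ t ∧
          ((boost μ s) {u | ((boost μ t) {v | f (orv u v) = b}).toReal ≥ 1 - ε/2}).toReal ≥ δ) ∨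
      -- Case II
       (∀ s : ℕ, 1 ≤ s → s ≤ t →
          ((boost μ s) {u | ((boost μ t) {v | f (orv u v) = b}).toReal ≥ δ}).toReal ≥ 1 - ε/2)) →
      ((boost μ k) {x | ∀ ℓ : ℕ, 1 ≤ ℓ → ℓ ≤ t → inflB μ f (supp x) b ℓ ≥ 1 - ε}).toReal
        ≥ 1 - ε := by
  refine ⟨16, by norm_num, ?_⟩
  intro n μ hμ R f b t ht ε δ h0 h1 d0 d1 k hk hcase
  have ht' : (1:ℝ) ≤ t := by exact_mod_cast ht
  have hη := num_lemma t k ht ε δ h0 h1 d0 d1 hk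
  have hmk : 2*t*(k/(2*t)) ≤ k := Nat.mul_div_le k (2*t)
  set q := ε/(2*t) with hq
  have hqt : q * (2*t) = ε := by rw [hq]; field_simp
  have hq0 : 0 < q := by positivity
  have key : ∀ l ∈ Finset.Icc 1 t,
      (boost μ k).real {x | ¬ (inflB μ f (supp x) b l ≥ 1 - ε)} ≤ ε/t := by
    intro l hl
    rw [Finset.mem_Icc] at hl
    have e1 : ε/t = 2*q := by rw [hq]; field_simp
    rw [e1]
    have hq1 : q ≤ 1 := by nlinarith
    rcases hcase with ⟨s, hs1, hs, h⟩ | h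
    · refine (caseI μ f b t s l k _ hs hl.2 ε δ _ h0 hmk hη h).trans ?_
      nlinarith
    · have := caseII μ f b t l k _ ε δ _ h0 d0 hmk hη (by positivity) (h l hl.1 hl.2)
      have hqe : q ≤ ε / 2 := by nlinarith
      have h5 : (boost μ k).real {x | ¬ (inflB μ f (supp x) b l ≥ 1 - ε)} * (ε/2) ≤
          q * (ε/2) := this.trans (by nlinarith)
      have h6 := le_of_mul_le_mul_right h5 (by linarith)
      linarith
  set W := {x | ∀ ℓ : ℕ, 1 ≤ ℓ → ℓ ≤ t → inflB μ f (supp x) b ℓ ≥ 1 - ε} with hW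
  have hc : (boost μ k).real Wᶜ ≤ ε := by
    have hsub : Wᶜ ⊆ ⋃ l ∈ Finset.Icc 1 t, {x | ¬ (inflB μ f (supp x) b l ≥ 1 - ε)} := by
      intro x hx
      simp only [hW, Set.mem_compl_iff, Set.mem_setOf_eq, not_forall] at hx
      obtain ⟨l, h1, h2, h3⟩ := hx
      simp only [Set.mem_iUnion]
      exact ⟨l, Finset.mem_Icc.mpr ⟨h1, h2⟩, h3⟩
    calc _ ≤ _ := measureReal_mono hsub (measure_ne_top _ _)
      _ ≤ _ := measureReal_biUnion_finset_le _ _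
      _ ≤ ∑ l ∈ Finset.Icc 1 t, ε/t := Finset.sum_le_sum key
      _ = ε := by simp; field_simp
  rw [probReal_compl_eq_one_sub MeasurableSet.of_discrete] at hc
  change (boost μ k).real W ≥ 1 - ε
  linarith
end

section
/- There is a universal constant C > 0 such that the following holds. Let ε ∈ (0,1/2], δ ∈ (0,1/2], let r ≥ ℓ ≥ 1 be integers, and let g : ({0,1}^n)^ℓ → {0,1} be an ℓ-round coin-flipping protocol in which round i is endowed with a product measure μ_i on {0,1}^n. Suppose D is a probability distribution on subsets of [n] such that for every (ℓ−1)-round protocol g' : ({0,1}^n)^{ℓ−1} → {0,1} over μ_2 × ... × μ_ℓ there exists b' ∈ {0,1} with Pr_{T∼D}[ I_{T}^{b'}(g') ≥ 1 − ε/2^{r−ℓ+1} ] ≥ δ. Then there exists b ∈ {0,1} such that for every integer k ≥ C·ε^{-3}·4^{r−ℓ}·log(2r)·log(2/δ)·log log(4/δ), taking S ∼ μ_1^{(k)} and T ∼ D independently, Pr_{S,T}[ I_{S∪T}^b(g) ≥ 1 − ε/2^{r−ℓ} ] ≥ δ/(4·log(1/ε) + 4r). -/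
open MeasureTheory
open scoped ENNReal

theorem aux_pi_map_inj {ι κ X : Type*} [Fintype ι] [Fintype κ] [MeasurableSpace X]
    (μ : Measure X) [IsProbabilityMeasure μ] (e : ι → κ) (he : Function.Injective e) :
    (Measure.pi fun _ : κ => μ).map (fun x i => x (e i)) = Measure.pi fun _ : ι => μ := by
  classical
  symm
  refine Measure.pi_eq fun s hs => ?_
  rw [Measure.map_apply (by fun_prop) (MeasurableSet.univ_pi hs)]
  have : (fun (x : κ → X) i => x (e i)) ⁻¹' (Set.univ.pi s)
      = Set.univ.pi (fun k => ⋂ i, ⋂ (_ : e i = k), s i) := by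
    ext x
    simp only [Set.mem_preimage, Set.mem_univ_pi, Set.mem_iInter]
    constructor
    · rintro h k i rfl; exact h i
    · intro h i; exact h _ i rfl
  rw [this, Measure.pi_pi]
  rw [← Finset.prod_subset (Finset.subset_univ (Finset.univ.image e))]
  · rw [Finset.prod_image (fun a _ b _ h => he h)]
    refine Finset.prod_congr rfl fun i _ => ?_
    congr 1
    ext y
    simp only [Set.mem_iInter]
    constructor
    · intro h; exact h i rfl
    · intro h j hj; rw [he hj]; exact h
  · intro k _ hk
    have : (⋂ i, ⋂ (_ : e i = k), s i) = Set.univ := by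
      ext y
      simp only [Set.mem_iInter, Set.mem_univ, iff_true]
      intro i hi
      exact absurd (Finset.mem_image.2 ⟨i, Finset.mem_univ _, hi⟩) hk
    rw [this, measure_univ]

def auxMerge {n r : ℕ} (B : Finset (Fin n)) (c α : Fin r → Fin n → Bool) :
    Fin r → Fin n → Bool := fun i j => if j ∈ B then c i j else α i j

theorem aux_merge_map {n r : ℕ} (μs : Fin r → Fin n → Measure Bool)
    [∀ i j, IsProbabilityMeasure (μs i j)] (B : Finset (Fin n)) :
    ((Measure.pi fun i => Measure.pi fun j => μs i j).prod
      (Measure.pi fun i => Measure.pi fun j => μs i j)).map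
        (fun p => auxMerge B p.1 p.2) = Measure.pi fun i => Measure.pi fun j => μs i j := by
  refine Measure.ext_of_singleton fun a => ?_
  rw [Measure.map_apply (measurable_of_finite _) (measurableSet_singleton _)]
  have : (fun p : (Fin r → Fin n → Bool) × (Fin r → Fin n → Bool) => auxMerge B p.1 p.2) ⁻¹' {a}
      = (Set.univ.pi fun i => Set.univ.pi fun j => if j ∈ B then {a i j} else Set.univ) ×ˢ
        (Set.univ.pi fun i => Set.univ.pi fun j => if j ∈ B then Set.univ else {a i j}) := by
    ext ⟨c, α⟩
    simp only [Set.mem_preimage, Set.mem_singleton_iff, Set.mem_prod, Set.mem_univ_pi, auxMerge,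
      funext_iff]
    rw [← forall_and]
    refine forall_congr' fun i => ?_
    rw [← forall_and]
    refine forall_congr' fun j => ?_
    split_ifs <;> simp
  rw [this, Measure.prod_prod]
  have h2 : ({a} : Set (Fin r → Fin n → Bool)) =
      (Set.univ.pi fun i => Set.univ.pi fun j => {a i j}) := by
    ext c; simp [funext_iff]
  rw [h2]
  simp only [Measure.pi_pi]
  rw [← Finset.prod_mul_distrib]
  refine Finset.prod_congr rfl fun i _ => ?_
  rw [← Finset.prod_mul_distrib]
  refine Finset.prod_congr rfl fun j _ => ?_
  split_ifs <;> simp only [measure_univ, one_mul, mul_one]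

theorem aux_exists_merge {n r : ℕ} (μs : Fin r → Fin n → Measure Bool)
    [∀ i j, IsProbabilityMeasure (μs i j)] (B : Finset (Fin n))
    (E : Set (Fin r → Fin n → Bool)) :
    ∃ c, (Measure.pi fun i => Measure.pi fun j => μs i j) E ≤
      (Measure.pi fun i => Measure.pi fun j => μs i j) {α | auxMerge B c α ∈ E} := by
  have hE : MeasurableSet E := E.toFinite.measurableSet
  by_contra hcon
  push Not at hcon
  set P := (Measure.pi fun i => Measure.pi fun j => μs i j) with hP
  have h1 : P E = ∫⁻ c, P {α | auxMerge B c α ∈ E} ∂P := by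
    conv_lhs => rw [hP, ← aux_merge_map μs B]
    rw [Measure.map_apply (measurable_of_finite _) hE, Measure.prod_apply (Set.toFinite _).measurableSet]
    rfl
  have h2 : ∫⁻ c, P {α | auxMerge B c α ∈ E} ∂P < ∫⁻ c, P E ∂P := by
    refine lintegral_strict_mono (IsProbabilityMeasure.ne_zero P) (by fun_prop) ?_
      (Filter.Eventually.of_forall hcon)
    rw [← h1]; exact measure_ne_top _ _
  rw [← h1] at h2
  simp at h2

instance auxStratFinite {n r : ℕ} (B : Finset (Fin n)) : Finite (Strategy n r B) := by
  unfold Strategy; infer_instance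

instance auxStratNonempty {n r : ℕ} (B : Finset (Fin n)) : Nonempty (Strategy n r B) :=
  ⟨fun _ _ _ => false⟩

theorem aux_IB_attained {n r : ℕ} (μs : Fin r → Fin n → Measure Bool)
    (f : (Fin r → Fin n → Bool) → Bool) (B : Finset (Fin n)) (b : Bool) :
    ∃ π, IB μs f B b = (IPi μs f B π b).toReal := by
  obtain ⟨π, hπ⟩ := exists_eq_ciSup_of_finite (f := fun π : Strategy n r B => IPi μs f B π b)
  exact ⟨π, by rw [IB, ← hπ]⟩

theorem aux_IPi_le {n r : ℕ} (μs : Fin r → Fin n → Measure Bool)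
    [∀ i j, IsProbabilityMeasure (μs i j)]
    (f : (Fin r → Fin n → Bool) → Bool) (B : Finset (Fin n)) (b : Bool) (π : Strategy n r B) :
    (IPi μs f B π b).toReal ≤ IB μs f B b := by
  refine ENNReal.toReal_mono ?_ (le_iSup (fun π : Strategy n r B => IPi μs f B π b) π)
  refine ne_top_of_le_ne_top ENNReal.one_ne_top (iSup_le fun π => ?_)
  exact prob_le_one

theorem aux_IB_mono {n r : ℕ} (μs : Fin r → Fin n → Measure Bool)
    [∀ i j, IsProbabilityMeasure (μs i j)]
    (f : (Fin r → Fin n → Bool) → Bool) {B B' : Finset (Fin n)} (hB : B ⊆ B') (b : Bool) :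
    IB μs f B b ≤ IB μs f B' b := by
  obtain ⟨π, hπ⟩ := aux_IB_attained μs f B b
  obtain ⟨c, hc⟩ := aux_exists_merge μs B' {α | f (execP B π α) = b}
  let π' : Strategy n r B' := fun i h j =>
    if j ∈ B then π i (fun k j' => if hj : j'.1 ∈ B' then
      c ⟨k.val, by have hk := k.isLt; have hi := i.isLt; omega⟩ j'.1 else h k ⟨j'.1, hj⟩) j
    else c i j
  rw [hπ]
  refine le_trans (ENNReal.toReal_mono ?_ (hc.trans (le_of_eq ?_))) (aux_IPi_le μs f B' b π')
  · exact measure_ne_top _ _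
  · unfold IPi
    congr 1
    ext α
    simp only [Set.mem_ofPred_eq]
    have : execP B' π' α = execP B π (auxMerge B' c α) := by
      funext i j
      by_cases h1 : j ∈ B
      · have h2 := hB h1
        simp only [execP, h1, h2, if_true, π']
        congr 1
      · by_cases h2 : j ∈ B'
        · simp [execP, h1, h2, π', auxMerge]
        · simp [execP, h1, h2, auxMerge]
    rw [this]

def auxReach {n : ℕ} (A : Set (Fin n → Bool)) (S x : Fin n → Bool) : Prop :=
  ∃ y ∈ A, ∀ i, S i = false → y i = x i

theorem aux_compose {n m : ℕ} (μs : Fin (m + 1) → Fin n → Measure Bool)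
    [∀ i j, IsProbabilityMeasure (μs i j)]
    (g : (Fin (m + 1) → Fin n → Bool) → Bool) (T : Finset (Fin n)) (b : Bool)
    (S : Fin n → Bool) (η : ℝ) (h0 : 0 ≤ η) (h1 : η ≤ 1)
    (hS : 1 - η / 2 ≤ (Measure.pi fun j => μs 0 j).real
      {x | auxReach {y | IB (fun i j => μs i.succ j) (fun β => g (Fin.cons y β)) T b
        ≥ 1 - η / 2} S x}) :
    1 - η ≤ IB μs g (supp S ∪ T) b := by
  classical
  set A : Set (Fin n → Bool) := {y | IB (fun i j => μs i.succ j) (fun β => g (Fin.cons y β)) T b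
        ≥ 1 - η / 2} with hA
  set U := supp S ∪ T with hU
  choose ρ hρ using fun y : Fin n → Bool =>
    aux_IB_attained (fun i j => μs (Fin.succ i) j) (fun β => g (Fin.cons y β)) U b
  let ex : ({j : Fin n // j ∉ U} → Bool) → (Fin n → Bool) → Prop := fun h y =>
    y ∈ A ∧ ∀ j : {j : Fin n // j ∉ U}, y j.1 = h j
  let Y : ({j : Fin n // j ∉ U} → Bool) → (Fin n → Bool) := fun h =>
    if hh : ∃ y, ex h y then hh.choose else fun _ => false
  have hY : ∀ x, auxReach A S x → ex (fun j => x j.1) (Y fun j => x j.1) := by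
    rintro x ⟨y, hy, hyx⟩
    have hh : ∃ y, ex (fun j => x j.1) y := by
      refine ⟨y, hy, fun j => hyx _ ?_⟩
      have := j.2
      simp [hU, supp] at this
      exact this.1
    simp only [Y, dif_pos hh]
    exact hh.choose_spec
  let π : Strategy n (m + 1) U := fun i => Fin.cases (motive := fun i => (Fin (i.val + 1) → ({j : Fin n // j ∉ U} → Bool)) → (Fin n → Bool))
    (fun h => Y (h 0)) (fun i h => ρ (Y (h 0)) i (fun k => h k.succ)) i
  refine le_trans ?_ (aux_IPi_le μs g U b π)
  unfold IPi
  have hmp := measurePreserving_piFinSuccAbove (fun i : Fin (m+1) => Measure.pi fun j => μs i j) 0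
  set Q := Measure.pi fun i : Fin m => Measure.pi fun j => μs i.succ j with hQ
  set ν := (Measure.pi fun j => μs 0 j) with hν
  have hexec : ∀ x β, auxReach A S x → execP U π (Fin.cons x β) =
      Fin.cons (Y fun j => x j.1) (execP U (ρ (Y fun j => x j.1)) β) := by
    intro x β hx
    funext i j
    refine Fin.cases ?_ (fun i => ?_) i
    · by_cases hj : j ∈ U
      · simp only [execP, hj, if_true, Fin.cons_zero]
        rfl
      · simp only [execP, hj, if_false, Fin.cons_zero]
        exact ((hY x hx).2 ⟨j, hj⟩).symm
    · by_cases hj : j ∈ U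
      · simp only [execP, hj, if_true, Fin.cons_succ]
        rfl
      · simp only [execP, hj, if_false, Fin.cons_succ]
  have key : ENNReal.ofReal (1 - η / 2) * ν {x | auxReach A S x} ≤
      (Measure.pi fun i => Measure.pi fun j => μs i j) {α | g (execP U π α) = b} := by
    rw [← hmp.symm.measure_preimage (Set.toFinite _).measurableSet.nullMeasurableSet,
      Measure.prod_apply (Set.toFinite _).measurableSet]
    calc ENNReal.ofReal (1 - η / 2) * ν {x | auxReach A S x}
        = ∫⁻ x in {x | auxReach A S x}, ENNReal.ofReal (1 - η / 2) ∂ν := by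
          rw [setLIntegral_const]
      _ ≤ ∫⁻ x in {x | auxReach A S x}, Q {β | g (execP U π (Fin.cons x β)) = b} ∂ν := by
          refine setLIntegral_mono' (Set.toFinite _).measurableSet fun x hx => ?_
          rw [← ENNReal.ofReal_toReal (measure_ne_top Q _)]
          refine ENNReal.ofReal_le_ofReal ?_
          have h3 : 1 - η / 2 ≤ IB (fun i j => μs i.succ j)
            (fun β => g (Fin.cons (Y fun j => x j.1) β)) T b := (hY x hx).1
          have h4 := h3.trans (aux_IB_mono (fun i j => μs (Fin.succ i) j) _ (Finset.subset_union_right : T ⊆ U) b)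
          rw [hρ] at h4
          simp only [hexec x _ hx]
          exact h4
      _ ≤ ∫⁻ x, Q {β | g (execP U π (Fin.cons x β)) = b} ∂ν := setLIntegral_le_lintegral _ _
      _ = _ := by
          refine lintegral_congr fun x => ?_
          simp only [Fin.succAbove_zero]
          congr 1
          ext β
          have he : (MeasurableEquiv.piFinSuccAbove (fun _ : Fin (m + 1) => Fin n → Bool) 0).symm
              (x, β) = Fin.cons x β := Fin.insertNth_zero' x β
          simp only [Set.mem_preimage, Set.mem_ofPred_eq, he]
  have key2 := ENNReal.toReal_mono (measure_ne_top _ _) key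
  rw [ENNReal.toReal_mul, ENNReal.toReal_ofReal (by linarith)] at key2
  refine le_trans ?_ key2
  change _ ≤ _ * ν.real _
  nlinarith

theorem aux_update_map {X : Type*} [MeasurableSpace X] {k : ℕ}
    (μ : Measure X) [IsProbabilityMeasure μ] (s : Fin k) :
    ((Measure.pi fun _ : Fin k => μ).prod μ).map (fun p => Function.update p.1 s p.2)
      = Measure.pi fun _ : Fin k => μ := by
  symm
  refine Measure.pi_eq fun S hS => ?_
  have hm : Measurable (fun p : (Fin k → X) × X => Function.update p.1 s p.2) := by
    refine measurable_pi_iff.2 fun i => ?_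
    by_cases h : i = s
    · subst h; simpa using measurable_snd
    · simp only [Function.update_of_ne h]; fun_prop
  rw [Measure.map_apply hm (MeasurableSet.univ_pi hS)]
  have : (fun p : (Fin k → X) × X => Function.update p.1 s p.2) ⁻¹' (Set.univ.pi S)
      = (Set.univ.pi (Function.update S s Set.univ)) ×ˢ (S s) := by
    ext ⟨x, a⟩
    simp only [Set.mem_preimage, Set.mem_univ_pi, Set.mem_prod]
    constructor
    · intro h
      refine ⟨fun i => ?_, by simpa using h s⟩
      by_cases hi : i = s
      · subst hi; simp
      · simpa [Function.update_of_ne hi] using h i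
    · rintro ⟨h, h'⟩ i
      by_cases hi : i = s
      · subst hi; simpa using h'
      · simpa [Function.update_of_ne hi] using h i
  rw [this, Measure.prod_prod, Measure.pi_pi, ← Finset.mul_prod_erase _ _ (Finset.mem_univ s),
    ← Finset.mul_prod_erase _ (fun i => μ (S i)) (Finset.mem_univ s)]
  simp only [Function.update_self, measure_univ, one_mul]
  rw [mul_comm]
  congr 1
  refine Finset.prod_congr rfl fun i hi => ?_
  rw [Function.update_of_ne (Finset.ne_of_mem_erase hi)]

theorem aux_split {X : Type*} [MeasurableSpace X] [MeasurableSingletonClass X] [Finite X] {k : ℕ}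
    (μ : Measure X) [IsProbabilityMeasure μ] (s : Fin k) (E : Set (Fin k → X))
    (H : (Fin k → X) → Set X) (hE : ∀ x a, x ∈ E → Function.update x s a ∈ E)
    (hH : ∀ x a, H (Function.update x s a) = H x) (c : ℝ)
    (hc : ∀ x ∈ E, c ≤ μ.real (H x)) :
    c * (Measure.pi fun _ : Fin k => μ).real E ≤
      (Measure.pi fun _ : Fin k => μ).real (E ∩ {x | x s ∈ H x}) := by
  set P := (Measure.pi fun _ : Fin k => μ) with hP
  have key : ENNReal.ofReal c * P E ≤ P (E ∩ {x | x s ∈ H x}) := by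
    conv_rhs => rw [hP, ← aux_update_map μ s]
    rw [Measure.map_apply (measurable_of_finite _) (Set.toFinite _).measurableSet,
      Measure.prod_apply (Set.toFinite _).measurableSet]
    calc ENNReal.ofReal c * P E = ∫⁻ x in E, ENNReal.ofReal c ∂P := by rw [setLIntegral_const]
      _ ≤ ∫⁻ x in E, μ (H x) ∂P := by
        refine setLIntegral_mono' (Set.toFinite _).measurableSet fun x hx => ?_
        rw [← ENNReal.ofReal_toReal (measure_ne_top μ _)]
        exact ENNReal.ofReal_le_ofReal (hc x hx)
      _ ≤ ∫⁻ x in E, μ (Prod.mk x ⁻¹' ((fun p : (Fin k → X) × X => Function.update p.1 s p.2) ⁻¹'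
            (E ∩ {x | x s ∈ H x}))) ∂P := by
        refine setLIntegral_mono' (Set.toFinite _).measurableSet fun x hx => ?_
        refine measure_mono fun a ha => ?_
        refine ⟨hE x a hx, ?_⟩
        change Function.update x s a s ∈ H (Function.update x s a)
        rw [hH]; simpa using ha
      _ ≤ _ := setLIntegral_le_lintegral _ _
  by_cases h0 : 0 ≤ c
  · have key2 := ENNReal.toReal_mono (measure_ne_top _ _) key
    rwa [ENNReal.toReal_mul, ENNReal.toReal_ofReal h0] at key2
  · have : c * P.real E ≤ 0 := mul_nonpos_of_nonpos_of_nonneg (by linarith) measureReal_nonneg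
    exact this.trans measureReal_nonneg

theorem aux_grid (P : ℕ → ℕ → ℝ) (K : ℕ) (hK : 0 < K) (d : ℝ) (hd : 0 < d)
    (hlow : ∀ s j, K ≤ s → s ≤ 2 * K → j ≤ K → d ≤ P s j)
    (hup : ∀ s j, P s j ≤ 1) :
    ∃ s j, K ≤ s ∧ s < 2 * K ∧ j < K ∧
      (Real.log (P (s + 1) j) - Real.log (P s j)) +
        (Real.log (P (s + 1) j) - Real.log (P (s + 1) (j + 1))) ≤ 2 * Real.log (1 / d) / K := by
  by_contra hcon
  push Not at hcon
  have hKr : (0 : ℝ) < K := by exact_mod_cast hK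
  have hL : ∀ s j s' j', K ≤ s' → s' ≤ 2 * K → j' ≤ K → K ≤ s → s ≤ 2 * K → j ≤ K →
      Real.log (P s j) - Real.log (P s' j') ≤ Real.log (1 / d) := by
    intro s j s' j' h1 h2 h3 h4 h5 h6
    have a := Real.log_le_log hd (hlow s' j' h1 h2 h3)
    have b := Real.log_nonpos (hd.le.trans (hlow s j h4 h5 h6)) (hup s j)
    rw [one_div, Real.log_inv]; linarith
  have hsum : ∑ i ∈ Finset.range K, ∑ j ∈ Finset.range K, (2 * Real.log (1 / d) / K) <
      ∑ i ∈ Finset.range K, ∑ j ∈ Finset.range K,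
      ((Real.log (P (K + i + 1) j) - Real.log (P (K + i) j)) +
        (Real.log (P (K + i + 1) j) - Real.log (P (K + i + 1) (j + 1)))) := by
    refine Finset.sum_lt_sum_of_nonempty (by simpa using hK.ne') fun i hi => ?_
    refine Finset.sum_lt_sum_of_nonempty (by simpa using hK.ne') fun j hj => ?_
    rw [Finset.mem_range] at hi hj
    exact hcon (K + i) j (by omega) (by omega) hj
  simp only [Finset.sum_add_distrib] at hsum
  rw [Finset.sum_comm (f := fun i j => Real.log (P (K + i + 1) j) - Real.log (P (K + i) j))] at hsum
  have e1 : ∀ j, ∑ i ∈ Finset.range K, (Real.log (P (K + i + 1) j) - Real.log (P (K + i) j))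
      = Real.log (P (K + K) j) - Real.log (P K j) := fun j =>
    Finset.sum_range_sub (fun i => Real.log (P (K + i) j)) K
  have e2 : ∀ i, ∑ j ∈ Finset.range K,
      (Real.log (P (K + i + 1) j) - Real.log (P (K + i + 1) (j + 1)))
      = Real.log (P (K + i + 1) 0) - Real.log (P (K + i + 1) K) := fun i =>
    Finset.sum_range_sub' (fun j => Real.log (P (K + i + 1) j)) K
  simp only [e1, e2] at hsum
  have f1 : ∑ j ∈ Finset.range K, (Real.log (P (K + K) j) - Real.log (P K j))
      ≤ ∑ j ∈ Finset.range K, Real.log (1 / d) := by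
    refine Finset.sum_le_sum fun j hj => ?_
    rw [Finset.mem_range] at hj
    exact hL _ _ _ _ le_rfl (by omega) hj.le (by omega) (by omega) hj.le
  have f2 : ∑ i ∈ Finset.range K, (Real.log (P (K + i + 1) 0) - Real.log (P (K + i + 1) K))
      ≤ ∑ j ∈ Finset.range K, Real.log (1 / d) := by
    refine Finset.sum_le_sum fun i hi => ?_
    rw [Finset.mem_range] at hi
    exact hL _ _ _ _ (by omega) (by omega) le_rfl (by omega) (by omega) (by omega)
  simp only [Finset.sum_const, Finset.card_range, nsmul_eq_mul] at hsum f1 f2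
  have : (K : ℝ) * (K * (2 * Real.log (1 / d) / K)) = 2 * (K * Real.log (1 / d)) := by
    field_simp
  linarith

theorem auxReach_mono {n : ℕ} {A : Set (Fin n → Bool)} {S S' x : Fin n → Bool} (h : S ≤ S')
    (hr : auxReach A S x) : auxReach A S' x := by
  obtain ⟨y, hy, hyx⟩ := hr
  refine ⟨y, hy, fun i hi => hyx i ?_⟩
  have := h i
  rw [hi] at this
  exact le_bot_iff.1 this

def auxEv {n k : ℕ} (A : Set (Fin n → Bool)) (I J : Finset (Fin k)) :
    Set (Fin k → Fin n → Bool) := {x | ∀ i ∈ J, auxReach A ((I.erase i).sup x) (x i)}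

theorem auxEv_mono {n k : ℕ} (A : Set (Fin n → Bool)) {I I' J J' : Finset (Fin k)}
    (hI : I ⊆ I') (hJ : J' ⊆ J) : auxEv A I J ⊆ auxEv A I' J' := fun _ hx i hi =>
  auxReach_mono (Finset.sup_mono (Finset.erase_subset_erase i hI)) (hx i (hJ hi))

theorem auxEv_perm {n k : ℕ} (μ : Measure (Fin n → Bool)) [IsProbabilityMeasure μ]
    (A : Set (Fin n → Bool)) (I J : Finset (Fin k)) (σ : Equiv.Perm (Fin k)) :
    (Measure.pi fun _ : Fin k => μ).real (auxEv A (I.map σ.toEmbedding) (J.map σ.toEmbedding)) =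
      (Measure.pi fun _ : Fin k => μ).real (auxEv A I J) := by
  conv_rhs => rw [← aux_pi_map_inj μ σ σ.injective]
  rw [map_measureReal_apply (measurable_of_finite _) (Set.toFinite _).measurableSet]
  congr 1
  ext x
  simp only [auxEv, Set.mem_ofPred_eq, Set.mem_preimage, Finset.mem_map, Equiv.coe_toEmbedding,
    forall_exists_index, and_imp, forall_apply_eq_imp_iff₂]
  refine forall₂_congr fun i _ => ?_
  have : (I.map σ.toEmbedding).erase (σ i) = (I.erase i).map σ.toEmbedding := by
    rw [Finset.map_erase]; rfl
  rw [this, Finset.sup_map]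
  rfl

theorem aux_core {n : ℕ} (μ : Measure (Fin n → Bool)) [IsProbabilityMeasure μ]
    {ι : Type*} [Fintype ι] (D : ι → ℝ) (hD0 : ∀ T, 0 ≤ D T) (hD1 : ∑ T, D T = 1)
    (A : ι → Set (Fin n → Bool)) (δ η : ℝ) (K k : ℕ) (hδ : 0 < δ) (hη : 0 < η)
    (hη1 : η ≤ 1) (hK0 : 0 < K) (hK : 16 * Real.log (2 / δ) / η ≤ K) (hk : 2 * K ≤ k)
    (hG : δ / 2 ≤ ∑ T, D T * (Measure.pi fun _ : Fin K => μ).real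
      {x | Finset.univ.sup x ∈ A T}) :
    δ / 4 ≤ ∑ T, D T * (Measure.pi fun _ : Fin k => μ).real
      {x | 1 - η / 2 ≤ μ.real {z | auxReach (A T) (Finset.univ.sup x) z}} := by
  set P := (Measure.pi fun _ : Fin k => μ) with hP
  let I : ℕ → Finset (Fin k) := fun s => Finset.univ.filter (fun i => i.val < s)
  have hI : ∀ s i, i ∈ I s ↔ i.val < s := fun s i => by simp [I]
  have hImono : ∀ s t, s ≤ t → I s ⊆ I t := fun s t h i hi => by
    rw [hI] at hi ⊢; omega
  let p : ℕ → ℕ → ℝ := fun s j => ∑ T, D T * P.real (auxEv (A T) (I s) (I j))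
  have pmono : ∀ s s' j j', s ≤ s' → j' ≤ j → p s j ≤ p s' j' := fun s s' j j' h h' =>
    Finset.sum_le_sum fun T _ => mul_le_mul_of_nonneg_left
      (measureReal_mono (auxEv_mono _ (hImono _ _ h) (hImono _ _ h'))) (hD0 T)
  have pup : ∀ s j, p s j ≤ 1 := fun s j => by
    rw [← hD1]
    exact Finset.sum_le_sum fun T _ => mul_le_of_le_one_right (hD0 T) measureReal_le_one
  have pKK : δ / 2 ≤ p K K := by
    refine hG.trans (Finset.sum_le_sum fun T _ => mul_le_mul_of_nonneg_left ?_ (hD0 T))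
    have hinj : Function.Injective (Fin.castLE (by omega : K ≤ k)) := Fin.castLE_injective _
    rw [← aux_pi_map_inj μ _ hinj,
      map_measureReal_apply (measurable_of_finite _) (Set.toFinite _).measurableSet]
    refine measureReal_mono fun x hx i hi => ?_
    have hsup : (Finset.univ.sup fun i : Fin K => x (Fin.castLE (by omega : K ≤ k) i))
        = (I K).sup x := by
      apply le_antisymm
      · exact Finset.sup_le fun i _ => Finset.le_sup (f := x) ((hI _ _).2 (by simp))
      · refine Finset.sup_le fun i hi => ?_
        rw [hI] at hi
        exact Finset.le_sup (f := fun i : Fin K => x (Fin.castLE (by omega : K ≤ k) i))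
          (Finset.mem_univ ⟨i.val, hi⟩)
    have hx' : (I K).sup x ∈ A T := by rw [← hsup]; exact hx
    refine ⟨_, hx', fun l hl => ?_⟩
    rw [← Finset.insert_erase hi, Finset.sup_insert]
    change x i l ⊔ ((I K).erase i).sup x l = _
    rw [hl]; simp
  have plow : ∀ s j, K ≤ s → s ≤ 2 * K → j ≤ K → δ / 2 ≤ p s j := fun s j h1 _ h3 =>
    pKK.trans (pmono _ _ _ _ h1 h3)
  obtain ⟨s, j, hs1, hs2, hj, hgrid⟩ := aux_grid p K hK0 (δ / 2) (by linarith) plow pup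
  have hKr : (0 : ℝ) < K := by exact_mod_cast hK0
  set γ := 2 * Real.log (1 / (δ / 2)) / K with hγ
  have hγ1 : γ ≤ η / 8 := by
    rw [hγ, div_le_iff₀ hKr, one_div_div]
    rw [div_le_iff₀ hη] at hK
    nlinarith
  have p1 := plow s j hs1 hs2.le hj.le
  have p2 := plow (s+1) j (by omega) (by omega) hj.le
  have p3 := plow (s+1) (j+1) (by omega) (by omega) hj
  have m1 := pmono s (s+1) j j (by omega) le_rfl
  have m2 := pmono (s+1) (s+1) (j+1) j le_rfl (by omega)
  have l1 := Real.log_le_log (by linarith) m1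
  have l2 := Real.log_le_log (by linarith) m2
  have hexp : Real.exp γ ≤ 1 + η / 4 := by
    have hγ0 : 0 ≤ γ := by linarith
    have := Real.abs_exp_sub_one_le (x := γ) (by rw [abs_of_nonneg hγ0]; linarith)
    rw [abs_of_nonneg hγ0] at this
    have := (le_abs_self _).trans this
    linarith
  have r1 : p (s+1) j ≤ Real.exp γ * p s j := by
    rw [← Real.exp_log (by linarith : 0 < p s j), ← Real.exp_add,
      ← Real.log_le_iff_le_exp (by linarith)]
    linarith
  have r2 : p (s+1) j ≤ Real.exp γ * p (s+1) (j+1) := by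
    rw [← Real.exp_log (by linarith : 0 < p (s+1) (j+1)), ← Real.exp_add,
      ← Real.log_le_iff_le_exp (by linarith)]
    linarith
  let s' : Fin k := ⟨s, by omega⟩
  let j' : Fin k := ⟨j, by omega⟩
  have hsI : s' ∉ I s := by simp [hI, s']
  -- symmetry
  have hsymm : ∀ T, P.real (auxEv (A T) (I (s+1)) (insert s' (I j))) =
      P.real (auxEv (A T) (I (s+1)) (I (j+1))) := by
    intro T
    rw [hP, ← auxEv_perm μ (A T) (I (s+1)) (I (j+1)) (Equiv.swap j' s')]
    congr 2
    · ext i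
      simp only [Finset.mem_map_equiv, Equiv.symm_swap, hI, Equiv.swap_apply_def]
      split_ifs with h1 h2
      · subst h1; simp [s', j']; omega
      · subst h2; simp [s', j']; omega
      · rfl
    · ext i
      simp only [Finset.mem_map_equiv, Equiv.symm_swap, hI, Equiv.swap_apply_def,
        Finset.mem_insert]
      have hne : s' ≠ j' := by simp [s', j', Fin.ext_iff]; omega
      split_ifs with h1 h2
      · subst h1; simp [s', j', Fin.ext_iff]; omega
      · subst h2; simp [j']
      · simp only [h2, false_or]
        have : i.val ≠ j := fun h => h1 (Fin.ext h)
        omega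
  have hQ2 : p (s+1) (j+1) = ∑ T, D T * P.real (auxEv (A T) (I (s+1)) (insert s' (I j))) :=
    Finset.sum_congr rfl fun T _ => by rw [hsymm]
  -- bad set
  let B : ι → Set (Fin k → Fin n → Bool) := fun T =>
    {x | ¬ (1 - η / 2 ≤ μ.real {z | auxReach (A T) ((I s).sup x) z})}
  have hsup : ∀ (x : Fin k → Fin n → Bool) (a : Fin n → Bool), (I s).sup (Function.update x s' a) = (I s).sup x := fun x a =>
    Finset.sup_congr rfl fun i hi => Function.update_of_ne
      (fun h : i = s' => hsI (by rw [← h]; exact hi)) _ _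
  have hbad : ∀ T, η / 2 * P.real (auxEv (A T) (I s) (I j) ∩ B T) ≤
      P.real (auxEv (A T) (I (s+1)) (I j)) -
        P.real (auxEv (A T) (I (s+1)) (insert s' (I j))) := by
    intro T
    have h := aux_split μ s' (auxEv (A T) (I s) (I j) ∩ B T)
      (fun x => {z | ¬ auxReach (A T) ((I s).sup x) z}) ?_ ?_ (η / 2) ?_
    · refine h.trans ?_
      rw [← measureReal_diff (auxEv_mono _ (Finset.Subset.refl _) (Finset.subset_insert _ _))
        (Set.toFinite _).measurableSet]
      refine measureReal_mono ?_
      rintro x ⟨⟨hx1, -⟩, hx2⟩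
      refine ⟨auxEv_mono _ (hImono _ _ (by omega)) (Finset.Subset.refl _) hx1, fun hx3 => hx2 ?_⟩
      have h4 := hx3 s' (Finset.mem_insert_self _ _)
      have : (I (s+1)).erase s' = I s := by
        ext i
        simp only [Finset.mem_erase, hI, s', Ne, Fin.ext_iff]
        omega
      rwa [this] at h4
    · rintro x a ⟨hx1, hx2⟩
      refine ⟨fun i hi => ?_, ?_⟩
      · have hne : i ≠ s' := by
          rintro rfl
          rw [hI] at hi; simp only [s'] at hi; omega
        have e : ((I s).erase i).sup (Function.update x s' a) = ((I s).erase i).sup x :=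
          Finset.sup_congr rfl fun i hi => Function.update_of_ne
            (fun h : i = s' => hsI (by rw [← h]; exact Finset.mem_of_mem_erase hi)) _ _
        rw [e, Function.update_of_ne hne]
        exact hx1 i hi
      · change ¬ _
        rw [hsup]; exact hx2
    · intro x a; simp only [hsup]
    · rintro x ⟨-, hx⟩
      change ¬ _ at hx
      have hc := measureReal_compl (μ := μ) (s := {z | auxReach (A T) ((I s).sup x) z})
        (Set.toFinite _).measurableSet
      rw [probReal_univ] at hc
      have : {z | ¬ auxReach (A T) ((I s).sup x) z} = {z | auxReach (A T) ((I s).sup x) z}ᶜ := rfl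
      rw [this, hc]; linarith
  have hbadsum : η / 2 * ∑ T, D T * P.real (auxEv (A T) (I s) (I j) ∩ B T) ≤
      p (s+1) j - p (s+1) (j+1) := by
    rw [hQ2, Finset.mul_sum, ← Finset.sum_sub_distrib]
    refine Finset.sum_le_sum fun T _ => ?_
    have := mul_le_mul_of_nonneg_left (hbad T) (hD0 T)
    linarith
  have hfin : p s j ≤ ∑ T, D T * P.real (auxEv (A T) (I s) (I j) ∩ B T) +
      ∑ T, D T * P.real
      {x | 1 - η / 2 ≤ μ.real {z | auxReach (A T) (Finset.univ.sup x) z}} := by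
    rw [← Finset.sum_add_distrib]
    refine Finset.sum_le_sum fun T _ => ?_
    rw [← mul_add]
    refine mul_le_mul_of_nonneg_left ?_ (hD0 T)
    refine le_trans (measureReal_mono ?_) (measureReal_union_le _ _)
    intro x hx
    by_cases hB : x ∈ B T
    · exact Or.inl ⟨hx, hB⟩
    · right
      have h1 : 1 - η / 2 ≤ μ.real {z | auxReach (A T) ((I s).sup x) z} := not_not.1 hB
      exact h1.trans (measureReal_mono fun z hz =>
        auxReach_mono (Finset.sup_mono (Finset.subset_univ _)) hz)
  have q1 : p (s+1) j - p (s+1) (j+1) ≤ η / 4 * p s j := by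
    have hE1 : 0 < Real.exp γ := Real.exp_pos γ
    have a1 : p (s+1) j ≤ (1 + η / 4) * p s j :=
      r1.trans (mul_le_mul_of_nonneg_right hexp (by linarith))
    have a2 : p (s+1) j ≤ (1 + η / 4) * p (s+1) (j+1) :=
      r2.trans (mul_le_mul_of_nonneg_right hexp (by linarith))
    by_cases hc : p (s+1) (j+1) ≤ p s j
    · nlinarith
    · push Not at hc
      nlinarith
  have q2 : ∑ T, D T * P.real (auxEv (A T) (I s) (I j) ∩ B T) ≤ p s j / 2 := by
    have := hbadsum.trans q1
    have h3 : η / 2 * (∑ T, D T * P.real (auxEv (A T) (I s) (I j) ∩ B T)) ≤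
      η / 2 * (p s j / 2) := by linarith
    exact le_of_mul_le_mul_left h3 (by linarith)
  linarith

theorem aux_choose {Ω : Type*} [MeasurableSpace Ω] [MeasurableSingletonClass Ω] [Finite Ω]
    (P : Measure Ω) [IsProbabilityMeasure P] {ι : Type*} [Fintype ι] (D : ι → ℝ)
    (hD0 : ∀ T, 0 ≤ D T) (E : Bool → ι → Set Ω) (δ : ℝ)
    (h : ∀ ω, ∃ b, δ ≤ ∑ T, D T * (E b T).indicator (fun _ => (1 : ℝ)) ω) :
    ∃ b, δ / 2 ≤ ∑ T, D T * P.real (E b T) := by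
  have hint : ∀ b, ∫ ω, (∑ T, D T * (E b T).indicator (fun _ => (1 : ℝ)) ω) ∂P =
      ∑ T, D T * P.real (E b T) := by
    intro b
    rw [integral_finsetSum _ (fun _ _ => Integrable.of_finite)]
    refine Finset.sum_congr rfl fun T _ => ?_
    rw [integral_const_mul, integral_indicator_const _ (Set.toFinite _).measurableSet]
    simp
  have hnn : ∀ b ω, 0 ≤ ∑ T, D T * (E b T).indicator (fun _ => (1 : ℝ)) ω := fun b ω =>
    Finset.sum_nonneg fun T _ => mul_nonneg (hD0 T) (Set.indicator_nonneg (by simp) _)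
  by_contra hcon
  push Not at hcon
  have h1 := hcon true
  have h2 := hcon false
  rw [← hint] at h1 h2
  have h3 : δ ≤ ∫ ω, ((∑ T, D T * (E true T).indicator (fun _ => (1 : ℝ)) ω) +
      (∑ T, D T * (E false T).indicator (fun _ => (1 : ℝ)) ω)) ∂P := by
    have : δ = ∫ _ω, δ ∂P := by simp
    rw [this]
    refine integral_mono Integrable.of_finite Integrable.of_finite fun ω => ?_
    obtain ⟨b, hb⟩ := h ω
    have a1 := hnn true ω
    have a2 := hnn false ω
    cases b <;> simp only <;> linarith
  rw [integral_add Integrable.of_finite Integrable.of_finite] at h3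
  linarith

/-- Large bias, multi-round step: if every `(ℓ−1)`-round protocol over
`μ₂ × ⋯ × μ_ℓ` can be biased by `T ∼ D` with probability `≥ δ`, then some `b` works for `g`:
for all large enough `k`, taking `S ∼ μ₁^{(k)}` and `T ∼ D` independently, with probability
at least `δ/(4 log(1/ε) + 4r)` the coalition `S ∪ T` biases `g` towards `b`. -/
theorem multi_round_large_bias_step :
    ∃ C : ℝ, C > 0 ∧
      ∀ (n : ℕ) (ε δ : ℝ), 0 < ε → ε ≤ 1/2 → 0 < δ → δ ≤ 1/2 →
      ∀ (r ℓ : ℕ) (hℓ : 1 ≤ ℓ) (_ : ℓ ≤ r),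
      ∀ μs : Fin ℓ → Fin n → Measure Bool, (∀ i j, IsProbabilityMeasure (μs i j)) →
      ∀ g : (Fin ℓ → Fin n → Bool) → Bool,
      ∀ D : PMF (Finset (Fin n)),
      (∀ g' : (Fin (ℓ - 1) → Fin n → Bool) → Bool, ∃ b' : Bool,
        (D.toOuterMeasure {T |
            IB (fun i j => μs ⟨i.val + 1, by have := i.isLt; omega⟩ j) g' T b'
              ≥ 1 - ε / 2 ^ (r - ℓ + 1)}).toReal ≥ δ) →
      ∃ b : Bool, ∀ k : ℕ,
        (k : ℝ) ≥ C * ε⁻¹ ^ 3 * 4 ^ (r - ℓ) * Real.logb 2 (2 * r) *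
            Real.logb 2 (2 / δ) * Real.logb 2 (Real.logb 2 (4 / δ)) →
        (∑ T : Finset (Fin n), (D T).toReal *
            ((boost (Measure.pi fun j => μs ⟨0, by omega⟩ j) k)
              {x | IB μs g (supp x ∪ T) b ≥ 1 - ε / 2 ^ (r - ℓ)}).toReal)
          ≥ δ / (4 * Real.logb 2 (1 / ε) + 4 * r) := by
  refine ⟨40, by norm_num, ?_⟩
  intro n ε δ hε hε2 hδ hδ2 r ℓ hℓ hℓr μs hμ g D hyp
  obtain ⟨m, rfl⟩ : ∃ m, ℓ = m + 1 := ⟨ℓ - 1, by omega⟩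
  have := hμ
  set η := ε / 2 ^ (r - (m + 1)) with hη
  have h2pos : (1 : ℝ) ≤ 2 ^ (r - (m + 1)) := one_le_pow₀ (by norm_num)
  have hη0 : 0 < η := by positivity
  have hηε : η ≤ ε := div_le_self hε.le h2pos
  have hη1 : η ≤ 1 := by linarith
  have hη2 : ε / 2 ^ (r - (m + 1) + 1) = η / 2 := by rw [hη, pow_succ]; field_simp
  set A : Bool → Finset (Fin n) → Set (Fin n → Bool) := fun b T =>
    {y | IB (fun i j => μs (Fin.succ i) j) (fun β => g (Fin.cons y β)) T b ≥ 1 - η / 2} with hA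
  set μ := Measure.pi fun j => μs 0 j with hμdef
  have hD0 : ∀ T, 0 ≤ (D T).toReal := fun T => ENNReal.toReal_nonneg
  have hD1 : ∑ T, (D T).toReal = 1 := by
    have h := D.tsum_coe
    rw [tsum_fintype] at h
    rw [← ENNReal.toReal_sum (fun T _ => D.apply_ne_top T), h]
    rfl
  set K := ⌈16 * Real.log (2 / δ) / η⌉₊ with hKdef
  have hlog : 0 < Real.log (2 / δ) := Real.log_pos (by rw [lt_div_iff₀ hδ]; linarith)
  have hK0 : 0 < K := Nat.ceil_pos.2 (by positivity)
  have hK : 16 * Real.log (2 / δ) / η ≤ K := Nat.le_ceil _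
  have hK' : (K : ℝ) < 16 * Real.log (2 / δ) / η + 1 := Nat.ceil_lt_add_one (by positivity)
  obtain ⟨b, hb⟩ := aux_choose (Measure.pi fun _ : Fin K => μ) (fun T => (D T).toReal) hD0
    (fun b T => {x | Finset.univ.sup x ∈ A b T}) δ (by
      intro x
      obtain ⟨b, hb⟩ := hyp (fun β => g (Fin.cons (Finset.univ.sup x) β))
      refine ⟨b, le_trans hb (le_of_eq ?_)⟩
      rw [PMF.toOuterMeasure_apply_fintype, ENNReal.toReal_sum]
      · refine Finset.sum_congr rfl fun T _ => ?_
        by_cases hT : Finset.univ.sup x ∈ A b T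
        · rw [Set.indicator_of_mem, Set.indicator_of_mem, mul_one]
          · exact hT
          · rw [hη2]; exact hT
        · rw [Set.indicator_of_notMem, Set.indicator_of_notMem, mul_zero]
          · rfl
          · exact hT
          · rw [hη2]; exact hT
      · intro T _
        exact ne_top_of_le_ne_top (D.apply_ne_top T) (Set.indicator_le_self _ _ _))
  refine ⟨b, fun k hk => ?_⟩
  have hl2 : Real.log (2 / δ) ≤ Real.logb 2 (2 / δ) := by
    rw [Real.logb, le_div_iff₀ (Real.log_pos (by norm_num))]
    have : Real.log 2 ≤ 1 := by
      have := Real.log_two_lt_d9; linarith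
    nlinarith
  have hlb : 1 ≤ Real.logb 2 (2 / δ) := by
    rw [Real.le_logb_iff_rpow_le (by norm_num) (by positivity), le_div_iff₀ hδ]
    norm_num; linarith
  have hr1 : (1 : ℝ) ≤ r := by exact_mod_cast (by omega : 1 ≤ r)
  have hlr : 1 ≤ Real.logb 2 (2 * r) := by
    rw [Real.le_logb_iff_rpow_le (by norm_num) (by positivity)]
    norm_num; linarith
  have hll : 1 ≤ Real.logb 2 (Real.logb 2 (4 / δ)) := by
    have h2 : 2 ≤ Real.logb 2 (4 / δ) := by
      rw [Real.le_logb_iff_rpow_le (by norm_num) (by positivity), le_div_iff₀ hδ]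
      norm_num; linarith
    rw [Real.le_logb_iff_rpow_le (by norm_num) (by linarith)]
    norm_num; linarith
  have hpow : η⁻¹ ≤ ε⁻¹ ^ 3 * 4 ^ (r - (m + 1)) := by
    have e1 : (1 : ℝ) ≤ ε⁻¹ := (one_le_inv₀ hε).2 (by linarith)
    have e2 : ε⁻¹ ≤ ε⁻¹ ^ 3 := le_self_pow₀ e1 (by norm_num)
    have e3 : (2 : ℝ) ^ (r - (m + 1)) ≤ 4 ^ (r - (m + 1)) :=
      pow_le_pow_left₀ (by norm_num) (by norm_num) _
    rw [hη, inv_div, div_eq_mul_inv, mul_comm]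
    exact mul_le_mul e2 e3 (by positivity) (by positivity)
  have hηinv : 1 ≤ η⁻¹ := (one_le_inv₀ hη0).2 hη1
  have hkbig : 40 * η⁻¹ * Real.logb 2 (2 / δ) ≤ k := by
    refine le_trans ?_ hk
    set W := ε⁻¹ ^ 3 * 4 ^ (r - (m + 1))
    set a := Real.logb 2 (2 * r)
    set c := Real.logb 2 (2 / δ)
    set d := Real.logb 2 (Real.logb 2 (4 / δ))
    have hWp : 0 < W := by positivity
    calc 40 * η⁻¹ * c ≤ 40 * W * c := by gcongr
      _ = 40 * W * 1 * c * 1 := by ring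
      _ ≤ 40 * W * a * c * d := by gcongr
      _ = _ := by simp only [W]; ring
  have hk2 : 2 * K ≤ k := by
    have : (2 * K : ℝ) ≤ k := by
      rw [div_eq_mul_inv] at hK'
      have a1 : Real.log (2 / δ) * η⁻¹ ≤ η⁻¹ * Real.logb 2 (2 / δ) := by
        rw [mul_comm]; gcongr
      have a2 : 1 ≤ η⁻¹ * Real.logb 2 (2 / δ) := one_le_mul_of_one_le_of_one_le hηinv hlb
      nlinarith
    exact_mod_cast this
  have core := aux_core μ (fun T => (D T).toReal) hD0 hD1 (A b) δ η K k hδ hη0 hη1 hK0 hK hk2 hb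
  have hden : 4 ≤ 4 * Real.logb 2 (1 / ε) + 4 * r := by
    have : 0 ≤ Real.logb 2 (1 / ε) := Real.logb_nonneg (by norm_num)
      (by rw [le_div_iff₀ hε]; linarith)
    linarith
  have hfin : δ / (4 * Real.logb 2 (1 / ε) + 4 * r) ≤ δ / 4 := by gcongr
  refine ge_iff_le.2 (hfin.trans (core.trans (Finset.sum_le_sum fun T _ =>
    mul_le_mul_of_nonneg_left ?_ (hD0 T))))
  refine ENNReal.toReal_mono ?_ ?_
  · unfold boost
    have : IsProbabilityMeasure (((Measure.pi fun _ : Fin k => Measure.pi fun j => μs 0 j).map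
      (fun xs i => Finset.univ.sup fun j => xs j i))) :=
      Measure.isProbabilityMeasure_map (measurable_of_finite _).aemeasurable
    exact measure_ne_top _ _
  · unfold boost
    rw [Measure.map_apply (measurable_of_finite _) (Set.toFinite _).measurableSet]
    refine measure_mono fun xs hxs => ?_
    have hc := aux_compose μs g T b (Finset.univ.sup xs) η hη0.le hη1 hxs
    have he : (fun i => Finset.univ.sup fun j => xs j i) = Finset.univ.sup xs := by
      funext i; rw [Finset.sup_apply]
    change 1 - η ≤ IB μs g (supp (fun i => Finset.univ.sup fun j => xs j i) ∪ T) b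
    rw [he]
    exact hc
end
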